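/- arXiv:2204.13000 — 2 statements merged into one kernel-verified Lean document; each statement's English description precedes it below -/
import Mathlib

section
/- Let X be a tree and let f : X → X be a continuous map with zero topological entropy. Then for every chain recurrent point x of f that is not periodic, the ω-limit set ω_f(x) is infinite. -/
open Set Filter Topology Function
open scoped ENNReal

/-- A subset of a topological space is an *arc* if it is homeomorphic to `[0,1]`. -/
def IsArc {X : Type*} [TopologicalSpace X] (A : Set X) : Prop :=
  Nonempty (A ≃ₜ Set.Icc (0 : ℝ) 1)

/-- A point `p` is an *endpoint* of the arc `A` if `p ∈ A` and `A \ {p}` is connected. -/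
def IsArcEndpoint {X : Type*} [TopologicalSpace X] (A : Set X) (p : X) : Prop :=
  p ∈ A ∧ IsConnected (A \ {p})

/-- A subset is a *simple closed curve* if it is homeomorphic to the unit circle. -/
def IsSimpleClosedCurve {X : Type*} [TopologicalSpace X] (S : Set X) : Prop :=
  Nonempty (S ≃ₜ Metric.sphere (0 : ℂ) 1)

/-- A *tree* is a compact connected metric space which is a union of finitely many arcs,
any two of which are disjoint or intersect only in (one or both of) their endpoints,
and which contains no simple closed curve. -/
def IsTree (X : Type*) [MetricSpace X] : Prop :=
  CompactSpace X ∧ ConnectedSpace X ∧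
    (∃ 𝒜 : Finset (Set X), (∀ A ∈ 𝒜, IsArc A) ∧ ⋃₀ (𝒜 : Set (Set X)) = Set.univ ∧
      ∀ A ∈ 𝒜, ∀ B ∈ 𝒜, A ≠ B → ∀ p ∈ A ∩ B, IsArcEndpoint A p ∧ IsArcEndpoint B p) ∧
    ∀ S : Set X, ¬ IsSimpleClosedCurve S

/-- A *dendrite* is a locally connected continuum containing no simple closed curve. -/
def IsDendrite (X : Type*) [MetricSpace X] : Prop :=
  CompactSpace X ∧ ConnectedSpace X ∧ LocallyConnectedSpace X ∧
    ∀ S : Set X, ¬ IsSimpleClosedCurve S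

/-- `𝒰` is a finite open cover of the subset `Y`. -/
def IsOpenCoverOn {X : Type*} [TopologicalSpace X] (Y : Set X) (𝒰 : Finset (Set X)) : Prop :=
  (∀ U ∈ 𝒰, IsOpen U) ∧ Y ⊆ ⋃₀ (𝒰 : Set (Set X))

/-- `N(⋁_{i=1}^n f^{-a_i}(𝒰))`, relative to the subset `Y`: the minimal number `m` of elements
of the join cover `⋁_{i=1}^n f^{-a_i}(𝒰)` needed to cover `Y`. -/
noncomputable def seqCoverCountOn {X : Type*} (f : X → X) (Y : Set X) (a : ℕ → ℕ)
    (𝒰 : Finset (Set X)) (n : ℕ) : ℕ :=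
  sInf { m | ∃ c : Fin m → Fin n → Set X, (∀ j i, c j i ∈ 𝒰) ∧
    Y ⊆ ⋃ j, ⋂ i, f^[a i.1] ⁻¹' c j i }

/-- Topological sequence entropy of `f` restricted to the (invariant) subset `Y`,
with respect to the sequence `a`. -/
noncomputable def seqEntropyOn {X : Type*} [TopologicalSpace X] (f : X → X) (Y : Set X)
    (a : ℕ → ℕ) : ℝ≥0∞ :=
  ⨆ (𝒰 : Finset (Set X)) (_ : IsOpenCoverOn Y 𝒰),
    Filter.limsup
      (fun n : ℕ => ENNReal.ofReal (Real.log (seqCoverCountOn f Y a 𝒰 n) / n)) Filter.atTop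

/-- Topological sequence entropy of `f : X → X` with respect to the sequence `a`. -/
noncomputable def seqEntropy {X : Type*} [TopologicalSpace X] (f : X → X) (a : ℕ → ℕ) : ℝ≥0∞ :=
  seqEntropyOn f Set.univ a

/-- The ordinary topological entropy `h(f)`, i.e. the sequence entropy for `A = (0,1,2,…)`. -/
noncomputable def topEntropy {X : Type*} [TopologicalSpace X] (f : X → X) : ℝ≥0∞ :=
  seqEntropy f id

/-- `h_∞(f|_Y)`: the supremum over all strictly increasing sequences of positive integers of
the topological sequence entropies of `f` restricted to `Y`. -/
noncomputable def supSeqEntropyOn {X : Type*} [TopologicalSpace X] (f : X → X) (Y : Set X) :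
    ℝ≥0∞ :=
  ⨆ (a : ℕ → ℕ) (_ : StrictMono a) (_ : 1 ≤ a 0), seqEntropyOn f Y a

/-- `h_∞(f)`: the supremum of the topological sequence entropies of `f`. -/
noncomputable def supSeqEntropy {X : Type*} [TopologicalSpace X] (f : X → X) : ℝ≥0∞ :=
  supSeqEntropyOn f Set.univ

/-- The ω-limit set `ω_f(x) = ⋂_n closure {f^k(x) : k ≥ n}`. -/
def omegaLimitSet {X : Type*} [TopologicalSpace X] (f : X → X) (x : X) : Set X :=
  ⋂ n : ℕ, closure ((fun k => f^[k] x) '' Set.Ici n)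

/-- `ω(f) = ⋃_x ω_f(x)`. -/
def omegaSet {X : Type*} [TopologicalSpace X] (f : X → X) : Set X :=
  ⋃ x : X, omegaLimitSet f x

/-- The non-wandering set `Ω(f)`. -/
def nonWanderingSet {X : Type*} [TopologicalSpace X] (f : X → X) : Set X :=
  { x | ∀ U : Set X, IsOpen U → x ∈ U → ∃ n, 1 ≤ n ∧ (f^[n] ⁻¹' U ∩ U).Nonempty }

/-- There is an ε-chain from `x` to `y` under `f`. -/
def EpsChain {X : Type*} [MetricSpace X] (f : X → X) (ε : ℝ) (x y : X) : Prop :=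
  ∃ n, 1 ≤ n ∧ ∃ c : ℕ → X, c 0 = x ∧ c n = y ∧ ∀ i < n, dist (f (c i)) (c (i + 1)) < ε

/-- The chain recurrent set `CR(f)`. -/
def chainRecurrentSet {X : Type*} [MetricSpace X] (f : X → X) : Set X :=
  { x | ∀ ε > 0, EpsChain f ε x x }

/-- The chain recurrent set of the restriction `f|_Y`: chain recurrence witnessed by
ε-chains lying entirely inside `Y`. -/
def chainRecurrentSetOn {X : Type*} [MetricSpace X] (f : X → X) (Y : Set X) : Set X :=
  { x ∈ Y | ∀ ε > 0, ∃ n, 1 ≤ n ∧ ∃ c : ℕ → X, c 0 = x ∧ c n = x ∧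
      (∀ i ≤ n, c i ∈ Y) ∧ ∀ i < n, dist (f (c i)) (c (i + 1)) < ε }

/-- `I` is a periodic arc of `f` of period `s`: an arc with `f^s(I) ⊆ I` whose iterates
`I, f(I), …, f^{s-1}(I)` are pairwise disjoint. -/
def IsPeriodicArc {X : Type*} [TopologicalSpace X] (f : X → X) (I : Set X) (s : ℕ) : Prop :=
  IsArc I ∧ 1 ≤ s ∧ Set.MapsTo f^[s] I I ∧
    ∀ i j, i < j → j < s → Disjoint (f^[i] '' I) (f^[j] '' I)

/-- `Orb_f(I) = I ∪ f(I) ∪ … ∪ f^{s-1}(I)`. -/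
def arcOrbit {X : Type*} (f : X → X) (I : Set X) (s : ℕ) : Set X :=
  ⋃ i ∈ Finset.range s, f^[i] '' I

/-- `I` is an independence set for the pair `(U, V)` under `f`. -/
def IsIndepSetPair {X : Type*} (f : X → X) (U V : Set X) (I : Finset ℕ) : Prop :=
  ∀ J ⊆ I, J.Nonempty → ∀ s : ℕ → Bool,
    (⋂ j ∈ J, f^[j] ⁻¹' (if s j then U else V)).Nonempty

/-- `(x, y)` is an IN-pair of `(X, f)`. -/
def INPair {X : Type*} [TopologicalSpace X] (f : X → X) (x y : X) : Prop :=
  ∀ U ∈ nhds x, ∀ V ∈ nhds y, ∀ m : ℕ, ∃ I : Finset ℕ, m ≤ I.card ∧ IsIndepSetPair f U V I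

/-- The set `IN(X, f)` of IN-pairs of `(X, f)`. -/
def INPairs {X : Type*} [TopologicalSpace X] (f : X → X) : Set (X × X) :=
  { p | INPair f p.1 p.2 }

/-- `(x, y)` is an IN-pair of the restricted (sub)system `(Y, f|_Y)`, for `Y` invariant. -/
def INPairOn {X : Type*} [TopologicalSpace X] (f : X → X) (Y : Set X) (x y : X) : Prop :=
  x ∈ Y ∧ y ∈ Y ∧ ∀ U ∈ nhds x, ∀ V ∈ nhds y, ∀ m : ℕ, ∃ I : Finset ℕ, m ≤ I.card ∧
    ∀ J ⊆ I, J.Nonempty → ∀ s : ℕ → Bool,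
      (Y ∩ ⋂ j ∈ J, f^[j] ⁻¹' (if s j then U else V)).Nonempty

/-- `(x, y)` is a Li–Yorke pair for `f`. -/
def LiYorkePair {X : Type*} [MetricSpace X] (f : X → X) (x y : X) : Prop :=
  Filter.liminf (fun n : ℕ => dist (f^[n] x) (f^[n] y)) Filter.atTop = 0 ∧
    0 < Filter.limsup (fun n : ℕ => dist (f^[n] x) (f^[n] y)) Filter.atTop

/-!
Suppose that `ω_f(x)` is finite, so that some iterate `g` of `f` has a fixed point `p` to which the
`g`-orbit of `x` converges. Among the closed connected sets `Y` with `g(Y) = Y` which contain `p`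
but not `x`, take a maximal one: the union of a chain of such sets has finite boundary, so its
closure could only catch `x` if `x` were periodic. A set whose closure is mapped into its interior
cannot lose a chain recurrent point; together with the maximality of `Y` this shows that the
images of every small neighbourhood of `Y` eventually reach `x`.

Thus `x` is reached from points just beyond an end `b` of `Y` in some edge. Following such an orbit
out of a nested sequence of neighbourhoods of `Y` and looking at the last times it leaves each of
them, two of these exits take place on the same edge, which gives points `y < z` there, both
beyond `b`, with `g^m(y) = z`. As the orbit of `z` passes through `x` and returns to `p`, while that
of `b` never leaves `Y`, some iterate of `g` has a horseshoe, and `f` has positive entropy.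
-/

theorem surjOn_inter_preimage {α β : Type*} {φ : α → β} {s : Set α} {t : Set β}
    (h : SurjOn φ s t) : SurjOn φ (s ∩ φ ⁻¹' t) t := by
  intro w hw
  obtain ⟨v, hv, rfl⟩ := h hw
  exact ⟨v, ⟨hv, hw⟩, rfl⟩

theorem exists_seqCover_of_card {X : Type*} (f : X → X) (a : ℕ → ℕ) {𝒰 : Finset (Set X)}
    (h𝒰 : univ ⊆ ⋃₀ (𝒰 : Set (Set X))) (n : ℕ) :
    ∃ c : Fin (seqCoverCountOn f univ a 𝒰 n) → Fin n → Set X, (∀ j i, c j i ∈ 𝒰) ∧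
      univ ⊆ ⋃ j, ⋂ i, f^[a i.1] ⁻¹' c j i := by
  refine Nat.sInf_mem (s := {m | ∃ c : Fin m → Fin n → Set X, _}) ?_
  let e := Fintype.equivFin (Fin n → 𝒰)
  refine ⟨_, fun j i ↦ e.symm j i, fun j i ↦ (e.symm j i).2, fun x _ ↦ ?_⟩
  have hmem (y : X) : ∃ U : 𝒰, y ∈ (U : Set X) := by
    simpa using h𝒰 (mem_univ y)
  choose U hU using hmem
  exact mem_iUnion.2 ⟨e fun i ↦ U (f^[a i] x), by simp [hU]⟩

section Horseshoe

variable {X : Type*} [TopologicalSpace X] {f g : X → X} {A B : Set X}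

/-- Two disjoint closed sets form a *horseshoe* of `g` if `g` maps each of them over both. -/
structure IsHorseshoe (g : X → X) (A B : Set X) : Prop where
  isClosed_left : IsClosed A
  isClosed_right : IsClosed B
  disjoint : Disjoint A B
  nonempty : A.Nonempty
  surjOn_left : SurjOn g A (A ∪ B)
  surjOn_right : SurjOn g B (A ∪ B)

/-- Some positive iterate of `f` has a horseshoe. -/
def HasHorseshoe (f : X → X) : Prop :=
  ∃ n ≥ 1, ∃ A B : Set X, IsHorseshoe f^[n] A B

theorem HasHorseshoe.of_iterate {k : ℕ} (hk : 1 ≤ k) (h : HasHorseshoe f^[k]) :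
    HasHorseshoe f := by
  obtain ⟨n, hn, A, B, hAB⟩ := h
  exact ⟨k * n, Nat.mul_pos hk hn, A, B, by rwa [iterate_mul]⟩

theorem IsHorseshoe.exists_itinerary (h : IsHorseshoe g A B) (σ : ℕ → Bool) (m : ℕ) :
    ∃ w ∈ A ∪ B, ∀ i < m, g^[i] w ∈ cond (σ i) A B := by
  induction m generalizing σ with
  | zero =>
    obtain ⟨w, hw⟩ := h.nonempty
    exact ⟨w, .inl hw, by simp⟩
  | succ m ih =>
    obtain ⟨w, hw, hitin⟩ := ih fun i ↦ σ (i + 1)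
    have hpiece : SurjOn g (cond (σ 0) A B) (A ∪ B) := by
      cases σ 0
      exacts [h.surjOn_right, h.surjOn_left]
    obtain ⟨v, hv, rfl⟩ := hpiece hw
    refine ⟨v, ?_, fun i hi ↦ ?_⟩
    · cases hσ : σ 0 <;> simp_all
    · cases i with
      | zero => exact hv
      | succ i => exact hitin i (by lia)

theorem IsHorseshoe.isOpenCoverOn_compl [DecidableEq (Set X)] (h : IsHorseshoe g A B) :
    IsOpenCoverOn univ {Aᶜ, Bᶜ} := by
  refine ⟨?_, fun x _ ↦ ?_⟩
  · simp [h.isClosed_left, h.isClosed_right]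
  · by_cases hx : x ∈ A
    · exact ⟨Bᶜ, by simp, h.disjoint.notMem_of_mem_left hx⟩
    · exact ⟨Aᶜ, by simp, hx⟩

/-- Points with different itineraries lie in different elements of the join of `{Aᶜ, Bᶜ}`. -/
theorem IsHorseshoe.two_pow_le_seqCoverCountOn [DecidableEq (Set X)] {n : ℕ} (hn : 1 ≤ n)
    (h : IsHorseshoe f^[n] A B) (m : ℕ) :
    2 ^ m ≤ seqCoverCountOn f univ id {Aᶜ, Bᶜ} (n * m) := by
  obtain ⟨c, hc, hcover⟩ := exists_seqCover_of_card f id h.isOpenCoverOn_compl.2 (n * m)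
  have hitin (σ : Fin m → Bool) : ∃ w, ∀ i : Fin m, f^[n * i] w ∈ cond (σ i) A B := by
    obtain ⟨w, -, hw⟩ := h.exists_itinerary (fun i ↦ if hi : i < m then σ ⟨i, hi⟩ else true) m
    exact ⟨w, fun i ↦ by simpa [iterate_mul] using hw i i.2⟩
  choose w hw using hitin
  have hmem (σ : Fin m → Bool) : ∃ j, ∀ i : Fin (n * m), f^[i] (w σ) ∈ c j i := by
    simpa using hcover (mem_univ (w σ))
  choose J hJ using hmem
  have hJinj : Injective J := by
    intro σ τ hστ
    ext1 i
    by_contra hne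
    let t : Fin (n * m) := ⟨n * i, Nat.mul_lt_mul_of_pos_left i.2 hn⟩
    have hσ : f^[n * i] (w σ) ∈ c (J σ) t := hJ σ t
    have hτ : f^[n * i] (w τ) ∈ c (J σ) t := hστ ▸ hJ τ t
    have hσi := hw σ i
    have hτi := hw τ i
    have hct := hc (J σ) t
    simp only [Finset.mem_insert, Finset.mem_singleton] at hct
    rcases hct with hct | hct <;> rw [hct] at hσ hτ <;>
      cases hs : σ i <;> cases ht : τ i <;> simp_all
  simpa using Fintype.card_le_of_injective J hJinj

theorem IsHorseshoe.log_two_div_le_topEntropy {n : ℕ} (hn : 1 ≤ n)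
    (h : IsHorseshoe f^[n] A B) : ENNReal.ofReal (Real.log 2 / n) ≤ topEntropy f := by
  classical
  refine le_trans ?_ (le_iSup₂ (α := ℝ≥0∞) {Aᶜ, Bᶜ} h.isOpenCoverOn_compl)
  refine le_limsup_of_frequently_le (frequently_atTop.2 fun m ↦ ?_)
  refine ⟨n * (m + 1), by nlinarith, ENNReal.ofReal_le_ofReal ?_⟩
  have hlog : (m + 1 : ℕ) * Real.log 2 ≤
      Real.log (seqCoverCountOn f univ id {Aᶜ, Bᶜ} (n * (m + 1))) := by
    rw [← Real.log_pow]
    exact Real.log_le_log (by positivity) (mod_cast h.two_pow_le_seqCoverCountOn hn (m + 1))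
  have : (0 : ℝ) < n := mod_cast hn
  calc Real.log 2 / n = (m + 1 : ℕ) * Real.log 2 / (n * (m + 1) : ℕ) := by
        push_cast
        field_simp
    _ ≤ _ := by gcongr

theorem HasHorseshoe.topEntropy_pos (h : HasHorseshoe f) : 0 < topEntropy f := by
  obtain ⟨n, hn, A, B, hAB⟩ := h
  have hn' : (0 : ℝ) < n := mod_cast hn
  exact (ENNReal.ofReal_pos.2 (div_pos (Real.log_pos one_lt_two) hn')).trans_le
    (hAB.log_two_div_le_topEntropy hn)

/-- A loop from `C` through `L` and a loop from `C` through `R` give a horseshoe inside `C`: its two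
sets consist of the points which follow one loop and of those which follow the other. -/
theorem hasHorseshoe_of_surjOn (hg : Continuous g) {C L R : Set X} (hC : IsClosed C)
    (hL : IsClosed L) (hR : IsClosed R) (hne : C.Nonempty) {m n k : ℕ} (hn : 1 ≤ n)
    (hCLR : SurjOn g^[m] C (L ∪ R)) (hLC : SurjOn g^[n] L C) (hRC : SurjOn g^[k] R C)
    (hdisj : ∀ w ∈ L ∩ R, g^[n] w ∉ C) : HasHorseshoe g := by
  let A := C ∩ g^[m] ⁻¹' (L ∩ g^[n] ⁻¹' C)
  let B := C ∩ g^[m] ⁻¹' R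
  have hAB : A ∪ B ⊆ C := union_subset inter_subset_left inter_subset_left
  have hA : SurjOn g^[k + m + n + m] A C := by
    rw [iterate_add, iterate_add, iterate_add]
    exact ((hRC.comp (hCLR.mono le_rfl subset_union_right)).comp (surjOn_inter_preimage hLC)).comp
      (surjOn_inter_preimage
        (hCLR.mono le_rfl (inter_subset_left.trans subset_union_left)))
  have hB : SurjOn g^[k + m + n + m] B C := by
    rw [show k + m + n + m = n + m + k + m by lia, iterate_add, iterate_add, iterate_add]
    exact ((hLC.comp (hCLR.mono le_rfl subset_union_left)).comp hRC).comp
      (surjOn_inter_preimage (hCLR.mono le_rfl subset_union_right))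
  refine ⟨k + m + n + m, by lia, A, B, ?_, ?_, ?_, ?_, hA.mono le_rfl hAB, hB.mono le_rfl hAB⟩
  · exact hC.inter ((hL.inter (hC.preimage (hg.iterate n))).preimage (hg.iterate m))
  · exact hC.inter (hR.preimage (hg.iterate m))
  · exact disjoint_left.2 fun w hwA hwB ↦ hdisj _ ⟨hwA.2.1, hwB.2⟩ hwA.2.2
  · obtain ⟨w, hw⟩ := hne
    obtain ⟨v, hv, -⟩ := hA hw
    exact ⟨v, hv⟩

end Horseshoe

section Edge

variable {X : Type*} [TopologicalSpace X]

/-- An edge of a graph-like space `X`: a path together with a continuous coordinate on all of `X`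
that inverts it. Points whose coordinate is strictly between `0` and `1` lie on the path, so the
rest of `X` is collapsed onto the two ends. Only the restriction of `point` to `[0, 1]` matters. -/
structure Edge (X : Type*) [TopologicalSpace X] where
  point : ℝ → X
  coord : X → ℝ
  continuous_point : Continuous point
  continuous_coord : Continuous coord
  coord_mem : ∀ w, coord w ∈ Icc 0 1
  coord_point : ∀ t ∈ Icc (0 : ℝ) 1, coord (point t) = t
  point_coord : ∀ w, coord w ∈ Ioo 0 1 → point (coord w) = w

namespace Edge

/-- The same edge with the opposite orientation. -/
def rev (e : Edge X) : Edge X where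
  point t := e.point (1 - t)
  coord w := 1 - e.coord w
  continuous_point := e.continuous_point.comp (continuous_const.sub continuous_id)
  continuous_coord := continuous_const.sub e.continuous_coord
  coord_mem w := ⟨by linarith [(e.coord_mem w).2], by linarith [(e.coord_mem w).1]⟩
  coord_point t ht := by
    rw [e.coord_point _ ⟨by linarith [ht.2], by linarith [ht.1]⟩, sub_sub_cancel]
  point_coord w hw := by
    rw [sub_sub_cancel, e.point_coord w ⟨by linarith [hw.2], by linarith [hw.1]⟩]

variable (e : Edge X) {g : X → X} {C : Set X} {v w : X} {a b c d s u : ℝ}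

theorem rev_rev : e.rev.rev = e := by
  simp only [rev, sub_sub_cancel]

theorem point_mem_of_isPreconnected (hC : IsPreconnected C) (hv : v ∈ C) (hw : w ∈ C)
    (hvs : e.coord v < s) (hsw : s < e.coord w) : e.point s ∈ C := by
  have hs : s ∈ e.coord '' C :=
    (hC.image e.coord e.continuous_coord.continuousOn).ordConnected.out
      (mem_image_of_mem _ hv) (mem_image_of_mem _ hw) ⟨hvs.le, hsw.le⟩
  obtain ⟨c, hc, rfl⟩ := hs
  rwa [e.point_coord c ⟨(e.coord_mem v).1.trans_lt hvs, hsw.trans_le (e.coord_mem w).2⟩]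

theorem image_Icc_subset_of_isPreconnected (hC : IsPreconnected C) (hCc : IsClosed C)
    (hv : v ∈ C) (hw : w ∈ C) (hvw : e.coord v < e.coord w) :
    e.point '' Icc (e.coord v) (e.coord w) ⊆ C := by
  have hIoo : MapsTo e.point (Ioo (e.coord v) (e.coord w)) C :=
    fun s hs ↦ e.point_mem_of_isPreconnected hC hv hw hs.1 hs.2
  simpa only [closure_Ioo hvw.ne, hCc.closure_eq] using
    (hIoo.closure e.continuous_point).image_subset

theorem isClosed_image_Icc [T2Space X] : IsClosed (e.point '' Icc a b) :=
  (isCompact_Icc.image e.continuous_point).isClosed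

theorem surjOn_image_Icc [T2Space X] (hg : Continuous g) (hu : u ∈ Icc a b) (hs : s ∈ Icc a b)
    (hcd : c < d) (hc : e.coord (g (e.point u)) ≤ c) (hd : d ≤ e.coord (g (e.point s))) :
    SurjOn g (e.point '' Icc a b) (e.point '' Icc c d) := by
  have hpre : IsPreconnected (g '' (e.point '' Icc a b)) :=
    (isPreconnected_Icc.image _ e.continuous_point.continuousOn).image _ hg.continuousOn
  have hclosed : IsClosed (g '' (e.point '' Icc a b)) :=
    ((isCompact_Icc.image e.continuous_point).image hg).isClosed
  exact (image_mono (Icc_subset_Icc hc hd)).trans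
    (e.image_Icc_subset_of_isPreconnected hpre hclosed (mem_image_of_mem _ (mem_image_of_mem _ hu))
      (mem_image_of_mem _ (mem_image_of_mem _ hs)) (by linarith))

theorem injOn_point : InjOn e.point (Icc 0 1) :=
  LeftInvOn.injOn e.coord_point

theorem image_Icc_inter_image_Icc (ha : 0 ≤ a) (hab : a ≤ b) (hbc : b ≤ c) (hc : c ≤ 1) :
    e.point '' Icc a b ∩ e.point '' Icc b c = {e.point b} := by
  rw [← e.injOn_point.image_inter (Icc_subset_Icc ha (hbc.trans hc))
    (Icc_subset_Icc (ha.trans hab) hc), Icc_inter_Icc_eq_singleton hab hbc, image_singleton]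

theorem le_coord_of_mem_image_Icc (ha : 0 ≤ a) (hb : b ≤ 1) (hw : w ∈ e.point '' Icc a b) :
    a ≤ e.coord w := by
  obtain ⟨t, ht, rfl⟩ := hw
  exact ht.1.trans_eq (e.coord_point t (Icc_subset_Icc ha hb ht)).symm

end Edge

/-- Along the edge `e`, the map `g` pushes `y` up to `z`, while the orbit of `z` comes back below
every level above `b` and the orbit of `b` never rises above `b`. -/
structure IsHomoclinicPair (e : Edge X) (g : X → X) (b y z : ℝ) : Prop where
  base_nonneg : 0 ≤ b
  base_lt : b < y
  lt : y < z
  lt_one : z < 1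
  map_point : g (e.point y) = e.point z
  coord_base_le : ∀ m, e.coord (g^[m] (e.point b)) ≤ b
  eventually_coord_lt : ∀ s > b, ∀ᶠ i in atTop, e.coord (g^[i] (e.point z)) < s

namespace IsHomoclinicPair

variable {e : Edge X} {g : X → X} {b y z : ℝ}

theorem coord_point_snd (h : IsHomoclinicPair e g b y z) : e.coord (e.point z) = z :=
  e.coord_point z ⟨by linarith [h.base_nonneg, h.base_lt, h.lt], h.lt_one.le⟩

theorem exists_iterate_eq [T2Space X] (h : IsHomoclinicPair e g b y z) (hg : Continuous g)
    (j : ℕ) : ∃ s ∈ Ioc b y, g^[j] (e.point s) = e.point y := by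
  have hz := h.coord_point_snd
  obtain ⟨h0, hby, hyz, hz1, hgy, hgb, -⟩ := h
  induction j with
  | zero => exact ⟨y, ⟨hby, le_rfl⟩, rfl⟩
  | succ j ih =>
    obtain ⟨s, ⟨hbs, hsy⟩, hs⟩ := ih
    have hb1 : e.coord (g (e.point b)) ≤ b := hgb 1
    have hcover : SurjOn g (e.point '' Icc b y) (e.point '' Icc b z) :=
      e.surjOn_image_Icc hg (left_mem_Icc.2 hby.le) (right_mem_Icc.2 hby.le) (hby.trans hyz) hb1
        (by rw [hgy, hz])
    obtain ⟨_, ⟨t, ht, rfl⟩, hts⟩ := hcover ⟨s, ⟨hbs.le, hsy.trans hyz.le⟩, rfl⟩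
    refine ⟨t, ⟨ht.1.lt_of_ne ?_, ht.2⟩, by rw [iterate_succ_apply, hts, hs]⟩
    rintro rfl
    rw [hts, e.coord_point s ⟨by linarith, by linarith⟩] at hb1
    linarith

theorem exists_iterate [T2Space X] (h : IsHomoclinicPair e g b y z) (hg : Continuous g) (l : ℕ) :
    ∃ s, IsHomoclinicPair e g^[l + 1] b s z := by
  obtain ⟨s, ⟨hbs, hsy⟩, hs⟩ := h.exists_iterate_eq hg l
  refine ⟨s, h.base_nonneg, hbs, hsy.trans_lt h.lt, h.lt_one, ?_, fun m ↦ ?_, fun t ht ↦ ?_⟩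
  · rw [iterate_succ_apply', hs, h.map_point]
  · rw [← iterate_mul]
    exact h.coord_base_le _
  · simp only [← iterate_mul]
    exact (tendsto_id.const_mul_atTop' l.succ_pos).eventually (h.eventually_coord_lt t ht)

theorem exists_isFixedPt (h : IsHomoclinicPair e g b y z) (hg : Continuous g)
    (hgz : e.coord (g (e.point z)) < z) : ∃ q ∈ Ioo y z, IsFixedPt g (e.point q) := by
  have hz := h.coord_point_snd
  obtain ⟨h0, hby, hyz, hz1, hgy, -, -⟩ := h
  have hcont : ContinuousOn (fun s ↦ e.coord (g (e.point s)) - s) (Icc y z) :=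
    ((e.continuous_coord.comp (hg.comp e.continuous_point)).sub continuous_id).continuousOn
  obtain ⟨q, hq, hq0⟩ : (0 : ℝ) ∈ (fun s ↦ e.coord (g (e.point s)) - s) '' Ioo y z :=
    intermediate_value_Ioo' hyz.le hcont ⟨by linarith, by rw [hgy, hz]; linarith⟩
  have hcoord : e.coord (g (e.point q)) = q := sub_eq_zero.1 hq0
  have hfix := e.point_coord (g (e.point q)) (by constructor <;> linarith [hq.1, hq.2])
  exact ⟨q, hq, by rw [hcoord] at hfix; exact hfix.symm⟩

theorem hasHorseshoe_of_coord_lt [T2Space X] (h : IsHomoclinicPair e g b y z) (hg : Continuous g)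
    (hgz : e.coord (g (e.point z)) < z) : HasHorseshoe g := by
  have hz := h.coord_point_snd
  obtain ⟨q, ⟨hyq, hqz⟩, hq⟩ := h.exists_isFixedPt hg hgz
  have hby := h.base_lt
  obtain ⟨l, hl⟩ := (h.eventually_coord_lt y hby).exists
  obtain ⟨s, ⟨hbs, hsy⟩, hs⟩ := h.exists_iterate_eq hg l
  obtain ⟨M, hM⟩ := (h.eventually_coord_lt s hbs).exists
  have hcoord (t : ℝ) (ht : t ∈ Icc s z) : e.coord (e.point t) = t :=
    e.coord_point t ⟨by linarith [h.base_nonneg, ht.1], ht.2.trans h.lt_one.le⟩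
  have hgs : g^[l + 1] (e.point s) = e.point z := by rw [iterate_succ_apply', hs, h.map_point]
  have hgy : g^[l + 1] (e.point y) = g^[l] (e.point z) := by
    rw [iterate_succ_apply, h.map_point]
  have hLC : SurjOn g^[l + 1] (e.point '' Icc s y) (e.point '' Icc q z) :=
    e.surjOn_image_Icc (hg.iterate _) (right_mem_Icc.2 hsy) (left_mem_Icc.2 hsy) hqz
      (by rw [hgy]; linarith) (by rw [hgs, hz])
  have hRC : SurjOn g (e.point '' Icc y q) (e.point '' Icc q z) :=
    e.surjOn_image_Icc hg (right_mem_Icc.2 hyq.le) (left_mem_Icc.2 hyq.le) hqz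
      (by rw [hq.eq, hcoord q ⟨by linarith, hqz.le⟩]) (by rw [h.map_point, hz])
  have hCLR : SurjOn g^[M] (e.point '' Icc q z) (e.point '' Icc s y ∪ e.point '' Icc y q) := by
    rw [← image_union, Icc_union_Icc_eq_Icc hsy hyq.le]
    exact e.surjOn_image_Icc (hg.iterate _) (right_mem_Icc.2 hqz.le) (left_mem_Icc.2 hqz.le)
      (by linarith) hM.le (by rw [(hq.iterate M).eq, hcoord q ⟨by linarith, hqz.le⟩])
  refine hasHorseshoe_of_surjOn hg e.isClosed_image_Icc e.isClosed_image_Icc e.isClosed_image_Icc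
    ⟨_, q, left_mem_Icc.2 hqz.le, rfl⟩ l.succ_pos hCLR hLC (k := 1) hRC ?_
  rw [e.image_Icc_inter_image_Icc (by linarith [h.base_nonneg]) hsy hyq.le
    (hqz.le.trans h.lt_one.le)]
  rintro _ rfl hmem
  have hqle := e.le_coord_of_mem_image_Icc (by linarith [h.base_nonneg]) h.lt_one.le hmem
  rw [hgy] at hqle
  linarith

theorem hasHorseshoe [T2Space X] (h : IsHomoclinicPair e g b y z) (hg : Continuous g) :
    HasHorseshoe g := by
  obtain ⟨l, hl⟩ := eventually_atTop.1 (h.eventually_coord_lt z (h.base_lt.trans h.lt))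
  obtain ⟨s, hs⟩ := h.exists_iterate hg l
  exact (hs.hasHorseshoe_of_coord_lt (hg.iterate _) (hl _ l.le_succ)).of_iterate l.succ_pos

end IsHomoclinicPair

end Edge

section NestedSets

variable {X ι : Type*} [TopologicalSpace X] [CompactSpace X] [Nonempty ι]
  {K : ι → Set X}

theorem isPreconnected_iInter_of_directed [T2Space X] (hK : Directed (· ⊇ ·) K)
    (hclosed : ∀ i, IsClosed (K i)) (hpre : ∀ i, IsPreconnected (K i)) :
    IsPreconnected (⋂ i, K i) := by
  rw [isPreconnected_closed_iff]
  intro u v hu hv huv ⟨a, ha, hau⟩ ⟨b, hb, hbv⟩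
  by_contra hempty
  have hInter : IsClosed (⋂ i, K i) := isClosed_iInter hclosed
  have hdisj : Disjoint ((⋂ i, K i) ∩ u) ((⋂ i, K i) ∩ v) :=
    disjoint_left.2 fun w hwu hwv ↦ hempty ⟨w, hwu.1, hwu.2, hwv.2⟩
  obtain ⟨U, V, hU, hV, huU, hvV, hUV⟩ := SeparatedNhds.of_isCompact_isCompact
    (hInter.inter hu).isCompact (hInter.inter hv).isCompact hdisj
  obtain ⟨i, hi⟩ : ∃ i, K i ⊆ U ∪ V :=
    exists_subset_nhds_of_compactSpace hK hclosed fun w hw ↦ (hU.union hV).mem_nhds <|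
      (huv hw).imp (fun h ↦ huU ⟨hw, h⟩) fun h ↦ hvV ⟨hw, h⟩
  obtain ⟨w, -, hwU, hwV⟩ := hpre i U V hU hV hi
    ⟨a, mem_iInter.1 ha i, huU ⟨ha, hau⟩⟩ ⟨b, mem_iInter.1 hb i, hvV ⟨hb, hbv⟩⟩
  exact disjoint_left.1 hUV hwU hwV

theorem iInter_image_subset_image_iInter {Z : Type*} [TopologicalSpace Z] [T1Space Z] {g : X → Z}
    (hg : Continuous g) (hK : Directed (· ⊇ ·) K) (hclosed : ∀ i, IsClosed (K i)) :
    ⋂ i, g '' K i ⊆ g '' ⋂ i, K i := by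
  intro w hw
  have hfiber : ∀ i, IsClosed (K i ∩ g ⁻¹' {w}) :=
    fun i ↦ (hclosed i).inter (isClosed_singleton.preimage hg)
  obtain ⟨v, hv⟩ := IsCompact.nonempty_iInter_of_directed_nonempty_isCompact_isClosed
    (fun i ↦ K i ∩ g ⁻¹' {w}) (fun i j ↦ (hK i j).imp fun _ h ↦
      ⟨inter_subset_inter_left _ h.1, inter_subset_inter_left _ h.2⟩)
    (fun i ↦ mem_iInter.1 hw i) (fun i ↦ (hfiber i).isCompact) hfiber
  simp only [mem_iInter, mem_inter_iff, mem_preimage, mem_singleton_iff] at hv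
  exact ⟨v, mem_iInter.2 fun i ↦ (hv i).1, (hv (Classical.arbitrary ι)).2⟩

end NestedSets

section FiniteOmegaLimit

theorem mem_periodicPts_of_subset_image {α : Type*} {f : α → α} {F : Set α} (hF : F.Finite)
    (hsub : F ⊆ f '' F) {x : α} (hx : x ∈ F) : x ∈ periodicPts f := by
  have himage : F = f '' F := hF.eq_of_subset_of_encard_le hsub (encard_image_le f F)
  have hmaps : MapsTo f F F := mapsTo_iff_image_subset.2 himage.symm.subset
  have : Finite F := hF
  have hinj : Injective (hmaps.restrict f F F) :=
    Finite.injective_iff_surjective.2 (hmaps.restrict_surjective_iff.2 hsub)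
  obtain ⟨n, hn, hper⟩ := hinj.mem_periodicPts ⟨x, hx⟩
  exact mk_mem_periodicPts hn (hper.map (g := Subtype.val) fun _ ↦ rfl)

theorem exists_isPeriodicPt_of_finite {α : Type*} {f : α → α} {F : Set α} (hF : F.Finite)
    (hper : F ⊆ periodicPts f) : ∃ k ≥ 1, ∀ w ∈ F, IsPeriodicPt f k w := by
  refine ⟨∏ w ∈ hF.toFinset, minimalPeriod f w,
    Nat.succ_le_of_lt (Finset.prod_pos fun w hw ↦ ?_), fun w hw ↦ ?_⟩
  · exact minimalPeriod_pos_of_mem_periodicPts (hper (hF.mem_toFinset.1 hw))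
  · exact isPeriodicPt_iff_minimalPeriod_dvd.2 (Finset.dvd_prod_of_mem _ (hF.mem_toFinset.2 hw))

variable {X : Type*} [TopologicalSpace X] {f g : X → X} {x p : X}

theorem mem_omegaLimitSet_iff : p ∈ omegaLimitSet f x ↔ MapClusterPt p atTop fun n ↦ f^[n] x := by
  rw [mapClusterPt_atTop_iff_forall_mem_closure, omegaLimitSet, mem_iInter]

theorem omegaLimitSet_nonempty [CompactSpace X] (f : X → X) (x : X) :
    (omegaLimitSet f x).Nonempty := by
  obtain ⟨p, hp⟩ := exists_clusterPt_of_compactSpace (map (fun n ↦ f^[n] x) atTop)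
  exact ⟨p, mem_omegaLimitSet_iff.2 hp⟩

theorem omegaLimitSet_subset_image [CompactSpace X] [T2Space X] (hf : Continuous f) (x : X) :
    omegaLimitSet f x ⊆ f '' omegaLimitSet f x := by
  have hanti : Antitone fun n ↦ closure ((fun k ↦ f^[k] x) '' Ici n) :=
    fun m n hmn ↦ closure_mono (image_mono (Ici_subset_Ici.2 hmn))
  refine Subset.trans (fun w hw ↦ mem_iInter.2 fun n ↦ ?_) (iInter_image_subset_image_iInter hf
    hanti.directed_ge fun n ↦ isClosed_closure)
  rw [← hf.isClosedMap.closure_image_eq_of_continuous hf, image_image]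
  refine closure_mono ?_ (mem_iInter.1 hw (n + 1))
  rintro _ ⟨k, hk, rfl⟩
  rw [mem_Ici] at hk
  obtain ⟨j, rfl⟩ := Nat.exists_eq_add_of_le' hk
  exact ⟨n + j, by simp, (iterate_succ_apply' f _ x).symm.trans (by congr 2; lia)⟩

theorem omegaLimitSet_iterate_subset (f : X → X) (x : X) {k : ℕ} (hk : 1 ≤ k) :
    omegaLimitSet f^[k] x ⊆ omegaLimitSet f x := by
  refine iInter_mono fun n ↦ closure_mono ?_
  rintro _ ⟨j, hj, rfl⟩
  exact ⟨k * j, le_mul_of_one_le_of_le hk hj, congrFun (iterate_mul f k j) x⟩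

theorem tendsto_iterate_of_finite_omegaLimitSet [CompactSpace X] [T2Space X] (hg : Continuous g)
    (hp : IsFixedPt g p) (hpω : p ∈ omegaLimitSet g x) (hfin : (omegaLimitSet g x).Finite) :
    Tendsto (fun n ↦ g^[n] x) atTop (𝓝 p) := by
  rw [tendsto_def]
  intro O hO
  have hisolated : (omegaLimitSet g x \ {p})ᶜ ∈ 𝓝 p :=
    hfin.sdiff.isClosed.isOpen_compl.mem_nhds (by simp)
  obtain ⟨C, hCp, hC, hCO⟩ := exists_mem_nhds_isClosed_subset (inter_mem hO hisolated)
  let V := interior (C ∩ g ⁻¹' C)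
  have hV : V ∈ 𝓝 p :=
    interior_mem_nhds.2 (inter_mem hCp (hg.continuousAt.preimage_mem_nhds (hp.eq.symm ▸ hCp)))
  have hleave : ∀ᶠ n in atTop, g^[n] x ∉ C \ V := by
    refine not_frequently.1 fun hfreq ↦ ?_
    obtain ⟨w, hw, hcluster⟩ :=
      (hC.sdiff isOpen_interior).isCompact.exists_mapClusterPt_of_frequently hfreq
    have hwp : w = p := by_contra fun hne ↦
      (hCO hw.1).2 ⟨mem_omegaLimitSet_iff.2 hcluster, hne⟩
    exact hw.2 (hwp ▸ mem_of_mem_nhds hV)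
  obtain ⟨N, hN⟩ := eventually_atTop.1 hleave
  obtain ⟨n, hNn, hn⟩ := ((mem_omegaLimitSet_iff.1 hpω).frequently hV).forall_exists_of_atTop N
  have hstay : ∀ m ≥ n, g^[m] x ∈ V := by
    intro m hm
    induction m, hm using Nat.le_induction with
    | base => exact hn
    | succ m hm ih =>
      have hC' : g^[m + 1] x ∈ C := by
        rw [iterate_succ_apply']
        exact (interior_subset ih).2
      exact by_contra fun hnot ↦ hN _ (by lia) ⟨hC', hnot⟩
  exact eventually_atTop.2 ⟨n, fun m hm ↦ (hCO (interior_subset (hstay m hm)).1).1⟩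

theorem exists_tendsto_iterate_of_finite_omegaLimitSet [CompactSpace X] [T2Space X]
    (hf : Continuous f) (hfin : (omegaLimitSet f x).Finite) :
    ∃ k ≥ 1, ∃ p, IsFixedPt f^[k] p ∧ Tendsto (fun n ↦ (f^[k])^[n] x) atTop (𝓝 p) := by
  obtain ⟨k, hk, hper⟩ := exists_isPeriodicPt_of_finite hfin fun w hw ↦
    mem_periodicPts_of_subset_image hfin (omegaLimitSet_subset_image hf x) hw
  have hsub := omegaLimitSet_iterate_subset f x hk
  obtain ⟨p, hp⟩ := omegaLimitSet_nonempty f^[k] x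
  exact ⟨k, hk, p, hper p (hsub hp), tendsto_iterate_of_finite_omegaLimitSet (hf.iterate k)
    (hper p (hsub hp)) hp (hfin.subset hsub)⟩

end FiniteOmegaLimit

section ChainRecurrence

variable {X : Type*} [MetricSpace X] {f g : X → X} {x : X} {ε : ℝ} {c : ℕ → X}

/-- An infinite `ε`-chain. -/
def IsPseudoOrbit (f : X → X) (ε : ℝ) (c : ℕ → X) : Prop :=
  ∀ i, dist (f (c i)) (c (i + 1)) < ε

theorem IsPseudoOrbit.mono {δ : ℝ} (hc : IsPseudoOrbit f ε c) (hεδ : ε ≤ δ) :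
    IsPseudoOrbit f δ c :=
  fun i ↦ (hc i).trans_le hεδ

theorem exists_periodic_isPseudoOrbit (hx : x ∈ chainRecurrentSet f) (hε : 0 < ε) :
    ∃ n ≥ 1, ∃ c, IsPseudoOrbit f ε c ∧ ∀ j, c (n * j) = x := by
  obtain ⟨n, hn, c, hc0, hcn, hc⟩ := hx ε hε
  refine ⟨n, hn, fun i ↦ c (i % n), fun i ↦ ?_, fun j ↦ by simpa using hc0⟩
  have hwrap : c ((i + 1) % n) = c (i % n + 1) := by
    rw [← Nat.mod_add_mod]
    rcases (Nat.add_one_le_of_lt (Nat.mod_lt i hn)).lt_or_eq with hlt | heq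
    · rw [Nat.mod_eq_of_lt hlt]
    · rw [heq, Nat.mod_self, hc0, hcn]
  simpa only [hwrap] using hc _ (Nat.mod_lt i hn)

theorem exists_pos_forall_isPseudoOrbit_dist_lt (hf : UniformContinuous f) (n : ℕ) {δ : ℝ}
    (hδ : 0 < δ) : ∃ ε > 0, ∀ c, IsPseudoOrbit f ε c → ∀ i, dist (f^[n] (c i)) (c (i + n)) < δ := by
  induction n generalizing δ with
  | zero => exact ⟨1, one_pos, fun c _ i ↦ by simpa using hδ⟩
  | succ n ih =>
    obtain ⟨η, hη, hfη⟩ := Metric.uniformContinuous_iff.1 hf (δ / 2) (half_pos hδ)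
    obtain ⟨ε, hε, hshadow⟩ := ih hη
    refine ⟨min ε (δ / 2), lt_min hε (half_pos hδ), fun c hc i ↦ ?_⟩
    rw [iterate_succ_apply']
    calc dist (f (f^[n] (c i))) (c (i + (n + 1)))
        ≤ dist (f (f^[n] (c i))) (f (c (i + n))) + dist (f (c (i + n))) (c (i + n + 1)) :=
          dist_triangle _ _ _
      _ < δ / 2 + δ / 2 := add_lt_add (hfη (hshadow c (hc.mono (min_le_left _ _)) i))
          (hc.mono (min_le_right _ _) (i + n))
      _ = δ := add_halves δ

theorem chainRecurrentSet_subset_iterate (hf : UniformContinuous f) (k : ℕ) :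
    chainRecurrentSet f ⊆ chainRecurrentSet f^[k] := by
  intro x hx δ hδ
  obtain ⟨ε, hε, hshadow⟩ := exists_pos_forall_isPseudoOrbit_dist_lt hf k hδ
  obtain ⟨n, hn, c, hc, hcx⟩ := exists_periodic_isPseudoOrbit hx hε
  refine ⟨n, hn, fun j ↦ c (k * j), by simpa using hcx 0, by simpa only [mul_comm] using hcx k,
    fun j _ ↦ ?_⟩
  simpa only [Nat.mul_succ] using hshadow c hc (k * j)

theorem mem_of_image_subset_interior [CompactSpace X] (hg : Continuous g)
    (hx : x ∈ chainRecurrentSet g) {V : Set X} (hV : IsClosed V) (htrap : g '' V ⊆ interior V)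
    {m : ℕ} (hm : g^[m] x ∈ interior V) : x ∈ V := by
  have hunif := CompactSpace.uniformContinuous_of_continuous hg
  obtain ⟨δ, hδ, hthick⟩ :=
    (hV.isCompact.image hg).exists_thickening_subset_open isOpen_interior htrap
  obtain ⟨η, hη, hball⟩ := Metric.isOpen_iff.1 isOpen_interior _ hm
  obtain ⟨ε, hε, hshadow⟩ := exists_pos_forall_isPseudoOrbit_dist_lt hunif m hη
  obtain ⟨n, hn, c, hc, hcx⟩ := exists_periodic_isPseudoOrbit hx (lt_min hδ hε)
  have hc0 : c 0 = x := by simpa using hcx 0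
  have hstay : ∀ i ≥ m, c i ∈ V := by
    intro i hi
    induction i, hi using Nat.le_induction with
    | base =>
      have hdist := hshadow c (hc.mono (min_le_right _ _)) 0
      rw [hc0, zero_add, dist_comm] at hdist
      exact interior_subset (hball hdist)
    | succ i hi ih =>
      have hdist := hc.mono (min_le_left _ _) i
      rw [dist_comm] at hdist
      exact interior_subset (hthick (Metric.mem_thickening_iff.2 ⟨_, mem_image_of_mem g ih, hdist⟩))
  exact hcx m ▸ hstay (n * m) (Nat.le_mul_of_pos_left m hn)

end ChainRecurrence

section EdgeSystem

variable {X : Type*} [TopologicalSpace X] {U : Set X} {w : X} {𝓔 : Set (Edge X)}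

theorem Edge.coord_mem_of_mem_closure_diff (e : Edge X) (hU : IsPreconnected U)
    (hw : w ∈ closure U \ U) :
    e.coord w ∈ ({0, 1, sInf (e.coord '' U), sSup (e.coord '' U)} : Set ℝ) := by
  have hne : (e.coord '' U).Nonempty := (closure_nonempty_iff.1 ⟨w, hw.1⟩).image _
  have hsub : e.coord '' U ⊆ Icc 0 1 := image_subset_iff.2 fun v _ ↦ e.coord_mem v
  have hwIcc : e.coord w ∈ Icc (sInf (e.coord '' U)) (sSup (e.coord '' U)) :=
    isClosed_Icc.closure_subset_iff.2 (subset_Icc_csInf_csSup (bddBelow_Icc.mono hsub)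
      (bddAbove_Icc.mono hsub)) (image_closure_subset_closure_image e.continuous_coord
        (mem_image_of_mem _ hw.1))
  by_contra hexc
  simp only [mem_insert_iff, mem_singleton_iff, not_or] at hexc
  obtain ⟨h0, h1, hinf, hsup⟩ := hexc
  obtain ⟨_, ⟨u, hu, rfl⟩, huw⟩ := exists_lt_of_csInf_lt hne (hwIcc.1.lt_of_ne' hinf)
  obtain ⟨_, ⟨v, hv, rfl⟩, hwv⟩ := exists_lt_of_lt_csSup hne (hwIcc.2.lt_of_ne hsup)
  have hwU := e.point_mem_of_isPreconnected hU hu hv huw hwv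
  rw [e.point_coord w ⟨(e.coord_mem w).1.lt_of_ne' h0, (e.coord_mem w).2.lt_of_ne h1⟩] at hwU
  exact hw.2 hwU

/-- Finitely many edges, closed under change of orientation, whose paths cover the space. -/
structure IsEdgeSystem (𝓔 : Set (Edge X)) : Prop where
  finite : 𝓔.Finite
  cover : ∀ w, ∃ e ∈ 𝓔, w ∈ e.point '' Icc 0 1
  rev_mem : ∀ e ∈ 𝓔, e.rev ∈ 𝓔

theorem IsEdgeSystem.finite_closure_diff (h : IsEdgeSystem 𝓔) (hU : IsPreconnected U) :
    (closure U \ U).Finite := by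
  have hexc : (⋃ e ∈ 𝓔, e.point '' {0, 1, sInf (e.coord '' U), sSup (e.coord '' U)}).Finite :=
    h.finite.biUnion fun e _ ↦ (toFinite _).image _
  refine hexc.subset fun w hw ↦ ?_
  obtain ⟨e, he, t, ht, rfl⟩ := h.cover w
  have hcoord := e.coord_mem_of_mem_closure_diff hU hw
  rw [e.coord_point t ht] at hcoord
  exact mem_biUnion he (mem_image_of_mem _ hcoord)

end EdgeSystem

section InvariantContinua

variable {X : Type*} [TopologicalSpace X] {g : X → X} {p x : X} {C U Y : Set X}

theorem mem_periodicPts_of_mem_closure_diff [CompactSpace X] [T2Space X] (hg : Continuous g)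
    (hC : IsClosed C) (hU : C ∪ g '' U = U) (hfin : (closure U \ U).Finite)
    (hx : x ∈ closure U \ U) : x ∈ periodicPts g := by
  have hclosure : closure U = C ∪ g '' closure U := by
    conv_lhs => rw [← hU, closure_union, hC.closure_eq,
      hg.isClosedMap.closure_image_eq_of_continuous hg]
  refine mem_periodicPts_of_subset_image hfin ?_ hx
  rintro w ⟨hw, hwU⟩
  rw [← hU] at hwU
  obtain hwC | ⟨v, hv, rfl⟩ := hclosure.subset hw
  · exact absurd (Or.inl hwC) hwU
  · exact mem_image_of_mem g ⟨hv, fun hvU ↦ hwU (Or.inr (mem_image_of_mem g hvU))⟩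

/-- `Y` is a closed connected set with `g(Y) = Y` that contains `p` and avoids `x`. -/
structure IsInvariantContinuumAvoiding (g : X → X) (p x : X) (Y : Set X) : Prop where
  isClosed : IsClosed Y
  isPreconnected : IsPreconnected Y
  image_eq : g '' Y = Y
  mem : p ∈ Y
  notMem : x ∉ Y

theorem exists_maximal_isInvariantContinuumAvoiding [CompactSpace X] [T2Space X]
    (hfin : ∀ U : Set X, IsPreconnected U → (closure U \ U).Finite) (hg : Continuous g)
    (hp : IsFixedPt g p) (hper : x ∉ periodicPts g) :
    ∃ Y, Maximal (IsInvariantContinuumAvoiding g p x) Y := by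
  have hxp : x ≠ p := by
    rintro rfl
    exact hper (mk_mem_periodicPts one_pos hp)
  suffices hchain : ∀ c ⊆ {Y | IsInvariantContinuumAvoiding g p x Y}, IsChain (· ⊆ ·) c →
      c.Nonempty → ∃ ub ∈ {Y | IsInvariantContinuumAvoiding g p x Y}, ∀ S ∈ c, S ⊆ ub by
    obtain ⟨Y, -, hY⟩ := zorn_subset_nonempty _ hchain {p}
      ⟨isClosed_singleton, isPreconnected_singleton, by rw [image_singleton, hp], rfl, hxp⟩
    exact ⟨Y, hY⟩
  intro c hc _ hne
  have hpre : IsPreconnected (⋃₀ c) :=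
    isPreconnected_sUnion p c (fun S hS ↦ (hc hS).mem) fun S hS ↦ (hc hS).isPreconnected
  have himage : g '' ⋃₀ c = ⋃₀ c := by
    rw [sUnion_eq_biUnion, image_iUnion₂]
    exact iUnion₂_congr fun S hS ↦ (hc hS).image_eq
  obtain ⟨S, hS⟩ := hne
  refine ⟨closure (⋃₀ c), ⟨isClosed_closure, hpre.closure, ?_, ?_, fun hx ↦ ?_⟩,
    fun S hS ↦ (subset_sUnion_of_mem hS).trans subset_closure⟩
  · rw [← hg.isClosedMap.closure_image_eq_of_continuous hg, himage]
  · exact subset_closure ⟨S, hS, (hc hS).mem⟩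
  · refine hper (mem_periodicPts_of_mem_closure_diff hg isClosed_empty
      ((empty_union _).trans himage) (hfin _ hpre) ⟨hx, ?_⟩)
    rintro ⟨S, hS, hxS⟩
    exact (hc hS).notMem hxS

end InvariantContinua

section ReturnTime

theorem antitone_image_iterate {α : Type*} {g : α → α} {H : Set α} (hmaps : MapsTo g H H) :
    Antitone fun n ↦ g^[n] '' H :=
  antitone_nat_of_succ_le fun n ↦ by
    rw [iterate_succ, image_comp]
    exact image_mono hmaps.image_subset

theorem image_iInter_image_iterate {X : Type*} [TopologicalSpace X] [CompactSpace X] [T2Space X]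
    {g : X → X} (hg : Continuous g) {H : Set X} (hH : IsClosed H) (hmaps : MapsTo g H H) :
    g '' ⋂ n, g^[n] '' H = ⋂ n, g^[n] '' H := by
  have hanti := antitone_image_iterate hmaps
  have hsucc : ∀ n, g^[n + 1] '' H = g '' (g^[n] '' H) := fun n ↦ by
    rw [iterate_succ', image_comp]
  refine Subset.antisymm (subset_iInter fun n ↦ ?_) (Subset.trans (subset_iInter fun n ↦ ?_)
    (iInter_image_subset_image_iInter hg hanti.directed_ge fun n ↦
      (hH.isCompact.image (hg.iterate n)).isClosed))
  · exact (image_mono (iInter_subset _ n)).trans ((hsucc n).symm.subset.trans (hanti n.le_succ))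
  · exact (iInter_subset _ (n + 1)).trans (hsucc n).subset

variable {X : Type*} [MetricSpace X] [CompactSpace X] {g : X → X} {p x : X} {H N Y : Set X}

/- If `x ∉ H`, maximality gives `⋂ n, g^[n] '' H ⊆ Y ⊆ interior H`, so some iterate of `g` maps `H`
into its interior; a chain from `x` to itself that enters `H` can then never get back to `x`. -/
theorem mem_of_maximal_subset_interior
    (hY : Maximal (IsInvariantContinuumAvoiding g p x) Y) (hg : Continuous g)
    (hx : x ∈ chainRecurrentSet g) (hlim : Tendsto (fun n ↦ g^[n] x) atTop (𝓝 p))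
    (hH : IsClosed H) (hpre : IsPreconnected H) (hmaps : MapsTo g H H) (hYH : Y ⊆ interior H) :
    x ∈ H := by
  by_contra hxH
  have hdir : Directed (· ⊇ ·) fun n ↦ g^[n] '' H := (antitone_image_iterate hmaps).directed_ge
  have hclosed (n : ℕ) : IsClosed (g^[n] '' H) := (hH.isCompact.image (hg.iterate n)).isClosed
  have hYK : Y ⊆ ⋂ n, g^[n] '' H := subset_iInter fun n ↦
    (IsFixedPt.image_iterate hY.prop.image_eq n).symm.subset.trans
      (image_mono (hYH.trans interior_subset))
  have hK : IsInvariantContinuumAvoiding g p x (⋂ n, g^[n] '' H) :=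
    { isClosed := isClosed_iInter hclosed
      isPreconnected := isPreconnected_iInter_of_directed hdir hclosed fun n ↦
        hpre.image _ (hg.iterate n).continuousOn
      image_eq := image_iInter_image_iterate hg hH hmaps
      mem := hYK hY.prop.mem
      notMem := fun h ↦ hxH (by simpa only [iterate_zero, image_id] using mem_iInter.1 h 0) }
  obtain ⟨n, hn⟩ : ∃ n, g^[n] '' H ⊆ interior H :=
    exists_subset_nhds_of_compactSpace hdir hclosed fun w hw ↦
      isOpen_interior.mem_nhds (hYH (hY.le_of_ge hK hYK hw))
  have hentry : ∀ᶠ m in atTop, g^[(n + 1) * m] x ∈ interior H :=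
    (tendsto_id.const_mul_atTop' n.succ_pos).eventually
      (hlim.eventually_mem (isOpen_interior.mem_nhds (hYH hY.prop.mem)))
  obtain ⟨m, hm⟩ := hentry.exists
  have hunif := CompactSpace.uniformContinuous_of_continuous hg
  rw [iterate_mul] at hm
  exact hxH (mem_of_image_subset_interior (hg.iterate (n + 1))
    (chainRecurrentSet_subset_iterate hunif _ hx) hH
    ((antitone_image_iterate hmaps n.le_succ).trans hn) hm)

theorem exists_iterate_eq_of_maximal_subset_interior
    (hfin : ∀ U : Set X, IsPreconnected U → (closure U \ U).Finite)
    (hY : Maximal (IsInvariantContinuumAvoiding g p x) Y) (hg : Continuous g)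
    (hp : IsFixedPt g p) (hx : x ∈ chainRecurrentSet g) (hper : x ∉ periodicPts g)
    (hlim : Tendsto (fun n ↦ g^[n] x) atTop (𝓝 p))
    (hN : IsClosed N) (hpre : IsPreconnected N) (hYN : Y ⊆ interior N) :
    ∃ r, ∃ w ∈ N, g^[r] w = x := by
  let U := ⋃ n, g^[n] '' N
  have hU : N ∪ g '' U = U := by
    simpa only [U, image_iUnion, iterate_zero, image_id, iterate_succ', image_comp] using
      union_iUnion_nat_succ fun n ↦ g^[n] '' N
  have hNU : N ⊆ U := subset_union_left.trans hU.subset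
  have hmaps : MapsTo g U U := mapsTo_iff_image_subset.2 (subset_union_right.trans hU.subset)
  have hpN : p ∈ N := interior_subset (hYN hY.prop.mem)
  have hUpre : IsPreconnected U :=
    isPreconnected_iUnion ⟨p, mem_iInter.2 fun n ↦ ⟨p, hpN, hp.iterate n⟩⟩ fun n ↦
      hpre.image _ (hg.iterate n).continuousOn
  have hxU : x ∈ closure U :=
    mem_of_maximal_subset_interior hY hg hx hlim isClosed_closure hUpre.closure
      (hmaps.closure hg) (hYN.trans (interior_mono (hNU.trans subset_closure)))
  by_contra hnot
  refine hper (mem_periodicPts_of_mem_closure_diff hg hN hU (hfin U hUpre) ⟨hxU, fun h ↦ hnot ?_⟩)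
  exact mem_iUnion.1 h

end ReturnTime

section Collar

variable {X : Type*} [TopologicalSpace X] {Y : Set X} {w y : X} {s t : ℝ}

namespace Edge

variable (e : Edge X)

/-- The highest coordinate along `e` reached by `Y`; it is `0` if `Y` is empty. -/
noncomputable def top (Y : Set X) : ℝ := sSup (e.coord '' Y)

/-- The part of `e` above `Y`, reparametrized by `[0, 1]`; it is constant if `e.top Y = 1`. -/
noncomputable def germ (Y : Set X) (t : ℝ) : X := e.point (e.top Y + t * (1 - e.top Y))

theorem coord_le_top (hy : y ∈ Y) : e.coord y ≤ e.top Y :=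
  le_csSup ⟨1, forall_mem_image.2 fun w _ ↦ (e.coord_mem w).2⟩ (mem_image_of_mem _ hy)

theorem top_nonneg (Y : Set X) : 0 ≤ e.top Y :=
  Real.sSup_nonneg (forall_mem_image.2 fun w _ ↦ (e.coord_mem w).1)

theorem top_le_one (Y : Set X) : e.top Y ≤ 1 :=
  Real.sSup_le (forall_mem_image.2 fun w _ ↦ (e.coord_mem w).2) zero_le_one

theorem germ_zero (Y : Set X) : e.germ Y 0 = e.point (e.top Y) := by
  rw [germ, zero_mul, add_zero]

theorem continuous_germ (Y : Set X) : Continuous (e.germ Y) :=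
  e.continuous_point.comp (by fun_prop)

theorem point_mem_of_lt_top (hY : IsPreconnected Y) (hs : s ∈ Icc 0 1) (hsY : e.point s ∈ Y)
    (hst : s ≤ t) (ht : t < e.top Y) : e.point t ∈ Y := by
  obtain rfl | hlt := hst.eq_or_lt
  · exact hsY
  · obtain ⟨_, ⟨v, hv, rfl⟩, htv⟩ := exists_lt_of_lt_csSup ⟨_, mem_image_of_mem e.coord hsY⟩ ht
    exact e.point_mem_of_isPreconnected hY hsY hv (by rwa [e.coord_point s hs]) htv

theorem eventually_mem_image_imp [T2Space X] {P : X → Prop}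
    (h : ∀ s ∈ Icc 0 1, e.point s = y → ∀ᶠ s' in 𝓝[Icc 0 1] s, P (e.point s')) :
    ∀ᶠ w in 𝓝 y, w ∈ e.point '' Icc 0 1 → P w := by
  have hclosed : IsClosedMap ((Icc 0 1).domRestrict e.point) :=
    (e.continuous_point.comp continuous_subtype_val).isClosedMap
  have hfiber := hclosed.eventually_nhds_fiber (p := fun s ↦ P (e.point s)) y fun s hs ↦
    eventually_nhds_subtype_iff _ s (fun s ↦ P (e.point s)) |>.2 (h s s.2 hs)
  filter_upwards [hfiber]
  rintro _ hw ⟨s, hs, rfl⟩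
  exact hw ⟨s, hs⟩ rfl

end Edge

/-- The set `Y` together with the initial parts, up to parameter `t`, of the germs of the edges
in `𝓔` that leave `Y`. -/
def collar (𝓔 : Set (Edge X)) (Y : Set X) (t : ℝ) : Set X :=
  Y ∪ ⋃ e ∈ {e ∈ 𝓔 | e.point (e.top Y) ∈ Y}, e.germ Y '' Icc 0 t

variable {𝓔 : Set (Edge X)}

theorem subset_collar : Y ⊆ collar 𝓔 Y t :=
  subset_union_left

theorem image_germ_subset_collar {e : Edge X} (he : e ∈ 𝓔) (hY : e.point (e.top Y) ∈ Y) :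
    e.germ Y '' Icc 0 t ⊆ collar 𝓔 Y t :=
  fun _ hw ↦ Or.inr (mem_iUnion₂.2 ⟨e, ⟨he, hY⟩, hw⟩)

theorem monotone_collar (𝓔 : Set (Edge X)) (Y : Set X) : Monotone (collar 𝓔 Y) := fun _ _ hst ↦
  union_subset_union_right _ <| iUnion₂_mono fun _ _ ↦ image_mono (Icc_subset_Icc_right hst)

theorem isClosed_collar [T2Space X] (h𝓔 : 𝓔.Finite) (hY : IsClosed Y) (t : ℝ) :
    IsClosed (collar 𝓔 Y t) :=
  hY.union <| (h𝓔.subset (sep_subset _ _)).isClosed_biUnion fun e _ ↦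
    (isCompact_Icc.image (e.continuous_germ Y)).isClosed

theorem isPreconnected_collar {p : X} (hY : IsPreconnected Y) (hp : p ∈ Y) (ht : 0 ≤ t) :
    IsPreconnected (collar 𝓔 Y t) := by
  refine isPreconnected_of_forall p fun w hw ↦ ?_
  obtain hwY | hwe := hw
  · exact ⟨Y, subset_collar, hp, hwY, hY⟩
  obtain ⟨e, ⟨he, heY⟩, hwe⟩ := mem_iUnion₂.1 hwe
  exact ⟨Y ∪ e.germ Y '' Icc 0 t, union_subset subset_collar (image_germ_subset_collar he heY),
    Or.inl hp, Or.inr hwe, hY.union _ heY ⟨0, left_mem_Icc.2 ht, e.germ_zero Y⟩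
      (isPreconnected_Icc.image _ (e.continuous_germ Y).continuousOn)⟩

theorem eventually_collar_subset (h𝓔 : 𝓔.Finite) {U : Set X} (hU : IsOpen U) (hYU : Y ⊆ U) :
    ∀ᶠ t in 𝓝[>] (0 : ℝ), collar 𝓔 Y t ⊆ U := by
  have hgerm : ∀ e ∈ {e ∈ 𝓔 | e.point (e.top Y) ∈ Y},
      ∀ᶠ t in 𝓝[>] (0 : ℝ), e.germ Y '' Icc 0 t ⊆ U := by
    rintro e ⟨-, he⟩
    have hnhds : e.germ Y ⁻¹' U ∈ 𝓝 0 :=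
      (hU.preimage (e.continuous_germ Y)).mem_nhds (by rw [mem_preimage, e.germ_zero]; exact hYU he)
    obtain ⟨δ, hδ, hball⟩ := Metric.mem_nhds_iff.1 hnhds
    filter_upwards [Ioo_mem_nhdsGT hδ] with t ht
    rintro _ ⟨s, hs, rfl⟩
    refine hball ?_
    rw [Real.ball_eq_Ioo]
    constructor <;> linarith [hs.1, hs.2, ht.2]
  filter_upwards [(h𝓔.subset (sep_subset _ _)).eventually_all.2 hgerm] with t ht
  exact union_subset hYU (iUnion₂_subset ht)

theorem Edge.eventually_point_mem_collar_right {e : Edge X} (he : e ∈ 𝓔) (hY : IsPreconnected Y)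
    (ht : 0 < t) (hs : s ∈ Icc 0 1) (hsY : e.point s ∈ Y) :
    ∀ᶠ s' in 𝓝[Icc s 1] s, e.point s' ∈ collar 𝓔 Y t := by
  have hle : s ≤ e.top Y := e.coord_point s hs ▸ e.coord_le_top hsY
  obtain hlt | heq := hle.lt_or_eq
  · filter_upwards [self_mem_nhdsWithin, mem_nhdsWithin_of_mem_nhds (Iio_mem_nhds hlt)]
      with s' hs' hs't
    exact subset_collar (e.point_mem_of_lt_top hY hs hsY hs'.1 hs't)
  obtain rfl | hs1 := hs.2.eq_or_lt
  · filter_upwards [self_mem_nhdsWithin] with s' hs'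
    exact subset_collar (le_antisymm hs'.1 hs'.2 ▸ hsY)
  have hpos : 0 < 1 - s := sub_pos.2 hs1
  have hnhds : Iio (s + t * (1 - s)) ∈ 𝓝 s := Iio_mem_nhds (by linarith [mul_pos ht hpos])
  filter_upwards [self_mem_nhdsWithin, mem_nhdsWithin_of_mem_nhds hnhds] with s' hs' hs't
  refine image_germ_subset_collar he (heq ▸ hsY) ⟨(s' - s) / (1 - s), ⟨?_, ?_⟩, ?_⟩
  · exact div_nonneg (by linarith [hs'.1]) hpos.le
  · rw [div_le_iff₀ hpos]
    linarith [mem_Iio.1 hs't]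
  · rw [germ, ← heq, div_mul_cancel₀ _ hpos.ne', add_sub_cancel]

theorem Edge.eventually_point_mem_collar {e : Edge X} (he : e ∈ 𝓔) (he' : e.rev ∈ 𝓔)
    (hY : IsPreconnected Y) (ht : 0 < t) (hs : s ∈ Icc 0 1) (hsY : e.point s ∈ Y) :
    ∀ᶠ s' in 𝓝[Icc 0 1] s, e.point s' ∈ collar 𝓔 Y t := by
  rw [← Icc_union_Icc_eq_Icc hs.1 hs.2, nhdsWithin_union, eventually_sup]
  refine ⟨?_, eventually_point_mem_collar_right he hY ht hs hsY⟩
  have hright := eventually_point_mem_collar_right (s := 1 - s) he' hY ht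
    ⟨by linarith [hs.2], by linarith [hs.1]⟩ (by simpa only [rev, sub_sub_cancel] using hsY)
  have hflip : Tendsto (fun s' ↦ 1 - s') (𝓝[Icc 0 s] s) (𝓝[Icc (1 - s) 1] (1 - s)) :=
    (continuous_sub_left 1).continuousWithinAt.tendsto_nhdsWithin fun s' hs' ↦
      ⟨by linarith [hs'.2], by linarith [hs'.1]⟩
  simpa only [rev, sub_sub_cancel] using hflip.eventually hright

theorem IsEdgeSystem.subset_interior_collar [T2Space X] (h : IsEdgeSystem 𝓔)
    (hY : IsPreconnected Y) (ht : 0 < t) : Y ⊆ interior (collar 𝓔 Y t) := by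
  intro y hy
  have hall : ∀ᶠ w in 𝓝 y, ∀ e ∈ 𝓔, w ∈ e.point '' Icc 0 1 → w ∈ collar 𝓔 Y t :=
    h.finite.eventually_all.2 fun e he ↦ e.eventually_mem_image_imp fun s hs hsy ↦
      e.eventually_point_mem_collar he (h.rev_mem e he) hY ht hs (hsy ▸ hy)
  refine mem_interior_iff_mem_nhds.2 (hall.mono fun w hw ↦ ?_)
  obtain ⟨e, he, hwe⟩ := h.cover w
  exact hw e he hwe

theorem exists_germ_of_mem_collar_diff {r : ℝ} (hw : w ∈ collar 𝓔 Y t \ collar 𝓔 Y r) :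
    ∃ e ∈ 𝓔, e.point (e.top Y) ∈ Y ∧ e.top Y < 1 ∧ ∃ s ∈ Ioc r t, e.germ Y s = w := by
  obtain ⟨hwY | hwe, hwr⟩ := hw
  · exact absurd (subset_collar hwY) hwr
  obtain ⟨e, ⟨he, heY⟩, s, hs, rfl⟩ := mem_iUnion₂.1 hwe
  refine ⟨e, he, heY, (e.top_le_one Y).lt_of_ne fun htop ↦ hwr (subset_collar ?_),
    s, ⟨not_le.1 fun hsr ↦ hwr ?_, hs.2⟩, rfl⟩
  · simpa only [Edge.germ, htop, sub_self, mul_zero, add_zero] using heY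
  · exact image_germ_subset_collar he heY (mem_image_of_mem _ ⟨hs.1, hsr⟩)

end Collar

section ExitTimes

/- `τ j` is the last time before `r` at which the orbit of `w` is in `N j`. -/
theorem exists_exit_times {α : Type*} {g : α → α} {N : ℕ → Set α} (hN : Antitone N)
    (hmaps : ∀ j, MapsTo g (N (j + 1)) (N j)) {m r : ℕ} {w : α} (hw : w ∈ N m)
    (hr : g^[r] w ∉ N 0) :
    ∃ τ : ℕ → ℕ, ∀ j < m, τ j < r ∧ g^[τ j] w ∈ N j \ N (j + 1) ∧ ∀ i < j, τ j < τ i := by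
  classical
  let τ (j : ℕ) : ℕ := Nat.findGreatest (fun n ↦ g^[n] w ∈ N j) r
  have hτN {j : ℕ} (hj : j < m) : g^[τ j] w ∈ N j :=
    Nat.findGreatest_spec (P := fun n ↦ g^[n] w ∈ N j) r.zero_le (hN hj.le hw)
  have hτr {j : ℕ} (hj : j < m) : τ j < r :=
    (Nat.findGreatest_le r).lt_of_ne fun heq ↦ hr (heq ▸ hN j.zero_le (hτN hj))
  have hexit {j : ℕ} (hj : j < m) : g^[τ j] w ∉ N (j + 1) := fun hmem ↦ by
    refine Nat.findGreatest_is_greatest (P := fun n ↦ g^[n] w ∈ N j) (τ j).lt_succ_self (hτr hj) ?_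
    simpa only [iterate_succ_apply'] using hmaps j hmem
  refine ⟨τ, fun j hj ↦ ⟨hτr hj, ⟨hτN hj, hexit hj⟩, fun i hij ↦ ?_⟩⟩
  have hle : τ j ≤ τ i := Nat.le_findGreatest (hτr hj).le (hN hij.le (hτN hj))
  exact hle.lt_of_ne fun heq ↦ hexit (hij.trans hj) (heq ▸ hN hij (hτN hj))

variable {X : Type*} [TopologicalSpace X] {𝓔 : Set (Edge X)} {g : X → X} {Y : Set X} {p x : X}

theorem IsEdgeSystem.exists_collar_levels [T2Space X] (h : IsEdgeSystem 𝓔) (hg : Continuous g)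
    (hY : IsPreconnected Y) (hmaps : MapsTo g Y Y) (hx : x ∉ Y) :
    ∃ T : ℕ → ℝ, Antitone T ∧ (∀ j, T j ∈ Ioo 0 1) ∧ x ∉ collar 𝓔 Y (T 0) ∧
      ∀ j, MapsTo g (collar 𝓔 Y (T (j + 1))) (collar 𝓔 Y (T j)) := by
  have hnext : ∀ t ∈ Ioo (0 : ℝ) 1, ∃ t' ∈ Ioo (0 : ℝ) 1, t' ≤ t ∧
      MapsTo g (collar 𝓔 Y t') (collar 𝓔 Y t) := by
    intro t ht
    have hsub : Y ⊆ g ⁻¹' interior (collar 𝓔 Y t) :=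
      fun y hy ↦ h.subset_interior_collar hY ht.1 (hmaps hy)
    obtain ⟨t', hsub', ht'⟩ := ((eventually_collar_subset h.finite
      (isOpen_interior.preimage hg) hsub).and (Ioo_mem_nhdsGT ht.1)).exists
    exact ⟨t', ⟨ht'.1, ht'.2.trans ht.2⟩, ht'.2.le, fun w hw ↦ interior_subset (hsub' hw)⟩
  obtain ⟨t₀, hx₀, ht₀⟩ := ((eventually_collar_subset h.finite isOpen_compl_singleton
    (subset_compl_singleton_iff.2 hx)).and (Ioo_mem_nhdsGT one_pos)).exists
  choose! next hmem hle hmaps' using hnext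
  have hT (j : ℕ) : next^[j] t₀ ∈ Ioo (0 : ℝ) 1 := MapsTo.iterate hmem j ht₀
  refine ⟨fun j ↦ next^[j] t₀, antitone_nat_of_succ_le fun j ↦ ?_, hT,
    fun hx ↦ hx₀ hx rfl, fun j ↦ ?_⟩
  · simpa only [iterate_succ_apply'] using hle _ (hT j)
  · simpa only [iterate_succ_apply'] using hmaps' _ (hT j)

theorem exists_iterate_germ_eq_germ (h𝓔 : 𝓔.Finite) {T : ℕ → ℝ} (hT : Antitone T)
    (hmem : ∀ j, T j ∈ Ioo 0 1) (hx : x ∉ collar 𝓔 Y (T 0))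
    (hmaps : ∀ j, MapsTo g (collar 𝓔 Y (T (j + 1))) (collar 𝓔 Y (T j))) {r : ℕ} {w : X}
    (hw : w ∈ collar 𝓔 Y (T (𝓔.ncard + 1))) (hr : g^[r] w = x) :
    ∃ e : Edge X, e.point (e.top Y) ∈ Y ∧ e.top Y < 1 ∧ ∃ s t, 0 < s ∧ s < t ∧ t < 1 ∧
      (∃ m ≥ 1, g^[m] (e.germ Y s) = e.germ Y t) ∧ ∃ n, g^[n] (e.germ Y t) = x := by
  obtain ⟨τ, hτ⟩ := exists_exit_times ((monotone_collar 𝓔 Y).comp_antitone hT) hmaps hw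
    (hr.symm ▸ hx)
  have hgerm (j : ℕ) (hj : j < 𝓔.ncard + 1) := exists_germ_of_mem_collar_diff (hτ j hj).2.1
  have : Nonempty (Edge X) := (hgerm 0 𝓔.ncard.succ_pos).nonempty
  choose! e he heY htop s hs hsw using hgerm
  obtain ⟨i, hi, j, hj, hij, heq⟩ : ∃ i < 𝓔.ncard + 1, ∃ j < 𝓔.ncard + 1, i < j ∧ e i = e j := by
    obtain ⟨i, hi, j, hj, hne, heq⟩ := exists_ne_map_eq_of_ncard_lt_of_maps_to
      (s := Iio (𝓔.ncard + 1)) (f := e) (by simp) he h𝓔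
    obtain hij | hji := hne.lt_or_gt
    · exact ⟨i, hi, j, hj, hij, heq⟩
    · exact ⟨j, hj, i, hi, hji, heq.symm⟩
  have hτij : τ j < τ i := (hτ j hj).2.2 i hij
  refine ⟨e i, heY i hi, htop i hi, s j, s i, (hmem _).1.trans (hs j hj).1,
    (hs j hj).2.trans_lt ((hT hij).trans_lt (hs i hi).1), (hs i hi).2.trans_lt (hmem i).2,
    ⟨τ i - τ j, by lia, ?_⟩, r - τ i, ?_⟩
  · rw [hsw i hi, heq, hsw j hj, ← iterate_add_apply, Nat.sub_add_cancel hτij.le]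
  · rw [hsw i hi, ← iterate_add_apply, Nat.sub_add_cancel (hτ i hi).1.le, hr]

theorem isHomoclinicPair_of_map_germ {e : Edge X} {s t : ℝ} (hmaps : MapsTo g Y Y)
    (heY : e.point (e.top Y) ∈ Y) (htop : e.top Y < 1) (hs : 0 < s) (hst : s < t) (ht : t < 1)
    (hgerm : g (e.germ Y s) = e.germ Y t) (hp : p ∈ Y)
    (hlim : Tendsto (fun i ↦ g^[i] (e.germ Y t)) atTop (𝓝 p)) :
    IsHomoclinicPair e g (e.top Y) (e.top Y + s * (1 - e.top Y)) (e.top Y + t * (1 - e.top Y)) where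
  base_nonneg := e.top_nonneg Y
  base_lt := by nlinarith
  lt := by nlinarith
  lt_one := by nlinarith
  map_point := hgerm
  coord_base_le m := e.coord_le_top (hmaps.iterate m heY)
  eventually_coord_lt _ hu := ((e.continuous_coord.tendsto p).comp hlim).eventually
    (gt_mem_nhds ((e.coord_le_top hp).trans_lt hu))

theorem hasHorseshoe_of_mem_chainRecurrentSet {X : Type*} [MetricSpace X] [CompactSpace X]
    {𝓔 : Set (Edge X)} (h𝓔 : IsEdgeSystem 𝓔) {g : X → X} (hg : Continuous g) {p x : X}
    (hp : IsFixedPt g p) (hx : x ∈ chainRecurrentSet g) (hper : x ∉ periodicPts g)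
    (hlim : Tendsto (fun n ↦ g^[n] x) atTop (𝓝 p)) : HasHorseshoe g := by
  have hfin (U : Set X) (hU : IsPreconnected U) := h𝓔.finite_closure_diff hU
  obtain ⟨Y, hY⟩ := exists_maximal_isInvariantContinuumAvoiding hfin hg hp hper
  have hYpre := hY.prop.isPreconnected
  have hmaps : MapsTo g Y Y := mapsTo_iff_image_subset.2 hY.prop.image_eq.subset
  obtain ⟨T, hT, hmem, hxT, hTmaps⟩ := h𝓔.exists_collar_levels hg hYpre hmaps hY.prop.notMem
  have hpos := (hmem (𝓔.ncard + 1)).1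
  obtain ⟨r, w, hw, hr⟩ := exists_iterate_eq_of_maximal_subset_interior hfin hY hg hp hx hper hlim
    (isClosed_collar h𝓔.finite hY.prop.isClosed _)
    (isPreconnected_collar hYpre hY.prop.mem hpos.le) (h𝓔.subset_interior_collar hYpre hpos)
  obtain ⟨e, heY, htop, s, t, hs, hst, ht, ⟨m, hm, hgerm⟩, n, hn⟩ :=
    exists_iterate_germ_eq_germ h𝓔.finite hT hmem hxT hTmaps hw hr
  have hlim_germ : Tendsto (fun i ↦ g^[i] (e.germ Y t)) atTop (𝓝 p) :=
    (tendsto_add_atTop_iff_nat n).1 (by simpa only [iterate_add_apply, hn] using hlim)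
  have hpair : IsHomoclinicPair e g^[m] _ _ _ :=
    isHomoclinicPair_of_map_germ (hmaps.iterate m) heY htop hs hst ht hgerm hY.prop.mem <| by
      simp only [← iterate_mul]
      exact hlim_germ.comp (tendsto_id.const_mul_atTop' hm)
  exact (hpair.hasHorseshoe (hg.iterate m)).of_iterate hm

end ExitTimes

section Forest

variable {X : Type*} [TopologicalSpace X]

theorem IsArc.exists_param {A : Set X} (hA : IsArc A) :
    ∃ h : ℝ → X, Continuous h ∧ InjOn h (Icc 0 1) ∧ h '' Icc 0 1 = A := by
  obtain ⟨φ⟩ := hA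
  refine ⟨fun t ↦ φ.symm (projIcc 0 1 zero_le_one t),
    continuous_subtype_val.comp (φ.symm.continuous.comp continuous_projIcc),
    fun s hs t ht hst ↦ ?_, Subset.antisymm ?_ fun w hw ↦ ⟨φ ⟨w, hw⟩, (φ ⟨w, hw⟩).2, by simp⟩⟩
  · have := φ.symm.injective (Subtype.val_injective hst)
    rwa [projIcc_of_mem _ hs, projIcc_of_mem _ ht, Subtype.mk.injEq] at this
  · rintro _ ⟨t, -, rfl⟩
    exact (φ.symm _).2

theorem IsArc.isCompact {A : Set X} (hA : IsArc A) : IsCompact A := by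
  obtain ⟨h, hc, -, rfl⟩ := hA.exists_param
  exact isCompact_Icc.image hc

theorem IsArcEndpoint.eq_or_eq [T2Space X] {h : ℝ → X} (hc : Continuous h)
    (hi : InjOn h (Icc 0 1)) {p : X} (hp : IsArcEndpoint (h '' Icc 0 1) p) :
    p = h 0 ∨ p = h 1 := by
  obtain ⟨⟨s, hs, rfl⟩, hconn⟩ := hp
  by_contra! hne
  have hcover : h '' Icc 0 1 \ {h s} ⊆ h '' Icc 0 s ∪ h '' Icc s 1 := by
    rw [← image_union, Icc_union_Icc_eq_Icc hs.1 hs.2]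
    exact sdiff_subset
  obtain ⟨w, ⟨-, hws⟩, ⟨t, ht, rfl⟩, u, hu, hut⟩ :=
    isPreconnected_closed_iff.1 hconn.isPreconnected _ _
      (isCompact_Icc.image hc).isClosed (isCompact_Icc.image hc).isClosed hcover
      ⟨h 0, ⟨mem_image_of_mem h (by simp), hne.1.symm⟩, mem_image_of_mem h ⟨le_rfl, hs.1⟩⟩
      ⟨h 1, ⟨mem_image_of_mem h (by simp), hne.2.symm⟩, mem_image_of_mem h ⟨hs.2, le_rfl⟩⟩
  have hts : u = t := hi ⟨hs.1.trans hu.1, hu.2⟩ ⟨ht.1, ht.2.trans hs.2⟩ hut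
  exact hws (congrArg h (le_antisymm ht.2 (hts ▸ hu.1)))

theorem injOn_ite_le {Y : Type*} {I : Set ℝ} {s : ℝ} {γ δ : ℝ → Y} (hγ : InjOn γ (I ∩ Iic s))
    (hδ : InjOn δ (I ∩ Ioi s)) (hγδ : ∀ t ∈ I ∩ Iic s, ∀ u ∈ I ∩ Ioi s, γ t ≠ δ u) :
    InjOn (fun t ↦ if t ≤ s then γ t else δ t) I := by
  intro t ht u hu htu
  dsimp only at htu
  split_ifs at htu with hts hus hus
  · exact hγ ⟨ht, hts⟩ ⟨hu, hus⟩ htu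
  · exact absurd htu (hγδ t ⟨ht, hts⟩ u ⟨hu, not_le.1 hus⟩)
  · exact absurd htu.symm (hγδ u ⟨hu, hus⟩ t ⟨ht, not_le.1 hts⟩)
  · exact hδ ⟨ht, not_le.1 hts⟩ ⟨hu, not_le.1 hus⟩ htu

/-- The points `a` and `b` are joined by an arc inside `K`; the arc may degenerate to a point, so
that this is an equivalence relation on `K`. -/
def JoinedByArc (K : Set X) (a b : X) : Prop :=
  ∃ L : ℝ, ∃ γ : ℝ → X, 0 ≤ L ∧ Continuous γ ∧ InjOn γ (Icc 0 L) ∧ γ 0 = a ∧ γ L = b ∧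
    MapsTo γ (Icc 0 L) K

namespace JoinedByArc

variable {K : Set X} {a b c : X}

theorem refl (ha : a ∈ K) : JoinedByArc K a a :=
  ⟨0, fun _ ↦ a, le_rfl, continuous_const, by simp, rfl, rfl, fun _ _ ↦ ha⟩

theorem symm : JoinedByArc K a b → JoinedByArc K b a := by
  rintro ⟨L, γ, hL, hγ, hi, rfl, rfl, hK⟩
  have hflip : MapsTo (fun t ↦ L - t) (Icc 0 L) (Icc 0 L) :=
    fun t ht ↦ ⟨by linarith [ht.2], by linarith [ht.1]⟩
  exact ⟨L, fun t ↦ γ (L - t), hL, hγ.comp (continuous_const.sub continuous_id),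
    hi.comp sub_right_injective.injOn hflip, by simp, by simp, hK.comp hflip⟩

theorem trans [T2Space X] : JoinedByArc K a b → JoinedByArc K b c → JoinedByArc K a c := by
  rintro ⟨L, γ, hL, hγ, hγi, rfl, hγL, hγK⟩ ⟨M, δ, hM, hδ, hδi, rfl, rfl, hδK⟩
  -- Switch to the second arc at the first point where the two meet.
  have hcompact : IsCompact (Icc 0 L ∩ γ ⁻¹' (δ '' Icc 0 M)) :=
    isCompact_Icc.inter_right ((isCompact_Icc.image hδ).isClosed.preimage hγ)
  obtain ⟨s, ⟨hs, r, hr, hrs⟩, hfirst⟩ :=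
    hcompact.exists_isLeast ⟨L, ⟨hL, le_rfl⟩, 0, ⟨le_rfl, hM⟩, hγL.symm⟩
  have hleft : Icc 0 (s + (M - r)) ∩ Iic s ⊆ Icc 0 L := fun t ht ↦ ⟨ht.1.1, ht.2.trans hs.2⟩
  have hright : MapsTo (fun t ↦ t - s + r) (Icc 0 (s + (M - r)) ∩ Ioi s) (Icc 0 M) :=
    fun t ht ↦ ⟨by linarith [mem_Ioi.1 ht.2, hr.1], by linarith [ht.1.2]⟩
  refine ⟨s + (M - r), fun t ↦ if t ≤ s then γ t else δ (t - s + r), by linarith [hs.1, hr.2],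
    hγ.if_le (by fun_prop) continuous_id continuous_const ?_,
    injOn_ite_le (hγi.mono hleft) (hδi.comp (fun t _ u _ h ↦ by simpa using h) hright) ?_,
    if_pos hs.1, ?_, fun t ht ↦ ?_⟩
  · rintro t rfl
    simp [hrs]
  · intro t ht u hu htu
    have hst : t = s := le_antisymm ht.2 (hfirst ⟨hleft ht, _, hright hu, htu.symm⟩)
    have : r = u - s + r := hδi hr (hright hu) (by rw [hrs, ← htu, hst])
    linarith [mem_Ioi.1 hu.2]
  · rcases hr.2.eq_or_lt with rfl | hrM
    · simp [hrs]
    · simp [hrM]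
  · dsimp only
    split_ifs with hts
    · exact hγK (hleft ⟨ht, hts⟩)
    · exact hδK (hright ⟨ht, not_le.1 hts⟩)

end JoinedByArc

theorem IsArc.joinedByArc {K B : Set X} {v w : X} (hB : IsArc B) (hBK : B ⊆ K) (hv : v ∈ B)
    (hw : w ∈ B) : JoinedByArc K v w := by
  obtain ⟨h, hc, hi, rfl⟩ := hB.exists_param
  have of_le : ∀ s ∈ Icc (0 : ℝ) 1, ∀ t ∈ Icc (0 : ℝ) 1, s ≤ t → JoinedByArc K (h s) (h t) := by
    intro s hs t ht hst
    have hmaps : MapsTo (fun u ↦ s + u) (Icc 0 (t - s)) (Icc 0 1) :=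
      fun u hu ↦ ⟨by linarith [hs.1, hu.1], by linarith [ht.2, hu.2]⟩
    exact ⟨t - s, fun u ↦ h (s + u), sub_nonneg.2 hst, hc.comp (continuous_const_add s),
      hi.comp (add_right_injective s).injOn hmaps, by simp, by simp,
      fun u hu ↦ hBK (mem_image_of_mem h (hmaps hu))⟩
  obtain ⟨s, hs, rfl⟩ := hv
  obtain ⟨t, ht, rfl⟩ := hw
  exact (le_total s t).elim (of_le s hs t ht) fun hts ↦ (of_le t ht s hs hts).symm

theorem exists_isSimpleClosedCurve_of_injOn_Ico [T2Space X] {T : ℝ} (hT : 0 < T) {F : ℝ → X}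
    (hF : ContinuousOn F (Icc 0 T)) (hloop : F 0 = F T) (hi : InjOn F (Ico 0 T)) :
    ∃ S : Set X, IsSimpleClosedCurve S := by
  have : Fact (0 < T) := ⟨hT⟩
  have hrep : ∀ u : AddCircle T, ∃ t ∈ Ico 0 T, (t : AddCircle T) = u := fun u ↦ by
    have h := (AddCircle.equivIco T 0 u).2
    exact ⟨_, ⟨h.1, by simpa only [zero_add] using h.2⟩,
      (AddCircle.equivIco T 0).symm_apply_apply u⟩
  have hinj : Injective (AddCircle.liftIco T 0 F) := by
    intro u v huv
    obtain ⟨s, hs, rfl⟩ := hrep u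
    obtain ⟨t, ht, rfl⟩ := hrep v
    rw [AddCircle.liftIco_zero_coe_apply hs, AddCircle.liftIco_zero_coe_apply ht] at huv
    rw [hi hs ht huv]
  have hemb := ((AddCircle.liftIco_zero_continuous hloop hF).isClosedEmbedding hinj).isEmbedding
  exact ⟨_, ⟨hemb.toHomeomorph.symm.trans (AddCircle.homeomorphCircle hT.ne')⟩⟩

theorem exists_isSimpleClosedCurve_of_joinedByArc [T2Space X] {h : ℝ → X} {K : Set X}
    (hc : Continuous h) (hi : InjOn h (Icc 0 1)) (hK : ∀ t ∈ Icc (0 : ℝ) 1, h t ∈ K → t = 0 ∨ t = 1)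
    (hjoin : JoinedByArc K (h 1) (h 0)) : ∃ S : Set X, IsSimpleClosedCurve S := by
  obtain ⟨L, γ, hL, hγ, hγi, hγ0, hγL, hγK⟩ := hjoin
  have hL0 : 0 < L := hL.lt_of_ne fun h0 ↦
    zero_ne_one (hi (by simp) (by simp) (by rw [← hγL, ← hγ0, h0]))
  have hleft : Ico 0 (1 + L) ∩ Iic 1 ⊆ Icc 0 1 := fun t ht ↦ ⟨ht.1.1, ht.2⟩
  have hright : MapsTo (fun t ↦ t - 1) (Ico 0 (1 + L) ∩ Ioi 1) (Ioo 0 L) :=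
    fun t ht ↦ ⟨sub_pos.2 ht.2, by linarith [ht.1.2]⟩
  refine exists_isSimpleClosedCurve_of_injOn_Ico (T := 1 + L) (by linarith)
    (F := fun t ↦ if t ≤ 1 then h t else γ (t - 1))
    (hc.if_le (by fun_prop) continuous_id continuous_const ?_).continuousOn
    (by simp [hγL, hL0])
    (injOn_ite_le (hi.mono hleft)
      (hγi.comp sub_left_injective.injOn (hright.mono_right Ioo_subset_Icc_self)) ?_)
  · rintro t rfl
    simp [hγ0]
  · intro t ht u hu htu
    have hu' := hright hu
    have hinterior : ∀ r ∈ Icc 0 L, γ r = h t → u - 1 = r :=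
      fun r hr hrt ↦ hγi (Ioo_subset_Icc_self hu') hr (by rw [hrt, htu])
    rcases hK t (hleft ht) (htu ▸ hγK (Ioo_subset_Icc_self hu')) with rfl | rfl
    · exact hu'.2.ne (hinterior L ⟨hL, le_rfl⟩ hγL)
    · exact hu'.1.ne' (hinterior 0 ⟨le_rfl, hL⟩ hγ0)

theorem continuousOn_image_of_leftInvOn {Y : Type*} [TopologicalSpace Y] [T2Space X] {h : Y → X}
    {ρ : X → Y} {S : Set Y} (hS : IsCompact S) (hh : ContinuousOn h S) (hρ : LeftInvOn ρ h S) :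
    ContinuousOn ρ (h '' S) := by
  refine continuousOn_iff_isClosed.2 fun C hC ↦
    ⟨h '' (S ∩ C), ((hS.inter_right hC).image_of_continuousOn (hh.mono inter_subset_left)).isClosed,
      Subset.antisymm ?_ ?_⟩
  · rintro _ ⟨hC, y, hy, rfl⟩
    exact ⟨⟨y, ⟨hy, hρ hy ▸ hC⟩, rfl⟩, y, hy, rfl⟩
  · rintro _ ⟨⟨y, ⟨hy, hyC⟩, rfl⟩, hyS⟩
    exact ⟨by rwa [mem_preimage, hρ hy], hyS⟩

theorem exists_coord_of_isClosed_sides [T2Space X] {h : ℝ → X} {K₀ K₁ : Set X} (hc : Continuous h)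
    (hi : InjOn h (Icc 0 1)) (hK₀ : IsClosed K₀) (hK₁ : IsClosed K₁) (hdisj : Disjoint K₀ K₁)
    (h0 : ∀ t ∈ Icc (0 : ℝ) 1, h t ∈ K₀ → t = 0) (h1 : ∀ t ∈ Icc (0 : ℝ) 1, h t ∈ K₁ → t = 1)
    (hcover : K₀ ∪ K₁ ∪ h '' Icc 0 1 = univ) :
    ∃ ρ : X → ℝ, Continuous ρ ∧ EqOn ρ 0 K₀ ∧ EqOn ρ 1 K₁ ∧ LeftInvOn ρ h (Icc 0 1) := by
  classical
  let ρ : X → ℝ := K₀.piecewise 0 (K₁.piecewise 1 (invFunOn h (Icc 0 1)))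
  have hρ0 : EqOn ρ 0 K₀ := piecewise_eqOn _ _ _
  have hρ1 : EqOn ρ 1 K₁ := fun w hw ↦ by
    simp only [ρ, piecewise_eq_of_notMem _ _ _ (hdisj.notMem_of_mem_right hw),
      piecewise_eq_of_mem _ _ _ hw]
  have hρh : LeftInvOn ρ h (Icc 0 1) := by
    intro t ht
    by_cases ht0 : h t ∈ K₀
    · rw [hρ0 ht0, h0 t ht ht0, Pi.zero_apply]
    by_cases ht1 : h t ∈ K₁
    · rw [hρ1 ht1, h1 t ht ht1, Pi.one_apply]
    simp only [ρ, piecewise_eq_of_notMem _ _ _ ht0, piecewise_eq_of_notMem _ _ _ ht1]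
    exact hi.leftInvOn_invFunOn ht
  have hρ0c : ContinuousOn ρ K₀ := continuousOn_const.congr hρ0
  have hρ1c : ContinuousOn ρ K₁ := continuousOn_const.congr hρ1
  have hρhc := continuousOn_image_of_leftInvOn isCompact_Icc hc.continuousOn hρh
  refine ⟨ρ, continuousOn_univ.1 (hcover ▸ ?_), hρ0, hρ1, hρh⟩
  exact (hρ0c.union_of_isClosed hρ1c hK₀ hK₁).union_of_isClosed hρhc (hK₀.union hK₁)
    (isCompact_Icc.image hc).isClosed

theorem exists_edge_of_isClosed_sides [T2Space X] {h : ℝ → X} {K₀ K₁ : Set X} (hc : Continuous h)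
    (hi : InjOn h (Icc 0 1)) (hK₀ : IsClosed K₀) (hK₁ : IsClosed K₁) (hdisj : Disjoint K₀ K₁)
    (h0 : ∀ t ∈ Icc (0 : ℝ) 1, h t ∈ K₀ → t = 0) (h1 : ∀ t ∈ Icc (0 : ℝ) 1, h t ∈ K₁ → t = 1)
    (hcover : K₀ ∪ K₁ ∪ h '' Icc 0 1 = univ) : ∃ e : Edge X, e.point = h := by
  obtain ⟨ρ, hρ, hρ0, hρ1, hρh⟩ :=
    exists_coord_of_isClosed_sides hc hi hK₀ hK₁ hdisj h0 h1 hcover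
  have hcases (w : X) : ρ w = 0 ∨ ρ w = 1 ∨ w ∈ h '' Icc 0 1 := by
    rcases hcover.ge (mem_univ w) with (hw | hw) | hw
    exacts [.inl (hρ0 hw), .inr (.inl (hρ1 hw)), .inr (.inr hw)]
  refine ⟨⟨h, ρ, hc, hρ, fun w ↦ ?_, fun t ht ↦ hρh ht, fun w hw ↦ ?_⟩, rfl⟩
  · rcases hcases w with hw | hw | ⟨t, ht, rfl⟩
    · simp [hw]
    · simp [hw]
    · rwa [hρh ht]
  · rcases hcases w with h0 | h1 | ⟨t, ht, rfl⟩
    · exact absurd h0 hw.1.ne'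
    · exact absurd h1 hw.2.ne
    · rw [hρh ht]

theorem isClosed_of_subset_sUnion {ℬ : Set (Set X)} {S : Set X} (hfin : ℬ.Finite)
    (hclosed : ∀ B ∈ ℬ, IsClosed B) (hS : S ⊆ ⋃₀ ℬ)
    (hsat : ∀ B ∈ ℬ, (B ∩ S).Nonempty → B ⊆ S) : IsClosed S := by
  have hunion : S = ⋃₀ {B ∈ ℬ | B ⊆ S} := by
    refine Subset.antisymm (fun w hw ↦ ?_) (sUnion_subset fun B hB ↦ hB.2)
    obtain ⟨B, hB, hwB⟩ := hS hw
    exact ⟨B, ⟨hB, hsat B hB ⟨w, hwB, hw⟩⟩, hwB⟩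
  rw [hunion, sUnion_eq_biUnion]
  exact (hfin.subset (sep_subset _ _)).isClosed_biUnion fun B hB ↦ hclosed B hB.1

theorem exists_edge_of_saturated [T2Space X] {h : ℝ → X} {ℬ : Set (Set X)} {K : Set X}
    (hc : Continuous h) (hi : InjOn h (Icc 0 1)) (hfin : ℬ.Finite)
    (hclosed : ∀ B ∈ ℬ, IsClosed B) (hcover : h '' Icc 0 1 ∪ ⋃₀ ℬ = univ)
    (hends : ∀ t ∈ Icc (0 : ℝ) 1, h t ∈ ⋃₀ ℬ → t = 0 ∨ t = 1)
    (hsat : ∀ B ∈ ℬ, (B ∩ K).Nonempty → B ⊆ K) (h0 : h 0 ∈ K) (h1 : h 1 ∉ K) :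
    ∃ e : Edge X, e.point = h := by
  have hin : IsClosed (⋃₀ ℬ ∩ K) :=
    isClosed_of_subset_sUnion hfin hclosed inter_subset_left fun B hB ⟨w, hw, hwK⟩ ↦
      subset_inter (subset_sUnion_of_mem hB) (hsat B hB ⟨w, hw, hwK.2⟩)
  have hout : IsClosed (⋃₀ ℬ \ K) :=
    isClosed_of_subset_sUnion hfin hclosed sdiff_subset fun B hB ⟨w, hw, hwK⟩ v hv ↦
      ⟨⟨B, hB, hv⟩, fun hvK ↦ hwK.2 (hsat B hB ⟨v, hv, hvK⟩ hw)⟩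
  refine exists_edge_of_isClosed_sides (K₀ := insert (h 0) (⋃₀ ℬ ∩ K))
    (K₁ := insert (h 1) (⋃₀ ℬ \ K)) hc hi (isClosed_singleton.union hin)
    (isClosed_singleton.union hout) (disjoint_left.2 ?_) ?_ ?_ ?_
  · rintro w (rfl | hw) (hw' | hw')
    · exact h1 (hw' ▸ h0)
    · exact hw'.2 h0
    · exact h1 (hw' ▸ hw.2)
    · exact hw'.2 hw.2
  · rintro t ht (hw | hw)
    · exact hi ht (by simp) hw
    · exact (hends t ht hw.1).resolve_right (by rintro rfl; exact h1 hw.2)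
  · rintro t ht (hw | hw)
    · exact hi ht (by simp) hw
    · exact (hends t ht hw.1).resolve_left (by rintro rfl; exact hw.2 h0)
  · refine eq_univ_of_forall fun w ↦ ?_
    rcases hcover.ge (mem_univ w) with hw | hw
    · exact .inr hw
    · exact .inl ((em (w ∈ K)).imp (fun hK ↦ .inr ⟨hw, hK⟩) fun hK ↦ .inr ⟨hw, hK⟩)

theorem IsArc.exists_edge [T2Space X] {A : Set X} {ℬ : Set (Set X)} (hA : IsArc A)
    (hfin : ℬ.Finite) (hℬ : ∀ B ∈ ℬ, IsArc B) (hcover : A ∪ ⋃₀ ℬ = univ)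
    (hend : ∀ p ∈ A ∩ ⋃₀ ℬ, IsArcEndpoint A p) (hcurve : ∀ S : Set X, ¬ IsSimpleClosedCurve S) :
    ∃ e : Edge X, e.point '' Icc 0 1 = A := by
  obtain ⟨h, hc, hi, rfl⟩ := hA.exists_param
  have hends : ∀ t ∈ Icc (0 : ℝ) 1, h t ∈ ⋃₀ ℬ → t = 0 ∨ t = 1 := fun t ht htB ↦
    ((hend _ ⟨mem_image_of_mem h ht, htB⟩).eq_or_eq hc hi).imp (hi ht (by simp)) (hi ht (by simp))
  -- One side of the edge consists of what `h 0` can reach without running through `A`.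
  let K : Set X := insert (h 0) (⋃₀ ℬ)
  have h1 : ¬ JoinedByArc K (h 0) (h 1) := fun hjoin ↦
    (exists_isSimpleClosedCurve_of_joinedByArc hc hi (fun t ht htK ↦
      htK.elim (fun h0 ↦ .inl (hi ht (by simp) h0)) (hends t ht)) hjoin.symm).elim hcurve
  have hsat : ∀ B ∈ ℬ, (B ∩ {w | JoinedByArc K (h 0) w}).Nonempty →
      B ⊆ {w | JoinedByArc K (h 0) w} := fun B hB ⟨v, hv, hvK⟩ w hw ↦
    hvK.trans ((hℬ B hB).joinedByArc ((subset_sUnion_of_mem hB).trans (subset_insert _ _)) hv hw)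
  obtain ⟨e, rfl⟩ := exists_edge_of_saturated hc hi hfin (fun B hB ↦ (hℬ B hB).isCompact.isClosed)
    hcover hends hsat (.refl (mem_insert _ _)) h1
  exact ⟨e, rfl⟩

/-- A *forest* is a finite union of arcs, any two of which meet at most in their endpoints, that
contains no simple closed curve. Trees are the connected forests. -/
def IsForest (X : Type*) [TopologicalSpace X] : Prop :=
  (∃ 𝒜 : Finset (Set X), (∀ A ∈ 𝒜, IsArc A) ∧ ⋃₀ (𝒜 : Set (Set X)) = univ ∧
    ∀ A ∈ 𝒜, ∀ B ∈ 𝒜, A ≠ B → ∀ p ∈ A ∩ B, IsArcEndpoint A p ∧ IsArcEndpoint B p) ∧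
  ∀ S : Set X, ¬ IsSimpleClosedCurve S

theorem IsForest.compactSpace (hX : IsForest X) : CompactSpace X := by
  obtain ⟨⟨𝒜, harc, hcover, -⟩, -⟩ := hX
  exact ⟨hcover ▸ 𝒜.finite_toSet.isCompact_sUnion fun A hA ↦ (harc A hA).isCompact⟩

theorem IsForest.exists_isEdgeSystem [T2Space X] (hX : IsForest X) :
    ∃ 𝓔 : Set (Edge X), IsEdgeSystem 𝓔 := by
  obtain ⟨⟨𝒜, harc, hcover, hend⟩, hcurve⟩ := hX
  have hedge : ∀ A : 𝒜, ∃ e : Edge X, e.point '' Icc 0 1 = A := fun ⟨A, hA⟩ ↦ by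
    refine (harc A hA).exists_edge (ℬ := (𝒜 : Set (Set X)) \ {A})
      (𝒜.finite_toSet.subset sdiff_subset) (fun B hB ↦ harc B hB.1) ?_ ?_ hcurve
    · rw [← sUnion_insert, insert_sdiff_singleton, insert_eq_of_mem (Finset.mem_coe.2 hA), hcover]
    · rintro p ⟨hpA, B, ⟨hB, hBA⟩, hpB⟩
      exact (hend A hA B hB (Ne.symm hBA) p ⟨hpA, hpB⟩).1
  choose e he using hedge
  refine ⟨range e ∪ range fun A ↦ (e A).rev, (finite_range _).union (finite_range _),
    fun w ↦ ?_, ?_⟩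
  · obtain ⟨A, hA, hw⟩ := hcover.ge (mem_univ w)
    exact ⟨e ⟨A, hA⟩, .inl (mem_range_self _), (he ⟨A, hA⟩).ge hw⟩
  · rintro _ (⟨A, rfl⟩ | ⟨A, rfl⟩)
    · exact .inr ⟨A, rfl⟩
    · exact .inl ⟨A, (e A).rev_rev.symm⟩

end Forest

theorem omegaLimit_infinite_of_chainRecurrent_not_periodic_general {X : Type*} [MetricSpace X]
    (hX : IsForest X) (f : X → X) (hf : Continuous f) (h0 : topEntropy f = 0)
    {x : X} (hx : x ∈ chainRecurrentSet f) (hxp : x ∉ Function.periodicPts f) :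
    (omegaLimitSet f x).Infinite := by
  have := hX.compactSpace
  obtain ⟨𝓔, h𝓔⟩ := hX.exists_isEdgeSystem
  by_contra hfin
  obtain ⟨k, hk, p, hp, hlim⟩ := exists_tendsto_iterate_of_finite_omegaLimitSet hf
    (not_infinite.1 hfin)
  have hper : x ∉ periodicPts f^[k] := fun ⟨n, hn, hxn⟩ ↦
    hxp ⟨k * n, Nat.mul_pos hk hn, by rwa [IsPeriodicPt, iterate_mul]⟩
  have hrec : x ∈ chainRecurrentSet f^[k] :=
    chainRecurrentSet_subset_iterate (CompactSpace.uniformContinuous_of_continuous hf) k hx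
  have hhorseshoe : HasHorseshoe f^[k] :=
    hasHorseshoe_of_mem_chainRecurrentSet h𝓔 (hf.iterate k) hp hrec hper hlim
  exact (hhorseshoe.of_iterate hk).topEntropy_pos.ne' h0

/-- For a zero entropy tree map, every non-periodic chain recurrent point
has an infinite ω-limit set. -/
theorem omegaLimit_infinite_of_chainRecurrent_not_periodic {X : Type*} [MetricSpace X]
    (hX : IsTree X) (f : X → X) (hf : Continuous f) (h0 : topEntropy f = 0)
    {x : X} (hx : x ∈ chainRecurrentSet f) (hxp : x ∉ Function.periodicPts f) :
    (omegaLimitSet f x).Infinite :=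
  omegaLimit_infinite_of_chainRecurrent_not_periodic_general hX.2.2 f hf h0 hx hxp
end

section
/- Let X be a tree and let f : X → X be a continuous map with zero topological entropy. Let x be a chain recurrent point of f that is not periodic, and let I be a periodic arc of f such that ω_f(x) ⊆ Orb_f(I). Then x ∈ Orb_f(I). -/
open Set Filter Topology Function
open scoped ENNReal

/-!
Passing to `g = f^[s]`, the orbit of `x` is attracted by one component `K` of `Orb_f(I)`. Root the
tree at `K`, that is, put `u ≤ v` when every subtree containing `K` and `v` contains `u`; finitely
many arcs cover the tree, so antichains have bounded size.

Suppose `x ∉ K`. As `x` is chain recurrent, there are `ε`-chains from `K` to `x`. Reading them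
backwards, a compactness argument based on the bounded size of antichains produces preimages `a`
of `x` and `a' ≤ a` of `a` under iterates of `g`: an iterate of `g` pushes `a'` away from `K` to
`a`, although the orbit of `a` is attracted by `K`. Such a configuration forces a horseshoe for a
further iterate. If the hull of `a` and some `g^n(a)` meets `K`, a preimage `y` of `a` cuts the
segment from `K` to `a` into two pieces, each of which is mapped across the whole segment.
Otherwise all iterates of `a` lie in the same branch, and eventually below `a`; if `c` is the
largest of these late iterates, the segment from `c` to `a` is cut in the same way. A horseshoe
gives positive entropy.
-/

section Entropy

theorem exists_cover_seqCoverCountOn {X : Type*} (f : X → X) (Y : Set X) (a : ℕ → ℕ)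
    {𝒰 : Finset (Set X)} (h𝒰 : univ ⊆ ⋃₀ (𝒰 : Set (Set X))) (n : ℕ) :
    ∃ c : Fin (seqCoverCountOn f Y a 𝒰 n) → Fin n → Set X, (∀ j i, c j i ∈ 𝒰) ∧
      Y ⊆ ⋃ j, ⋂ i, f^[a i.1] ⁻¹' c j i := by
  classical
  suffices h : Set.Nonempty {m | ∃ c : Fin m → Fin n → Set X, (∀ j i, c j i ∈ 𝒰) ∧
      Y ⊆ ⋃ j, ⋂ i, f^[a i.1] ⁻¹' c j i} from Nat.sInf_mem h
  let e := Fintype.equivFin (Fin n → 𝒰)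
  refine ⟨_, fun j i => e.symm j i, fun j i => (e.symm j i).2, fun y _ => ?_⟩
  choose U hU hyU using fun x => h𝒰 (mem_univ x)
  simp only [mem_iUnion, mem_iInter, mem_preimage]
  exact ⟨e fun i => ⟨U (f^[a i] y), hU _⟩, fun i => by simpa using hyU (f^[a i] y)⟩

theorem seqCoverCountOn_le {X : Type*} {f : X → X} {Y : Set X} {a : ℕ → ℕ}
    {𝒰 : Finset (Set X)} {n m : ℕ} (c : Fin m → Fin n → Set X) (hc : ∀ j i, c j i ∈ 𝒰)
    (hY : Y ⊆ ⋃ j, ⋂ i, f^[a i.1] ⁻¹' c j i) : seqCoverCountOn f Y a 𝒰 n ≤ m :=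
  Nat.sInf_le ⟨c, hc, hY⟩

theorem card_le_seqCoverCountOn {X ι : Type*} [Fintype ι] {f : X → X} {Y : Set X} {a : ℕ → ℕ}
    {𝒰 : Finset (Set X)} (h𝒰 : univ ⊆ ⋃₀ (𝒰 : Set (Set X))) {n : ℕ} (z : ι → X)
    (hzY : ∀ s, z s ∈ Y)
    (hz : ∀ s t, (∀ i < n, ∃ U ∈ 𝒰, f^[a i] (z s) ∈ U ∧ f^[a i] (z t) ∈ U) → s = t) :
    Fintype.card ι ≤ seqCoverCountOn f Y a 𝒰 n := by
  obtain ⟨c, hc, hcover⟩ := exists_cover_seqCoverCountOn f Y a h𝒰 n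
  have hmem (s : ι) : ∃ j, ∀ i : Fin n, f^[a i] (z s) ∈ c j i := by
    simpa only [mem_iUnion, mem_iInter, mem_preimage] using hcover (hzY s)
  choose j hj using hmem
  have hinj : Injective j := fun s t hst =>
    hz s t fun i hi => ⟨c (j s) ⟨i, hi⟩, hc _ _, hj s ⟨i, hi⟩, hst ▸ hj t ⟨i, hi⟩⟩
  simpa using Fintype.card_le_of_injective j hinj

theorem seqCoverCountOn_iterate_le {X : Type*} (f : X → X) {𝒰 : Finset (Set X)}
    (h𝒰 : univ ⊆ ⋃₀ (𝒰 : Set (Set X))) {t : ℕ} (ht : 0 < t) (n : ℕ) :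
    seqCoverCountOn f^[t] univ id 𝒰 n ≤ seqCoverCountOn f univ id 𝒰 (t * n) := by
  obtain ⟨c, hc, hcover⟩ := exists_cover_seqCoverCountOn f univ id h𝒰 (t * n)
  refine seqCoverCountOn_le
    (fun j i => c j ⟨t * i, Nat.mul_lt_mul_of_pos_left i.2 ht⟩) (fun j i => hc _ _) fun x hx => ?_
  obtain ⟨j, hj⟩ := mem_iUnion.1 (hcover hx)
  refine mem_iUnion.2 ⟨j, mem_iInter.2 fun i => ?_⟩
  simpa only [id, mem_preimage, ← iterate_mul] using mem_iInter.1 hj ⟨t * i, _⟩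

variable {X : Type*} [TopologicalSpace X]

theorem limsup_log_seqCoverCountOn_le_topEntropy (f : X → X) {𝒰 : Finset (Set X)}
    (h𝒰 : IsOpenCoverOn univ 𝒰) :
    limsup (fun n : ℕ => ENNReal.ofReal (Real.log (seqCoverCountOn f univ id 𝒰 n) / n)) atTop
      ≤ topEntropy f :=
  le_iSup₂_of_le 𝒰 h𝒰 le_rfl

theorem topEntropy_iterate_le (f : X → X) {t : ℕ} (ht : 0 < t) :
    topEntropy f^[t] ≤ t * topEntropy f := by
  refine iSup₂_le fun 𝒰 h𝒰 => ?_
  let u (n : ℕ) := ENNReal.ofReal (Real.log (seqCoverCountOn f univ id 𝒰 n) / n)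
  have hle (n : ℕ) : ENNReal.ofReal (Real.log (seqCoverCountOn f^[t] univ id 𝒰 n) / n)
      ≤ t * u (t * n) := by
    rw [← ENNReal.ofReal_natCast, ← ENNReal.ofReal_mul t.cast_nonneg]
    refine ENNReal.ofReal_le_ofReal ?_
    rw [Nat.cast_mul, mul_div_assoc', mul_div_mul_left _ _ (by positivity)]
    gcongr ?_ / _
    rcases Nat.eq_zero_or_pos (seqCoverCountOn f^[t] univ id 𝒰 n) with h | h
    · simpa [h] using Real.log_natCast_nonneg _
    · exact Real.log_le_log (by exact_mod_cast h)
        (by exact_mod_cast seqCoverCountOn_iterate_le f h𝒰.2 ht n)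
  calc limsup (fun n : ℕ =>
        ENNReal.ofReal (Real.log (seqCoverCountOn f^[t] univ id 𝒰 n) / n)) atTop
      ≤ limsup (fun n => t * u (t * n)) atTop := limsup_le_limsup (.of_forall hle)
    _ = t * limsup (u ∘ (t * ·)) atTop := ENNReal.limsup_const_mul_of_ne_top (by simp)
    _ ≤ t * limsup u atTop := by
        gcongr
        exact limsup_le_limsup_of_le (tendsto_id.const_mul_atTop' ht)
    _ ≤ t * topEntropy f := by
        gcongr
        exact limsup_log_seqCoverCountOn_le_topEntropy f h𝒰

theorem topEntropy_iterate_eq_zero {f : X → X} (h : topEntropy f = 0) {t : ℕ} (ht : 0 < t) :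
    topEntropy f^[t] = 0 := by
  simpa [h] using topEntropy_iterate_le f ht

theorem exists_itinerary {Z ι : Type*} {g : Z → Z} {S : Set Z} {H : ι → Set Z}
    (hS : S.Nonempty) (hH : ∀ i, S ⊆ g '' (S ∩ H i)) (n : ℕ) (s : ℕ → ι) :
    ∃ z ∈ S, ∀ i < n, g^[i] z ∈ H (s i) := by
  induction n generalizing s with
  | zero => exact hS.imp fun z hz => ⟨hz, by simp⟩
  | succ n ih =>
    obtain ⟨z, hz, hs⟩ := ih fun i => s (i + 1)
    obtain ⟨w, ⟨hwS, hwH⟩, rfl⟩ := hH (s 0) hz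
    refine ⟨w, hwS, fun i hi => ?_⟩
    cases i with
    | zero => exact hwH
    | succ i => exact hs i (by lia)

theorem exists_isOpenCoverOn_of_pairwise_disjoint {ι : Type*} [Finite ι] [Nonempty ι]
    {H : ι → Set X} (hcl : ∀ i, IsClosed (H i)) (hdisj : Pairwise (Disjoint on H)) :
    ∃ 𝒰 : Finset (Set X), IsOpenCoverOn univ 𝒰 ∧
      ∀ U ∈ 𝒰, ∀ i j, (U ∩ H i).Nonempty → (U ∩ H j).Nonempty → i = j := by
  let U (i : ι) : Set X := (⋃ j ≠ i, H j)ᶜ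
  have eq_of_meet {i j : ι} (h : (U i ∩ H j).Nonempty) : j = i := by
    obtain ⟨x, hxU, hx⟩ := h
    by_contra hne
    exact hxU (mem_biUnion hne hx)
  refine ⟨(finite_range U).toFinset, ⟨?_, fun x _ => ?_⟩, ?_⟩
  · simp only [Finite.mem_toFinset, forall_mem_range]
    exact fun i => ((toFinite _).isClosed_biUnion fun j _ => hcl j).isOpen_compl
  · rw [Finite.coe_toFinset, sUnion_range, mem_iUnion]
    by_cases hx : ∃ i, x ∈ H i
    · obtain ⟨i, hi⟩ := hx
      refine ⟨i, fun hmem => ?_⟩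
      obtain ⟨j, hj, hxj⟩ := mem_iUnion₂.1 hmem
      exact (hdisj hj).le_bot ⟨hxj, hi⟩
    · refine ⟨Classical.arbitrary ι, fun hmem => hx ?_⟩
      obtain ⟨j, -, hj⟩ := mem_iUnion₂.1 hmem
      exact ⟨j, hj⟩
  · simp only [Finite.mem_toFinset, forall_mem_range]
    exact fun k i j hi hj => (eq_of_meet hi).trans (eq_of_meet hj).symm

theorem log_card_le_topEntropy {ι : Type*} [Fintype ι] [Nonempty ι] {g : X → X} {S : Set X}
    {H : ι → Set X} (hcl : ∀ i, IsClosed (H i)) (hdisj : Pairwise (Disjoint on H))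
    (hS : S.Nonempty) (hH : ∀ i, S ⊆ g '' (S ∩ H i)) :
    ENNReal.ofReal (Real.log (Fintype.card ι)) ≤ topEntropy g := by
  classical
  obtain ⟨𝒰, h𝒰, hmeet⟩ := exists_isOpenCoverOn_of_pairwise_disjoint hcl hdisj
  have hcount (n : ℕ) : Fintype.card ι ^ n ≤ seqCoverCountOn g univ id 𝒰 n := by
    have hpt (s : Fin n → ι) : ∃ z, ∀ i : Fin n, g^[i] z ∈ H (s i) := by
      obtain ⟨z, -, hz⟩ := exists_itinerary hS hH n fun i =>
        if h : i < n then s ⟨i, h⟩ else Classical.arbitrary ι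
      exact ⟨z, fun i => by simpa using hz i i.2⟩
    choose z hz using hpt
    rw [← Fintype.card_fin n, ← Fintype.card_fun, Fintype.card_fin]
    refine card_le_seqCoverCountOn h𝒰.2 z (fun _ => mem_univ _)
      fun s t hst => funext fun i => ?_
    obtain ⟨V, hV, hs, ht⟩ := hst i i.2
    exact hmeet V hV _ _ ⟨_, hs, hz s i⟩ ⟨_, ht, hz t i⟩
  refine le_trans ?_ (limsup_log_seqCoverCountOn_le_topEntropy g h𝒰)
  refine le_limsup_of_frequently_le (Eventually.frequently ?_)
  filter_upwards [eventually_gt_atTop 0] with n hn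
  refine ENNReal.ofReal_le_ofReal ((le_div_iff₀' (by exact_mod_cast hn)).2 ?_)
  rw [← Real.log_pow]
  exact Real.log_le_log (by have := Fintype.card_pos (α := ι); positivity)
    (by exact_mod_cast hcount n)

/-- Orbits ending outside the forward invariant set `M` never meet `M`, so it is enough to cover
the points outside `M`. The strips `P ∩ g⁻¹(P)` and `Q ∩ g⁻¹(Q)` are disjoint although `P` and `Q`
may share the point `y`, which is why `g^[2]` rather than `g` has a 2-symbol itinerary. -/
theorem topEntropy_ne_zero_of_horseshoe {g : X → X} (hg : Continuous g) {P Q M : Set X}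
    (hP : IsClosed P) (hQ : IsClosed Q) (hM : MapsTo g M M) {y : X} (hPQ : P ∩ Q ⊆ {y})
    (hy : g y ∉ P) (hgP : (P ∪ Q) \ M ⊆ g '' P) (hgQ : (P ∪ Q) \ M ⊆ g '' Q)
    (hne : ((P ∪ Q) \ M).Nonempty) : topEntropy g ≠ 0 := by
  intro h0
  have himage {R : Set X} (hR : R ⊆ P ∪ Q) (hgR : (P ∪ Q) \ M ⊆ g '' R) :
      (P ∪ Q) \ M ⊆ g^[2] '' (((P ∪ Q) \ M) ∩ (R ∩ g ⁻¹' R)) := by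
    intro w hw
    obtain ⟨v, hv, rfl⟩ := hgR hw
    have hvM : v ∉ M := fun h => hw.2 (hM h)
    obtain ⟨u, hu, rfl⟩ := hgR ⟨hR hv, hvM⟩
    exact ⟨u, ⟨⟨hR hu, fun h => hvM (hM h)⟩, hu, hv⟩, rfl⟩
  have hdisj : Disjoint (P ∩ g ⁻¹' P) (Q ∩ g ⁻¹' Q) := by
    refine disjoint_left.2 fun w hwP hwQ => hy ?_
    rw [← mem_singleton_iff.1 (hPQ ⟨hwP.1, hwQ.1⟩)]
    exact hwP.2
  have hlog := log_card_le_topEntropy (g := g^[2])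
    (H := fun b : Bool => bif b then P ∩ g ⁻¹' P else Q ∩ g ⁻¹' Q)
    (by rintro (_ | _); exacts [hQ.inter (hQ.preimage hg), hP.inter (hP.preimage hg)])
    (by rintro (_ | _) (_ | _) h; exacts [(h rfl).elim, hdisj.symm, hdisj, (h rfl).elim])
    hne
    (by rintro (_ | _); exacts [himage subset_union_right hgQ, himage subset_union_left hgP])
  rw [topEntropy_iterate_eq_zero h0 two_pos, nonpos_iff_eq_zero, ENNReal.ofReal_eq_zero] at hlog
  exact hlog.not_gt (Real.log_pos (by simp))

end Entropy

section HereditarilyUnicoherent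

variable {X : Type*} [TopologicalSpace X]

/-- A set is *hereditarily unicoherent* if any two of its closed connected subsets have a
connected (possibly empty) intersection. The subsets are required to be closed in the ambient
space, which is the intrinsic condition when `T` itself is closed. -/
def IsHereditarilyUnicoherent (T : Set X) : Prop :=
  ∀ ⦃C D : Set X⦄, C ⊆ T → D ⊆ T → IsClosed C → IsClosed D → IsPreconnected C →
    IsPreconnected D → IsPreconnected (C ∩ D)

/-- A space is hereditarily unicoherent if any two of its closed connected subsets have a
connected intersection. For a Peano continuum this says that the space is a dendrite. -/
class HereditarilyUnicoherentSpace (X : Type*) [TopologicalSpace X] : Prop where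
  isHereditarilyUnicoherent_univ : IsHereditarilyUnicoherent (univ : Set X)

theorem isPreconnected_inter_of_isClosed [HereditarilyUnicoherentSpace X] {C D : Set X}
    (hC : IsPreconnected C) (hD : IsPreconnected D) (hCc : IsClosed C) (hDc : IsClosed D) :
    IsPreconnected (C ∩ D) :=
  HereditarilyUnicoherentSpace.isHereditarilyUnicoherent_univ (subset_univ C) (subset_univ D)
    hCc hDc hC hD

theorem isPreconnected_sInter_of_directedOn [CompactSpace X] [T2Space X] {𝓕 : Set (Set X)}
    (hne : 𝓕.Nonempty) (hdir : DirectedOn (· ⊇ ·) 𝓕) (hcl : ∀ C ∈ 𝓕, IsClosed C)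
    (hconn : ∀ C ∈ 𝓕, IsPreconnected C) : IsPreconnected (⋂₀ 𝓕) := by
  rw [isPreconnected_iff_subset_of_fully_disjoint_closed (isClosed_sInter hcl)]
  intro A B hA hB hsub hAB
  obtain ⟨U, V, hU, hV, hAU, hBV, hUV⟩ := normal_separation hA hB hAB
  have := hne.to_subtype
  obtain ⟨⟨C, hC⟩, hCUV⟩ := exists_subset_nhds_of_isCompact' hdir.directed_val
    (fun C => (hcl C C.2).isCompact) (fun C => hcl C C.2) (U := U ∪ V) fun x hx =>
      (hU.union hV).mem_nhds (union_subset_union hAU hBV (hsub (sInter_eq_iInter ▸ hx)))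
  have hle : ⋂₀ 𝓕 ⊆ C := sInter_subset_of_mem hC
  exact ((hconn C hC).subset_or_subset hU hV hUV hCUV).imp
    (fun h => (hUV.mono (hle.trans h) hBV).subset_left_of_subset_union hsub)
    (fun h => (hUV.symm.mono (hle.trans h) hAU).subset_right_of_subset_union hsub)

theorem exists_isPreconnected_disjoint_closure [T2Space X] [LocallyConnectedSpace X] {u w : X}
    (h : w ≠ u) : ∃ V W : Set X, IsOpen V ∧ IsPreconnected V ∧ w ∈ V ∧ IsOpen W ∧ u ∈ W ∧
      Disjoint (closure V) W := by
  obtain ⟨V, W, hV, hW, hw, hu, hVW⟩ := t2_separation h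
  exact ⟨connectedComponentIn V w, W, hV.connectedComponentIn, isPreconnected_connectedComponentIn,
    mem_connectedComponentIn hw, hW, hu,
    (hVW.mono_left (connectedComponentIn_subset V w)).closure_left hW⟩

end HereditarilyUnicoherent

section ConnHull

variable {X : Type*} [TopologicalSpace X]

/-- The intersection of all closed connected sets containing `S`. In a tree, `connHull {a, b}` is
the arc from `a` to `b`, and `u ∈ connHull (insert v K)` says that `u` precedes `v` in the order
obtained by rooting the tree at the subtree `K`. -/
def connHull (S : Set X) : Set X :=
  ⋂₀ {C | IsClosed C ∧ IsPreconnected C ∧ S ⊆ C}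

theorem isClosed_connHull (S : Set X) : IsClosed (connHull S) :=
  isClosed_sInter fun _ hC => hC.1

theorem subset_connHull (S : Set X) : S ⊆ connHull S :=
  subset_sInter fun _ hC => hC.2.2

theorem connHull_subset {S C : Set X} (hC : IsClosed C) (hCc : IsPreconnected C) (hS : S ⊆ C) :
    connHull S ⊆ C :=
  sInter_subset_of_mem ⟨hC, hCc, hS⟩

theorem connHull_subset_connHull {S T : Set X} (h : S ⊆ connHull T) : connHull S ⊆ connHull T :=
  subset_sInter fun _ hC =>
    connHull_subset hC.1 hC.2.1 (h.trans (connHull_subset hC.1 hC.2.1 hC.2.2))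

theorem mem_connHull_insert (a : X) (K : Set X) : a ∈ connHull (insert a K) :=
  subset_connHull _ (mem_insert a K)

theorem subset_connHull_insert (a : X) (K : Set X) : K ⊆ connHull (insert a K) :=
  (subset_insert a K).trans (subset_connHull _)

theorem connHull_insert_subset {K : Set X} {u v : X} (h : u ∈ connHull (insert v K)) :
    connHull (insert u K) ⊆ connHull (insert v K) :=
  connHull_subset_connHull (insert_subset h (subset_connHull_insert v K))

variable [T2Space X] [PreconnectedSpace X]

/-- Antisymmetry of the order of the tree rooted at `K`. The set `S` of points that can be joined
to `K` without meeting `u` is open, and its only possible limit point outside `S` is `u`. -/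
theorem eq_of_mem_connHull_insert [LocallyConnectedSpace X] {K : Set X} (hK : IsClosed K)
    (hKc : IsConnected K) {u v : X} (hu : u ∉ K) (huv : u ∈ connHull (insert v K))
    (hvu : v ∈ connHull (insert u K)) : u = v := by
  let 𝓢 : Set (Set X) := {C | IsClosed C ∧ IsPreconnected C ∧ K ⊆ C ∧ u ∉ C}
  obtain ⟨k, hk⟩ := hKc.nonempty
  have hKS : K ⊆ ⋃₀ 𝓢 := subset_sUnion_of_mem ⟨hK, hKc.isPreconnected, subset_rfl, hu⟩
  have huS : u ∉ ⋃₀ 𝓢 := fun ⟨_, hC, huC⟩ => hC.2.2.2 huC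
  have hvS : v ∉ ⋃₀ 𝓢 := fun ⟨_, ⟨hC, hCc, hKC, huC⟩, hvC⟩ =>
    huC (connHull_subset hC hCc (insert_subset hvC hKC) huv)
  have hSc : IsPreconnected (⋃₀ 𝓢) :=
    isPreconnected_sUnion k _ (fun _ hC => hC.2.2.1 hk) fun _ hC => hC.2.1
  have hnhds {w : X} (hw : w ∈ closure (⋃₀ 𝓢)) (hwu : w ≠ u) : ⋃₀ 𝓢 ∈ 𝓝 w := by
    obtain ⟨V, W, hV, hVc, hwV, -, huW, hVW⟩ := exists_isPreconnected_disjoint_closure hwu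
    obtain ⟨z, hzV, C, ⟨hC, hCc, hKC, huC⟩, hzC⟩ := mem_closure_iff.1 hw V hV hwV
    have hCV : C ∪ closure V ∈ 𝓢 := ⟨hC.union isClosed_closure,
      hCc.union z hzC (subset_closure hzV) hVc.closure, hKC.trans subset_union_left,
      fun h => h.elim huC fun h => hVW.le_bot ⟨h, huW⟩⟩
    filter_upwards [hV.mem_nhds hwV] with z hz using ⟨_, hCV, .inr (subset_closure hz)⟩
  have hopen : IsOpen (⋃₀ 𝓢) := isOpen_iff_mem_nhds.2 fun w hw =>
    hnhds (subset_closure hw) (ne_of_mem_of_not_mem hw huS)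
  have huS' : u ∈ closure (⋃₀ 𝓢) := by
    by_contra hnot
    have hclosed : IsClosed (⋃₀ 𝓢) := isClosed_of_closure_subset fun w hw =>
      mem_of_mem_nhds (hnhds hw (ne_of_mem_of_not_mem hw hnot))
    exact huS (IsClopen.eq_univ ⟨hclosed, hopen⟩ ⟨k, hKS hk⟩ ▸ mem_univ u)
  by_contra hne
  have hv : v ∈ closure (⋃₀ 𝓢) :=
    connHull_subset isClosed_closure hSc.closure (insert_subset huS' (hKS.trans subset_closure)) hvu
  exact hvS (mem_of_mem_nhds (hnhds hv (Ne.symm hne)))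

theorem eq_of_mem_connHull_pair [LocallyConnectedSpace X] {a u v : X} (hu : u ≠ a)
    (huv : u ∈ connHull {v, a}) (hvu : v ∈ connHull {u, a}) : u = v :=
  eq_of_mem_connHull_insert isClosed_singleton isConnected_singleton hu huv hvu

variable [CompactSpace X] [HereditarilyUnicoherentSpace X]

theorem isPreconnected_connHull (S : Set X) : IsPreconnected (connHull S) := by
  refine isPreconnected_sInter_of_directedOn
    ⟨univ, isClosed_univ, isPreconnected_univ, subset_univ S⟩ ?_ (fun _ hC => hC.1)
    fun _ hC => hC.2.1
  rintro C ⟨hC, hCc, hSC⟩ D ⟨hD, hDc, hSD⟩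
  exact ⟨C ∩ D,
    ⟨hC.inter hD, isPreconnected_inter_of_isClosed hCc hDc hC hD, subset_inter hSC hSD⟩,
    inter_subset_left, inter_subset_right⟩

theorem connHull_insert_subset_union (K : Set X) (u a : X) :
    connHull (insert a K) ⊆ connHull (insert u K) ∪ connHull {u, a} := by
  refine connHull_subset ((isClosed_connHull _).union (isClosed_connHull _))
    ((isPreconnected_connHull _).union u (mem_connHull_insert u K) (mem_connHull_insert u {a})
      (isPreconnected_connHull _)) (insert_subset (.inr ?_) ?_)
  · exact subset_connHull _ (.inr rfl)
  · exact (subset_connHull_insert u K).trans subset_union_left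

theorem connHull_pair_subset_union {K : Set X} (hK : K.Nonempty) (u w : X) :
    connHull {u, w} ⊆ connHull (insert u K) ∪ connHull (insert w K) := by
  obtain ⟨k, hk⟩ := hK
  exact connHull_subset ((isClosed_connHull _).union (isClosed_connHull _))
    ((isPreconnected_connHull _).union k (subset_connHull_insert u K hk)
      (subset_connHull_insert w K hk) (isPreconnected_connHull _))
    (pair_subset (.inl (mem_connHull_insert u K)) (.inr (mem_connHull_insert w K)))

variable [LocallyConnectedSpace X]

theorem isClosed_setOf_mem_connHull_insert (K : Set X) :
    IsClosed {p : X × X | p.1 ∈ connHull (insert p.2 K)} := by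
  rw [← isOpen_compl_iff, isOpen_iff_mem_nhds]
  rintro ⟨y, b⟩ (hy : y ∉ connHull (insert b K))
  have hby : b ≠ y := fun h => hy (h ▸ mem_connHull_insert b K)
  obtain ⟨V, W, hV, hVc, hbV, hW, hyW, hVW⟩ := exists_isPreconnected_disjoint_closure hby
  filter_upwards [prod_mem_nhds
    (inter_mem (hW.mem_nhds hyW) ((isClosed_connHull _).isOpen_compl.mem_nhds hy))
    (hV.mem_nhds hbV)]
  rintro ⟨y', b'⟩ ⟨⟨hy'W, hy'⟩, hb'⟩ hmem
  have hsub : connHull (insert b' K) ⊆ connHull (insert b K) ∪ closure V :=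
    connHull_subset ((isClosed_connHull _).union isClosed_closure)
      ((isPreconnected_connHull _).union b (mem_connHull_insert b K) (subset_closure hbV)
        hVc.closure)
      (insert_subset (.inr (subset_closure hb'))
        ((subset_connHull_insert b K).trans subset_union_left))
  exact (hsub hmem).elim hy' fun h => hVW.le_bot ⟨h, hy'W⟩

theorem mem_connHull_insert_total {K : Set X} {u v a : X} (hu : u ∈ connHull (insert a K))
    (hv : v ∈ connHull (insert a K)) :
    u ∈ connHull (insert v K) ∨ v ∈ connHull (insert u K) := by
  rcases connHull_insert_subset_union K u a hv with h | hvua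
  · exact .inr h
  rcases connHull_insert_subset_union K v a hu with h | huva
  · exact .inl h
  rcases eq_or_ne u a with rfl | hua
  · exact .inr hv
  · rw [eq_of_mem_connHull_pair hua huva hvua]
    exact .inl (mem_connHull_insert v K)

theorem connHull_insert_inter_connHull_pair_subset {K : Set X} (hK : IsClosed K)
    (hKc : IsConnected K) {y a : X} (hy : y ∉ K) (hya : y ≠ a)
    (hle : y ∈ connHull (insert a K)) : connHull (insert y K) ∩ connHull {y, a} ⊆ {y} := by
  rintro w ⟨hwK, hwa⟩
  rcases connHull_insert_subset_union K w a hle with h | h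
  · exact (eq_of_mem_connHull_insert hK hKc hy h hwK).symm
  · exact (eq_of_mem_connHull_pair hya h hwa).symm

theorem mem_of_between_of_isPreconnected {K : Set X} (hK : IsClosed K) (hKc : IsConnected K)
    {u b a : X} (hb : b ∉ K) (hub : u ∈ connHull (insert b K)) (hba : b ∈ connHull (insert a K))
    {C : Set X} (hC : IsClosed C) (hCc : IsPreconnected C) (huC : u ∈ C) (haC : a ∈ C) : b ∈ C := by
  rcases connHull_insert_subset_union K u a hba with h | h
  · rwa [eq_of_mem_connHull_insert hK hKc hb h hub]
  · exact connHull_subset hC hCc (pair_subset huC haC) h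

end ConnHull

section AttractedOrbit

theorem sdiff_subset_image_iterate {X : Type*} {g : X → X} {D M : Set X} (hM : MapsTo g M M)
    (h : D \ M ⊆ g '' D) (n : ℕ) : D \ M ⊆ g^[n] '' D := by
  induction n with
  | zero => simp
  | succ n ih =>
    intro w hw
    obtain ⟨v, hv, rfl⟩ := ih hw
    obtain ⟨u, hu, rfl⟩ := h ⟨hv, fun hvM => hw.2 (hM.iterate n hvM)⟩
    exact ⟨u, hu, iterate_succ_apply g n u⟩

variable {X : Type*} [TopologicalSpace X]

theorem notMem_periodicPts_of_tendsto_nhdsSet [T1Space X] {g : X → X} {K : Set X} {a : X}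
    (ha : a ∉ K) (hlim : Tendsto (fun n => g^[n] a) atTop (𝓝ˢ K)) : a ∉ periodicPts g := by
  rintro ⟨n, hn, hper⟩
  have hne : ∀ᶠ k in atTop, g^[k] a ≠ a :=
    hlim (isOpen_compl_singleton.mem_nhdsSet.2 fun k hk (hka : k = a) => ha (hka ▸ hk))
  obtain ⟨N, hN⟩ := eventually_atTop.1 hne
  exact hN (n * N) (Nat.le_mul_of_pos_left N hn) (hper.mul_const N)

theorem connHull_insert_sdiff_subset {K C : Set X} (hK : IsClosed K) (hKc : IsPreconnected K)
    (hC : IsClosed C) (hCc : IsPreconnected C) (hCK : (C ∩ K).Nonempty) {a : X} (ha : a ∈ C) :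
    connHull (insert a K) \ K ⊆ C := by
  obtain ⟨k, hkC, hkK⟩ := hCK
  exact sdiff_subset_iff.2 <| union_comm K C ▸ connHull_subset (hC.union hK)
    (hCc.union k hkC hkK hKc) (insert_subset (.inl ha) subset_union_right)

theorem eventually_notMem_connHull_insert {X ι : Type*} [TopologicalSpace X] [CompactSpace X]
    [T2Space X] [PreconnectedSpace X] [HereditarilyUnicoherentSpace X] [LocallyConnectedSpace X]
    {K : Set X} (hK : IsClosed K) (hKc : IsPreconnected K) {z : X} (hz : z ∉ K) {l : Filter ι}
    {b : ι → X} (hb : Tendsto b l (𝓝ˢ K)) : ∀ᶠ n in l, z ∉ connHull (insert (b n) K) := by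
  have hclosed : IsClosed {c | z ∈ connHull (insert c K)} :=
    (isClosed_setOf_mem_connHull_insert K).preimage (by fun_prop : Continuous fun c => (z, c))
  refine hb (hclosed.isOpen_compl.mem_nhdsSet.2 fun k hk hzk => hz ?_)
  exact connHull_subset hK hKc (insert_subset hk subset_rfl) hzk

/-- The order obtained by rooting at `K` has width at most `L`: among any `L + 1` points, two are
comparable. The points are the first terms of a sequence, and need not be distinct. -/
def ConnHullWidthLE (K : Set X) (L : ℕ) : Prop :=
  ∀ v : ℕ → X, ∃ i j, i < j ∧ j ≤ L ∧
    (v i ∈ connHull (insert (v j) K) ∨ v j ∈ connHull (insert (v i) K))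

variable [CompactSpace X] [T2Space X] [PreconnectedSpace X] [HereditarilyUnicoherentSpace X]

theorem exists_branchPoint_notMem {K : Set X} (hK : K.Nonempty) {a b : X}
    (hab : Disjoint (connHull {a, b}) K) :
    ∃ z ∉ K, z ∈ connHull (insert a K) ∧ z ∈ connHull (insert b K) := by
  obtain ⟨z, hz, hza, hzb⟩ := isPreconnected_closed_iff.1 (isPreconnected_connHull {a, b})
    _ _ (isClosed_connHull (insert a K)) (isClosed_connHull (insert b K))
    (connHull_pair_subset_union hK a b)
    ⟨a, mem_connHull_insert a {b}, mem_connHull_insert a K⟩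
    ⟨b, subset_connHull _ (.inr rfl), mem_connHull_insert b K⟩
  exact ⟨z, fun hzK => hab.le_bot ⟨hz, hzK⟩, hza, hzb⟩

variable [LocallyConnectedSpace X]

theorem topEntropy_ne_zero_of_connHull_subset_image {h : X → X} (hh : Continuous h)
    {R M : Set X} (hR : IsClosed R) (hRc : IsConnected R) (hM : MapsTo h M M) {a y : X}
    (haM : a ∉ M) (hyR : y ∉ R) (hya : y ≠ a) (hle : y ∈ connHull (insert a R)) (hhy : h y = a)
    (himage : connHull (insert a R) \ M ⊆ h '' connHull (insert y R))
    (himage' : connHull (insert a R) \ M ⊆ h '' connHull {y, a}) : topEntropy h ≠ 0 := by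
  have hsub : connHull (insert y R) ∪ connHull {y, a} ⊆ connHull (insert a R) :=
    union_subset (connHull_insert_subset hle)
      (connHull_subset_connHull (pair_subset hle (mem_connHull_insert a R)))
  refine topEntropy_ne_zero_of_horseshoe hh (isClosed_connHull _) (isClosed_connHull _) hM
    (connHull_insert_inter_connHull_pair_subset hR hRc hyR hya hle) ?_
    ((sdiff_subset_sdiff_left hsub).trans himage) ((sdiff_subset_sdiff_left hsub).trans himage')
    ⟨a, .inr (subset_connHull _ (.inr rfl)), haM⟩
  rw [hhy]
  exact fun h => hya (eq_of_mem_connHull_insert hR hRc hyR hle h)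

/-- If `y` is an `n`-th preimage of `a` between `K` and `a`, then `g^[n]` maps both pieces
`connHull (insert y K)` and `connHull {y, a}` across the part of `connHull (insert a K)` outside
`K`, the second one because its image contains `a` and `g^[n] a`. -/
theorem topEntropy_iterate_ne_zero_of_connHull_pair_inter {g : X → X} (hg : Continuous g)
    {K : Set X} (hK : IsClosed K) (hKc : IsConnected K) {a a' : X}
    (ha' : a' ∈ connHull (insert a K)) (hga' : g a' = a)
    (hgK : MapsTo g K K) (ha : a ∉ K) {n : ℕ} (hne : g^[n] a ≠ a)
    (hn : (connHull {a, g^[n] a} ∩ K).Nonempty) :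
    topEntropy g^[n] ≠ 0 := by
  obtain ⟨k, hk⟩ := hKc.nonempty
  have hcover {h : X → X} (hh : Continuous h) {y : X} {D : Set X}
      (hD : IsClosed D) (hDc : IsPreconnected D) (hyD : y ∈ D) (hhy : h y = a)
      (hDK : (h '' D ∩ K).Nonempty) : connHull (insert a K) \ K ⊆ h '' D :=
    connHull_insert_sdiff_subset hK hKc.isPreconnected (hh.isClosedMap _ hD)
      (hDc.image _ hh.continuousOn) hDK ⟨y, hyD, hhy⟩
  have hmeet {h : X → X} (hhK : MapsTo h K K) (y : X) :
      (h '' connHull (insert y K) ∩ K).Nonempty :=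
    ⟨h k, mem_image_of_mem h (subset_connHull_insert y K hk), hhK hk⟩
  have hgn := hg.iterate n
  obtain ⟨y, hy, hya⟩ := sdiff_subset_image_iterate hgK
    (hcover hg (isClosed_connHull _) (isPreconnected_connHull _) ha' hga' (hmeet hgK a)) n
    ⟨mem_connHull_insert a K, ha⟩
  refine topEntropy_ne_zero_of_connHull_subset_image hgn hK hKc (hgK.iterate n) ha
    (fun hyK => ha (hya ▸ hgK.iterate n hyK)) (fun h => hne (h ▸ hya)) hy hya
    (hcover hgn (isClosed_connHull _) (isPreconnected_connHull _)
      (mem_connHull_insert y K) hya (hmeet (hgK.iterate n) y))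
    (hcover hgn (isClosed_connHull _) (isPreconnected_connHull _)
      (mem_connHull_insert y {a}) hya (hn.mono (inter_subset_inter_left K ?_)))
  exact connHull_subset (hgn.isClosedMap _ (isClosed_connHull _))
    ((isPreconnected_connHull _).image _ hgn.continuousOn)
    (pair_subset ⟨y, mem_connHull_insert y {a}, hya⟩
      (mem_image_of_mem _ (subset_connHull _ (.inr rfl))))

/-- The point `c = g^[m] a` separates `a` from all later iterates, so a connected set through a
preimage of `a` and through `c` has an image containing `connHull {a, c}`. Hence an `m`-th preimage
`y` of `a` in `connHull {a, c}` cuts this arc into the two pieces of a horseshoe. -/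
theorem topEntropy_iterate_ne_zero_of_forall_le {g : X → X} (hg : Continuous g)
    {K : Set X} (hK : IsClosed K) (hKc : IsConnected K) {a a' : X}
    (ha' : a' ∈ connHull (insert a K)) (hga' : g a' = a)
    (haper : a ∉ periodicPts g) {m : ℕ} (hm : 0 < m)
    (hmK : g^[m] a ∉ K) (hma : g^[m] a ∈ connHull (insert a K))
    (hma' : g^[m] a ∈ connHull (insert a' K))
    (hmax : ∀ n ≥ m, g^[n] a ∈ connHull (insert (g^[m] a) K)) : topEntropy g^[m] ≠ 0 := by
  set c := g^[m] a
  have haper {n : ℕ} (hn : 0 < n) : g^[n] a ≠ a := fun h => haper ⟨n, hn, h⟩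
  have hcover {h : X → X} (hh : Continuous h) {u v : X} {D : Set X} (hD : IsClosed D)
      (hDc : IsPreconnected D) (hu : u ∈ D) (hv : v ∈ D) (hhu : h u ∈ connHull (insert c K))
      (hhv : h v = a) : connHull {a, c} ⊆ h '' D := by
    have hDcl := hh.isClosedMap _ hD
    have hDconn := hDc.image _ hh.continuousOn
    have haD : a ∈ h '' D := ⟨v, hv, hhv⟩
    exact connHull_subset hDcl hDconn (pair_subset haD
      (mem_of_between_of_isPreconnected hK hKc hmK hhu hma hDcl hDconn (mem_image_of_mem h hu) haD))
  have ha'c : a' ∈ connHull {a, c} := by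
    rw [pair_comm]
    rcases connHull_insert_subset_union K c a ha' with h | h
    · exact eq_of_mem_connHull_insert hK hKc hmK hma' h ▸ mem_connHull_insert c {a}
    · exact h
  have hcpair (u : X) : c ∈ connHull {u, c} := subset_connHull _ (.inr rfl)
  have hgc : g c = g^[m + 1] a := (iterate_succ_apply' g m a).symm
  have hgmc : g^[m] c = g^[m + m] a := (iterate_add_apply g m m a).symm
  have hgm := hg.iterate m
  obtain ⟨y, hy, hya⟩ := sdiff_subset_image_iterate (mapsTo_empty g ∅)
    (sdiff_subset.trans (hcover hg (isClosed_connHull _) (isPreconnected_connHull _) (hcpair a)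
      ha'c (hgc ▸ hmax _ (by lia)) hga')) m ⟨mem_connHull_insert a {c}, notMem_empty a⟩
  have hyc : y ≠ c := fun h => haper (by lia : 0 < m + m) (hgmc ▸ h ▸ hya)
  refine topEntropy_ne_zero_of_connHull_subset_image hgm isClosed_singleton isConnected_singleton
    (mapsTo_empty _ ∅) (notMem_empty a) hyc (fun h => haper hm (h ▸ hya)) hy hya
    (sdiff_subset.trans (hcover hgm (isClosed_connHull _) (isPreconnected_connHull _) (hcpair y)
      (mem_connHull_insert y {c}) (hgmc ▸ hmax _ (by lia)) hya))
    (sdiff_subset.trans (hcover hgm (isClosed_connHull _) (isPreconnected_connHull _)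
      (subset_connHull _ (.inr rfl)) (mem_connHull_insert y {a}) (hmax m le_rfl) hya))

theorem eventually_mem_connHull_insert_of_width {K : Set X} (hK : IsClosed K)
    (hKc : IsPreconnected K) {L : ℕ} (hwidth : ConnHullWidthLE K L) {a : X} {b : ℕ → X}
    (hb : Tendsto b atTop (𝓝ˢ K))
    (hbranch : ∀ n, ∃ z ∉ K, z ∈ connHull (insert a K) ∧ z ∈ connHull (insert (b n) K)) :
    ∀ᶠ n in atTop, b n ∈ connHull (insert a K) := by
  by_contra hfreq
  choose β hβK hβa hβb using hbranch
  obtain ⟨φ, hφ, hφβ⟩ := exists_seq_of_forall_finset_exists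
    (fun n => b n ∉ connHull (insert a K)) (fun p q => β p ∉ connHull (insert (b q) K))
    fun s _ => by
      have hs : ∀ᶠ n in atTop, ∀ p ∈ s, β p ∉ connHull (insert (b n) K) :=
        s.eventually_all.2 fun p _ => eventually_notMem_connHull_insert hK hKc (hβK p) hb
      exact ((not_eventually.1 hfreq).and_eventually hs).exists
  obtain ⟨i, j, hij, -, h | h⟩ := hwidth (b ∘ φ)
  · exact hφβ i j hij (connHull_insert_subset h (hβb _))
  · rcases mem_connHull_insert_total (hβb _) h with h' | h'
    · exact hφβ i j hij h'
    · exact hφ j (connHull_insert_subset (hβa _) h')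

theorem exists_forall_mem_connHull_insert {K : Set X} (hK : IsClosed K) (hKc : IsPreconnected K)
    {a : X} {b : ℕ → X} (hb : Tendsto b atTop (𝓝ˢ K)) (hb0 : b 0 ∉ K)
    (hba : ∀ n, b n ∈ connHull (insert a K)) : ∃ m, ∀ n, b n ∈ connHull (insert (b m) K) := by
  obtain ⟨N, hN⟩ := eventually_atTop.1 (eventually_notMem_connHull_insert hK hKc hb0 hb)
  let r (u v : X) : Prop := u ∈ connHull (insert v K)
  have : IsTrans X r := ⟨fun _ _ _ huv hvw => connHull_insert_subset hvw huv⟩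
  have hdir : Directed r b := fun m n =>
    (mem_connHull_insert_total (hba m) (hba n)).elim
      (fun h => ⟨n, h, mem_connHull_insert _ K⟩) fun h => ⟨m, mem_connHull_insert _ K, h⟩
  obtain ⟨m, hm⟩ := hdir.finset_le (Finset.range (N + 1))
  refine ⟨m, fun n => ?_⟩
  rcases lt_or_ge n N with hn | hn
  · exact hm n (by simp; lia)
  · have h0 : b n ∈ connHull (insert (b 0) K) :=
      (mem_connHull_insert_total (hba 0) (hba n)).resolve_left (hN n hn)
    exact connHull_insert_subset (hm 0 (by simp)) h0

theorem topEntropy_ne_zero_of_tendsto_nhdsSet {g : X → X} (hg : Continuous g) {K : Set X}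
    (hK : IsClosed K) (hKc : IsConnected K) (hgK : MapsTo g K K) {L : ℕ}
    (hwidth : ConnHullWidthLE K L) {a a' : X} (ha : a ∉ K) (ha' : a' ∈ connHull (insert a K))
    (hga' : g a' = a) (hlim : Tendsto (fun n => g^[n] a) atTop (𝓝ˢ K)) : topEntropy g ≠ 0 := by
  intro h0
  have haper := notMem_periodicPts_of_tendsto_nhdsSet ha hlim
  have hdisj {n : ℕ} (hn : 0 < n) : Disjoint (connHull {a, g^[n] a}) K :=
    disjoint_iff_inter_eq_empty.2 <| not_nonempty_iff_eq_empty.1 fun hmeet =>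
      topEntropy_iterate_ne_zero_of_connHull_pair_inter hg hK hKc ha' hga' hgK ha
        (fun h => haper ⟨n, hn, h⟩) hmeet (topEntropy_iterate_eq_zero h0 hn)
  have hlim1 : Tendsto (fun n => g^[n + 1] a) atTop (𝓝ˢ K) := hlim.comp (tendsto_add_atTop_nat 1)
  have hle : ∀ᶠ n in atTop, g^[n + 1] a ∈ connHull (insert a K) :=
    eventually_mem_connHull_insert_of_width hK hKc.isPreconnected hwidth hlim1
      fun n => exists_branchPoint_notMem hKc.nonempty (hdisj n.succ_pos)
  have ha'K : a' ∉ K := fun h => ha (hga' ▸ hgK h)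
  obtain ⟨N, hN⟩ := eventually_atTop.1
    (hle.and (eventually_notMem_connHull_insert hK hKc.isPreconnected ha'K hlim1))
  have hnotK (n : ℕ) : g^[n + N + 1] a ∉ K := fun h =>
    (hdisj (Nat.succ_pos _)).le_bot ⟨subset_connHull _ (.inr rfl), h⟩
  obtain ⟨m, hm⟩ := exists_forall_mem_connHull_insert hK hKc.isPreconnected (a := a)
    (b := fun n => g^[n + N + 1] a) (hlim1.comp (tendsto_add_atTop_nat N)) (hnotK 0)
    fun n => (hN _ (Nat.le_add_left N n)).1
  obtain ⟨hma, hma'⟩ := hN _ (Nat.le_add_left N m)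
  refine topEntropy_iterate_ne_zero_of_forall_le hg hK hKc ha' hga' haper (Nat.succ_pos _)
    (hnotK m) hma ((mem_connHull_insert_total ha' hma).resolve_left hma') (fun n hn => ?_)
    (topEntropy_iterate_eq_zero h0 (Nat.succ_pos _))
  obtain ⟨k, rfl⟩ := Nat.exists_eq_add_of_le hn
  simpa only [show m + N + 1 + k = m + k + N + 1 by lia] using hm (m + k)

end AttractedOrbit

section PseudoOrbits

variable {X : Type*} [MetricSpace X]

theorem exists_forall_mem_connectedComponentIn_ball [CompactSpace X] [LocallyConnectedSpace X]
    {ε : ℝ} (hε : 0 < ε) :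
    ∃ δ > 0, ∀ u v : X, dist u v < δ → v ∈ connectedComponentIn (Metric.ball u ε) u := by
  obtain ⟨δ, hδ, hcover⟩ := lebesgue_number_lemma_of_metric (isCompact_univ (X := X))
    (c := fun p => connectedComponentIn (Metric.ball p (ε / 2)) p)
    (fun p => Metric.isOpen_ball.connectedComponentIn)
    fun p _ => mem_iUnion.2 ⟨p, mem_connectedComponentIn (Metric.mem_ball_self (half_pos hε))⟩
  refine ⟨δ, hδ, fun u v huv => ?_⟩
  obtain ⟨p, hp⟩ := hcover u (mem_univ u)
  have hup : u ∈ Metric.ball p (ε / 2) :=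
    connectedComponentIn_subset _ _ (hp (Metric.mem_ball_self hδ))
  refine isPreconnected_connectedComponentIn.subset_connectedComponentIn
    (hp (Metric.mem_ball_self hδ)) ((connectedComponentIn_subset _ _).trans
      (Metric.ball_subset_ball' ?_)) (hp (Metric.mem_ball'.2 huv))
  linarith [Metric.mem_ball'.1 hup]

/-- The connected analogue of `Metric.thickening`: the points that can be joined to a point `p` of
`S` inside the ball of radius `ε` about `p`. -/
def connThickening (ε : ℝ) (S : Set X) : Set X :=
  ⋃ p ∈ S, connectedComponentIn (Metric.ball p ε) p

theorem subset_connThickening {ε : ℝ} (hε : 0 < ε) (S : Set X) : S ⊆ connThickening ε S :=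
  fun _ hp => mem_biUnion hp (mem_connectedComponentIn (Metric.mem_ball_self hε))

theorem isPreconnected_connThickening {ε : ℝ} (hε : 0 < ε) {S : Set X} (hS : IsPreconnected S) :
    IsPreconnected (connThickening ε S) := by
  refine isPreconnected_of_forall_pair fun u hu v hv => ?_
  obtain ⟨p, hp, hup⟩ := mem_iUnion₂.1 hu
  obtain ⟨q, hq, hvq⟩ := mem_iUnion₂.1 hv
  have hball (r : X) : r ∈ connectedComponentIn (Metric.ball r ε) r :=
    mem_connectedComponentIn (Metric.mem_ball_self hε)
  have hsub {r : X} (hr : r ∈ S) : connectedComponentIn (Metric.ball r ε) r ⊆ connThickening ε S :=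
    fun _ hw => mem_biUnion hr hw
  exact ⟨_, union_subset (union_subset (hsub hp) (subset_connThickening hε S)) (hsub hq),
    .inl (.inl hup), .inr hvq,
    (isPreconnected_connectedComponentIn.union p (hball p) hp hS).union q (.inr hq) (hball q)
      isPreconnected_connectedComponentIn⟩

/-- The closed set of points reachable from `K` by at most `n` steps, each of which applies `F` and
then moves by about `ε`. The moves take place inside small connected sets, so that the reachable
sets of a connected `K` are connected. -/
def reach (F : X → X) (K : Set X) (ε : ℝ) : ℕ → Set X
  | 0 => K
  | n + 1 => reach F K ε n ∪ closure (connThickening ε (F '' reach F K ε n))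

variable {F : X → X} {K : Set X} {ε : ℝ}

theorem monotone_reach : Monotone (reach F K ε) :=
  monotone_nat_of_le_succ fun _ => subset_union_left

theorem subset_reach (n : ℕ) : K ⊆ reach F K ε n :=
  monotone_reach n.zero_le

theorem isClosed_reach (hK : IsClosed K) : ∀ n, IsClosed (reach F K ε n)
  | 0 => hK
  | n + 1 => (isClosed_reach hK n).union isClosed_closure

theorem isPreconnected_reach (hF : Continuous F) (hK : IsConnected K) (hFK : MapsTo F K K)
    (hε : 0 < ε) (n : ℕ) : IsPreconnected (reach F K ε n) := by
  obtain ⟨k, hk⟩ := hK.nonempty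
  induction n with
  | zero => exact hK.isPreconnected
  | succ n ih =>
    exact ih.union (F k) (subset_reach n (hFK hk))
      (subset_closure (subset_connThickening hε _ (mem_image_of_mem F (subset_reach n hk))))
      (isPreconnected_connThickening hε (ih.image F hF.continuousOn)).closure

theorem exists_mem_reach_of_epsChain [CompactSpace X] [LocallyConnectedSpace X] (hε : 0 < ε)
    {x : X} (hchain : ∀ δ > 0, ∃ k ∈ K, EpsChain F δ k x) : ∃ n, x ∈ reach F K ε n := by
  obtain ⟨δ, hδ, hδε⟩ := exists_forall_mem_connectedComponentIn_ball (X := X) hε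
  obtain ⟨k, hk, n, -, c, rfl, rfl, hc⟩ := hchain δ hδ
  have hreach : ∀ i ≤ n, c i ∈ reach F K ε i := by
    intro i hi
    induction i with
    | zero => exact hk
    | succ i ih =>
      exact .inr (subset_closure (mem_biUnion (mem_image_of_mem F (ih (by lia)))
        (hδε _ _ (hc i (by lia)))))
  exact ⟨n, hreach n le_rfl⟩

theorem exists_mem_disjointed_reach (hK : IsClosed K) (hε : 0 < ε) {n : ℕ} {p : X}
    (hp : p ∈ disjointed (reach F K ε) (n + 1)) :
    ∃ q ∈ disjointed (reach F K ε) n, dist (F q) p < 2 * ε := by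
  rw [← Order.succ_eq_add_one, monotone_reach.disjointed_succ (not_isMax n)] at hp
  obtain ⟨p', ⟨hp'p, hp'n⟩, hp'⟩ := mem_closure_iff.1 (hp.1.resolve_left hp.2) _
    (Metric.isOpen_ball.inter (isClosed_reach hK n).isOpen_compl) ⟨Metric.mem_ball_self hε, hp.2⟩
  obtain ⟨_, ⟨q, hq, rfl⟩, hqp'⟩ := mem_iUnion₂.1 hp'
  refine ⟨q, ?_, ?_⟩
  · rw [disjointed_eq_inter_compl]
    refine ⟨hq, mem_iInter₂.2 fun l hl hql => hp'n (monotone_reach hl ?_)⟩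
    exact .inr (subset_closure (mem_biUnion (mem_image_of_mem F hql) hqp'))
  · have := Metric.mem_ball.1 (connectedComponentIn_subset _ _ hqp')
    rw [dist_comm] at this
    linarith [dist_triangle (F q) p' p, Metric.mem_ball.1 hp'p]

theorem exists_backward_pseudoOrbit (hK : IsClosed K) (hε : 0 < ε) (n : ℕ) {p : X}
    (hp : p ∈ disjointed (reach F K ε) n) :
    ∃ v : ℕ → X, v 0 = p ∧ (∀ i ≤ n, v i ∈ disjointed (reach F K ε) (n - i)) ∧
      ∀ i < n, dist (F (v (i + 1))) (v i) < 2 * ε := by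
  induction n generalizing p with
  | zero => exact ⟨fun _ => p, rfl, fun _ _ => by simpa using hp, by simp⟩
  | succ n ih =>
    obtain ⟨q, hq, hqp⟩ := exists_mem_disjointed_reach hK hε hp
    obtain ⟨v, hv0, hvmem, hv⟩ := ih hq
    refine ⟨fun i => i.casesOn p v, rfl, fun i hi => ?_, fun i hi => ?_⟩
    · cases i with
      | zero => exact hp
      | succ i => simpa using hvmem i (by lia)
    · cases i with
      | zero => simpa [hv0] using hqp
      | succ i => exact hv i (by lia)

end PseudoOrbits

section Limit

variable {X : Type*} [MetricSpace X] [CompactSpace X] {F : X → X}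

theorem exists_orbitSegment_of_forall_pseudoOrbit (hF : Continuous F) {R : Set (X × X)}
    (hR : IsClosed R) {P : Set (ℕ × ℕ)} (hP : P.Finite) {x : X}
    (h : ∀ ε > 0, ∃ v : ℕ → X, v 0 = x ∧ ∃ p ∈ P, (v p.2, v p.1) ∈ R ∧
      ∀ j < p.2, dist (F (v (j + 1))) (v j) < ε) :
    ∃ v : ℕ → X, v 0 = x ∧ ∃ p ∈ P, (v p.2, v p.1) ∈ R ∧ ∀ j < p.2, F (v (j + 1)) = v j := by
  have : Nonempty X := ⟨x⟩
  choose! v hv0 hv using h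
  let U : Ultrafilter ℝ := .of (𝓝[>] 0)
  have hU : (U : Filter ℝ) ≤ 𝓝[>] 0 := Ultrafilter.of_le _
  obtain ⟨⟨i, m⟩, hp, hpU⟩ := (Ultrafilter.eventually_exists_mem_iff hP).1
    (hU (eventually_mem_nhdsWithin.mono hv))
  have hlim (j : ℕ) : Tendsto (fun ε => v ε j) U (𝓝 (U.map fun ε => v ε j).lim) :=
    Ultrafilter.le_nhds_lim _
  refine ⟨fun j => (U.map fun ε => v ε j).lim, ?_, ⟨i, m⟩, hp, ?_, fun j hj => ?_⟩
  · exact tendsto_nhds_unique (hlim 0)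
      (tendsto_const_nhds.congr' (hU (eventually_mem_nhdsWithin.mono fun ε hε => (hv0 ε hε).symm)))
  · exact hR.mem_of_tendsto ((hlim m).prodMk_nhds (hlim i)) (hpU.mono fun ε hε => hε.1)
  · refine dist_le_zero.1 (le_of_tendsto_of_tendsto
      (((hF.tendsto _).comp (hlim (j + 1))).dist (hlim j))
      (tendsto_id.mono_left (hU.trans nhdsWithin_le_nhds)) (hpU.mono fun ε hε => (hε.2 j hj).le))

theorem iterate_eq_of_forall_lt {X : Type*} {F : X → X} {v : ℕ → X} {m : ℕ}
    (h : ∀ j < m, F (v (j + 1)) = v j) {k j : ℕ} (hkj : j + k ≤ m) : F^[k] (v (j + k)) = v j := by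
  induction k with
  | zero => rfl
  | succ k ih => rw [iterate_succ_apply, ← add_assoc, h (j + k) (by lia), ih (by lia)]

variable [LocallyConnectedSpace X] {K : Set X} {L : ℕ}

/-- Read a chain from `K` to `x` backwards along the levels of `reach`. The earlier of two
comparable points is the larger one: the level of the later point is connected and contains `K`, so
it contains everything below that point, but it does not contain the earlier point. -/
theorem exists_pseudoOrbit_mem_connHull_insert (hF : Continuous F) (hK : IsClosed K)
    (hKc : IsConnected K) (hFK : MapsTo F K K) (hwidth : ConnHullWidthLE K L) {x : X} (hx : x ∉ K)
    (hchain : ∀ δ > 0, ∃ k ∈ K, EpsChain F δ k x) {ε : ℝ} (hε : 0 < ε) :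
    ∃ v : ℕ → X, v 0 = x ∧ ∃ i m, i < m ∧ m ≤ L ∧ v m ∈ connHull (insert (v i) K) ∧
      ∀ j < m, dist (F (v (j + 1))) (v j) < 2 * ε := by
  obtain ⟨n, hn⟩ : ∃ n, x ∈ disjointed (reach F K ε) n := by
    simpa only [← mem_iUnion, iUnion_disjointed] using exists_mem_reach_of_epsChain hε hchain
  obtain ⟨v, rfl, hvmem, hv⟩ := exists_backward_pseudoOrbit hK hε n hn
  refine ⟨v, rfl, ?_⟩
  rcases lt_or_ge n L with hnL | hLn
  · have hn0 : 0 < n := Nat.pos_of_ne_zero fun h => hx (by simpa [h, reach] using hn)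
    have hvn : v n ∈ K := by simpa [reach] using hvmem n le_rfl
    exact ⟨0, n, hn0, hnL.le, subset_connHull_insert _ K hvn, hv⟩
  · obtain ⟨i, j, hij, hjL, h⟩ := hwidth v
    refine ⟨i, j, hij, hjL, h.resolve_left fun hle => ?_, fun l hl => hv l (by lia)⟩
    have hvi : v i ∈ reach F K ε (n - j) :=
      connHull_subset (isClosed_reach hK _) (isPreconnected_reach hF hKc hFK hε _)
        (insert_subset (disjointed_subset _ _ (hvmem j (by lia))) (subset_reach _)) hle
    have hlevel := hvmem i (by lia)
    rw [disjointed_eq_inter_compl] at hlevel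
    exact mem_iInter₂.1 hlevel.2 (n - j) (by lia) hvi

variable [PreconnectedSpace X] [HereditarilyUnicoherentSpace X]

theorem exists_iterate_eq_mem_connHull_insert (hF : Continuous F) (hK : IsClosed K)
    (hKc : IsConnected K) (hFK : MapsTo F K K) (hwidth : ConnHullWidthLE K L) {x : X} (hx : x ∉ K)
    (hchain : ∀ δ > 0, ∃ k ∈ K, EpsChain F δ k x) :
    ∃ a a' : X, ∃ i k, 0 < k ∧ F^[i] a = x ∧ F^[k] a' = a ∧ a' ∈ connHull (insert a K) := by
  obtain ⟨v, rfl, ⟨i, m⟩, ⟨him, -⟩, hmem, hv⟩ := exists_orbitSegment_of_forall_pseudoOrbit hF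
    (isClosed_setOf_mem_connHull_insert K) (P := {p | p.1 < p.2 ∧ p.2 ≤ L})
    (((finite_Iic L).prod (finite_Iic L)).subset fun p hp => ⟨hp.1.le.trans hp.2, hp.2⟩)
    fun ε hε => by
      obtain ⟨v, hv0, i, m, him, hmL, hmem, hv⟩ :=
        exists_pseudoOrbit_mem_connHull_insert hF hK hKc hFK hwidth hx hchain (half_pos hε)
      exact ⟨v, hv0, ⟨i, m⟩, ⟨him, hmL⟩, hmem, fun j hj => (hv j hj).trans_eq (by ring)⟩
  dsimp only at him hmem hv
  obtain ⟨k, rfl⟩ := Nat.exists_eq_add_of_le him.le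
  exact ⟨v i, v (i + k), i, k, by simpa using him,
    by simpa using iterate_eq_of_forall_lt hv (j := 0) (k := i) (by simp),
    iterate_eq_of_forall_lt hv le_rfl, hmem⟩

theorem mem_of_topEntropy_eq_zero_of_epsChain (hF : Continuous F) (h0 : topEntropy F = 0)
    (hK : IsClosed K) (hKc : IsConnected K) (hFK : MapsTo F K K) (hwidth : ConnHullWidthLE K L)
    {x : X} (hchain : ∀ δ > 0, ∃ k ∈ K, EpsChain F δ k x)
    (hlim : Tendsto (fun n => F^[n] x) atTop (𝓝ˢ K)) : x ∈ K := by
  by_contra hx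
  obtain ⟨a, a', i, k, hk, rfl, ha', hmem⟩ :=
    exists_iterate_eq_mem_connHull_insert hF hK hKc hFK hwidth hx hchain
  have hlima : Tendsto (fun n => F^[n] a) atTop (𝓝ˢ K) := by
    rw [← tendsto_add_atTop_iff_nat i]
    simpa only [iterate_add_apply] using hlim
  refine topEntropy_ne_zero_of_tendsto_nhdsSet (hF.iterate k) hK hKc (hFK.iterate k) hwidth
    (fun ha => hx (hFK.iterate i ha)) hmem ha' ?_ (topEntropy_iterate_eq_zero h0 hk)
  simpa only [← iterate_mul, comp_def] using
    hlima.comp (tendsto_id.const_mul_atTop' hk : Tendsto (fun n => k * n) _ _)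

end Limit

section OmegaLimit

theorem tendsto_iterate_nhdsSet_omegaLimitSet {X : Type*} [MetricSpace X] [CompactSpace X]
    (f : X → X) (x : X) : Tendsto (fun n => f^[n] x) atTop (𝓝ˢ (omegaLimitSet f x)) :=
  isCompact_univ.tendsto_nhdsSet_of_mapClusterPt (by simp) fun y _ hy => mem_iInter.2 fun n =>
    isClosed_closure.mem_of_mapClusterPt hy ((eventually_ge_atTop n).mono fun k hk =>
      subset_closure (mem_image_of_mem (fun k => f^[k] x) hk))

variable {X : Type*} [TopologicalSpace X]

theorem tendsto_nhdsSet_of_union {ι : Type*} {l : Filter ι} {u : ι → X} {A B V : Set X}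
    (h : Tendsto u l (𝓝ˢ (A ∪ B))) (hV : V ∈ 𝓝ˢ B) (huV : ∀ᶠ i in l, u i ∉ V) :
    Tendsto u l (𝓝ˢ A) := by
  intro W hW
  have hWV : W ∪ V ∈ 𝓝ˢ (A ∪ B) := nhdsSet_union A B ▸
    ⟨mem_of_superset hW subset_union_left, mem_of_superset hV subset_union_right⟩
  exact (h.eventually hWV).mp (huV.mono fun i hiV hi => hi.resolve_right hiV)

theorem eventually_iterate_mem_or_of_disjoint {X : Type*} {g : X → X} {U V : Set X}
    (hUV : Disjoint U V) {x : X}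
    (h : ∀ᶠ n in atTop, g^[n] x ∈ (U ∩ g ⁻¹' U) ∪ (V ∩ g ⁻¹' V)) :
    (∀ᶠ n in atTop, g^[n] x ∈ U) ∨ ∀ᶠ n in atTop, g^[n] x ∈ V := by
  obtain ⟨N, hN⟩ := eventually_atTop.1 h
  wlog hNU : g^[N] x ∈ U generalizing U V
  · exact (this hUV.symm (union_comm _ _ ▸ h) (fun n hn => (hN n hn).symm)
      ((hN N le_rfl).resolve_left fun hU => hNU hU.1).1).symm
  refine .inl (eventually_atTop.2 ⟨N, fun n hn => ?_⟩)
  induction n, hn using Nat.le_induction with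
  | base => exact hNU
  | succ n hn ih =>
    rw [iterate_succ_apply']
    exact ((hN n hn).resolve_right fun hV => hUV.notMem_of_mem_left ih hV.1).2

variable [NormalSpace X] {g : X → X}

theorem tendsto_iterate_nhdsSet_or_of_union (hg : Continuous g) {A B : Set X} (hA : IsClosed A)
    (hB : IsClosed B) (hAB : Disjoint A B) (hgA : MapsTo g A A) (hgB : MapsTo g B B) {x : X}
    (h : Tendsto (fun n => g^[n] x) atTop (𝓝ˢ (A ∪ B))) :
    Tendsto (fun n => g^[n] x) atTop (𝓝ˢ A) ∨ Tendsto (fun n => g^[n] x) atTop (𝓝ˢ B) := by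
  obtain ⟨U, V, hU, hV, hAU, hBV, hUV⟩ := normal_separation hA hB hAB
  have hmem : (U ∩ g ⁻¹' U) ∪ (V ∩ g ⁻¹' V) ∈ 𝓝ˢ (A ∪ B) :=
    ((hU.inter (hU.preimage hg)).union (hV.inter (hV.preimage hg))).mem_nhdsSet.2
      (union_subset_union (fun a ha => ⟨hAU ha, hAU (hgA ha)⟩) fun b hb => ⟨hBV hb, hBV (hgB hb)⟩)
  refine (eventually_iterate_mem_or_of_disjoint hUV (h.eventually hmem)).imp (fun hxU => ?_)
    fun hxV => ?_
  · exact tendsto_nhdsSet_of_union h (hV.mem_nhdsSet.2 hBV)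
      (hxU.mono fun n hn => hUV.notMem_of_mem_left hn)
  · exact tendsto_nhdsSet_of_union (union_comm A B ▸ h) (hU.mem_nhdsSet.2 hAU)
      (hxV.mono fun n hn => hUV.notMem_of_mem_right hn)

theorem exists_tendsto_iterate_nhdsSet_of_biUnion (hg : Continuous g) {ι : Type*} {t : Finset ι}
    {K : ι → Set X} (hK : ∀ i ∈ t, IsClosed (K i)) (hdisj : (t : Set ι).PairwiseDisjoint K)
    (hgK : ∀ i ∈ t, MapsTo g (K i) (K i)) {x : X}
    (h : Tendsto (fun n => g^[n] x) atTop (𝓝ˢ (⋃ i ∈ t, K i))) :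
    ∃ i ∈ t, Tendsto (fun n => g^[n] x) atTop (𝓝ˢ (K i)) := by
  classical
  induction t using Finset.induction_on with
  | empty => simp [atTop_neBot.ne] at h
  | insert i t hi ih =>
    rw [Finset.coe_insert, pairwiseDisjoint_insert_of_notMem (by simpa using hi)] at hdisj
    simp only [Finset.mem_insert, forall_eq_or_imp] at hK hgK
    rw [Finset.set_biUnion_insert] at h
    rcases tendsto_iterate_nhdsSet_or_of_union hg hK.1 (t.finite_toSet.isClosed_biUnion hK.2)
      (disjoint_iUnion₂_right.2 hdisj.2) hgK.1 (mapsTo_iUnion₂_iUnion₂ hgK.2) h with h | h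
    · exact ⟨i, Finset.mem_insert_self i t, h⟩
    · obtain ⟨j, hj, hlim⟩ := ih hK.2 hdisj.1 hgK.2 h
      exact ⟨j, Finset.mem_insert_of_mem hj, hlim⟩

end OmegaLimit

section ChainRecurrence

variable {X : Type*} [MetricSpace X] {f : X → X} {x : X}

theorem exists_periodic_pseudoOrbit (hx : x ∈ chainRecurrentSet f) {ε : ℝ} (hε : 0 < ε) :
    ∃ d : ℕ → X, d 0 = x ∧ (∃ m > 0, Periodic d m) ∧ ∀ i, dist (f (d i)) (d (i + 1)) < ε := by
  obtain ⟨m, hm, c, hc0, hcm, hc⟩ := hx ε hε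
  refine ⟨fun i => c (i % m), by simpa using hc0, ⟨m, hm, fun i => by simp⟩, fun i => ?_⟩
  have hi := Nat.mod_lt i hm
  have hstep : c ((i + 1) % m) = c (i % m + 1) := by
    rw [← Nat.mod_add_mod]
    rcases (Nat.succ_le_of_lt hi).lt_or_eq with h | h
    · rw [Nat.mod_eq_of_lt h]
    · rw [← Nat.succ_eq_add_one, h, Nat.mod_self, hc0, hcm]
  simpa only [hstep] using hc _ hi

variable [CompactSpace X]

theorem exists_forall_dist_iterate_pseudoOrbit_lt (hf : Continuous f) (t : ℕ) {ε : ℝ}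
    (hε : 0 < ε) : ∃ δ > 0, ∀ d : ℕ → X, (∀ i, dist (f (d i)) (d (i + 1)) < δ) →
      ∀ i, dist (f^[t] (d i)) (d (i + t)) < ε := by
  induction t generalizing ε with
  | zero => exact ⟨1, one_pos, fun d _ i => by simpa using hε⟩
  | succ t ih =>
    obtain ⟨ρ, hρ, hfρ⟩ := Metric.uniformContinuous_iff.1
      (CompactSpace.uniformContinuous_of_continuous hf) (ε / 2) (half_pos hε)
    obtain ⟨δ, hδ, hd⟩ := ih hρ
    refine ⟨min δ (ε / 2), lt_min hδ (half_pos hε), fun d hdδ i => ?_⟩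
    have hshadow := hfρ (hd d (fun i => (hdδ i).trans_le (min_le_left _ _)) i)
    have hstep := (hdδ (i + t)).trans_le (min_le_right _ _)
    rw [iterate_succ_apply', ← add_assoc]
    linarith [dist_triangle (f (f^[t] (d i))) (f (d (i + t))) (d (i + t + 1))]

theorem mem_chainRecurrentSet_iterate (hf : Continuous f) (hx : x ∈ chainRecurrentSet f) (s : ℕ) :
    x ∈ chainRecurrentSet f^[s] := by
  intro ε hε
  obtain ⟨δ, hδ, hshadow⟩ := exists_forall_dist_iterate_pseudoOrbit_lt hf s hε
  obtain ⟨d, rfl, ⟨m, hm, hper⟩, hd⟩ := exists_periodic_pseudoOrbit hx hδ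
  exact ⟨m, hm, fun i => d (i * s), by simp, by simpa [mul_comm] using hper.nat_mul_eq s,
    fun i _ => by simpa only [add_one_mul] using hshadow d hd (i * s)⟩

theorem exists_epsChain_of_tendsto_nhdsSet (hf : Continuous f) (hx : x ∈ chainRecurrentSet f)
    {K : Set X} (hlim : Tendsto (fun n => f^[n] x) atTop (𝓝ˢ K)) {ε : ℝ} (hε : 0 < ε) :
    ∃ k ∈ K, EpsChain f ε k x := by
  have hnear : {y | ∃ k ∈ K, dist (f k) (f y) < ε / 2} ∈ 𝓝ˢ K := mem_nhdsSet_iff_forall.2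
    fun k hk => by
      filter_upwards [(hf.tendsto k).eventually (Metric.ball_mem_nhds _ (half_pos hε))] with y hy
      exact ⟨k, hk, Metric.mem_ball'.1 hy⟩
  obtain ⟨q, k, hk, hkq⟩ := (hlim.eventually hnear).exists
  obtain ⟨δ, hδ, hshadow⟩ := exists_forall_dist_iterate_pseudoOrbit_lt hf (q + 1) (half_pos hε)
  obtain ⟨d, rfl, ⟨m, hm, hper⟩, hd⟩ := exists_periodic_pseudoOrbit hx (lt_min hδ hε)
  have hlen : q + 1 ≤ (q + 1) * m := Nat.le_mul_of_pos_right _ hm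
  refine ⟨k, hk, (q + 1) * m - q, by lia, fun i => i.casesOn k fun i => d (q + 1 + i), rfl, ?_,
    fun i _ => ?_⟩
  · obtain ⟨n, hn⟩ := Nat.exists_eq_add_of_le hlen
    have : (q + 1) * m - q = n + 1 := by lia
    simpa [this, ← hn] using hper.nat_mul_eq (q + 1)
  · cases i with
    | zero =>
      have hq := hshadow d (fun i => (hd i).trans_le (min_le_left _ _)) 0
      rw [iterate_succ_apply', zero_add] at hq
      exact (dist_triangle _ (f (f^[q] (d 0))) _).trans_lt (by dsimp; linarith)
    | succ i => exact (hd _).trans_le (min_le_right _ _)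

end ChainRecurrence

section Arcs

variable {X : Type*} [TopologicalSpace X] {p q r : X}

theorem IsArc.exists_path {A : Set X} (hA : IsArc A) :
    ∃ (p q : X) (γ : Path p q), Injective γ ∧ range γ = A := by
  obtain ⟨e⟩ := hA
  refine ⟨_, _, ⟨⟨fun t => (e.symm t : X), by fun_prop⟩, rfl, rfl⟩,
    Subtype.val_injective.comp e.symm.injective, ?_⟩
  exact (e.symm.surjective.range_comp Subtype.val).trans Subtype.range_val

theorem locallyPathConnectedSpace_of_finite_closed_cover {ι : Type*} [Finite ι] {A : ι → Set X}
    (hA : ∀ i, IsClosed (A i)) (hlc : ∀ i, LocallyPathConnectedSpace (A i))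
    (hcover : ⋃ i, A i = univ) : LocallyPathConnectedSpace X := by
  have hcont : Continuous fun a : Σ i, A i => (a.2 : X) :=
    continuous_sigma fun _ => continuous_subtype_val
  refine IsQuotientMap.locallyPathConnectedSpace (IsClosedMap.isQuotientMap ?_ hcont fun x => ?_)
  · intro C hC
    have : (fun a : Σ i, A i => (a.2 : X)) '' C =
        ⋃ i, Subtype.val '' ((fun x : A i => (⟨i, x⟩ : Σ i, A i)) ⁻¹' C) := by
      ext; simp
    rw [this]
    exact isClosed_iUnion_of_finite fun i =>
      (hA i).isClosedMap_subtype_val _ (hC.preimage continuous_sigmaMk)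
  · obtain ⟨i, hi⟩ := mem_iUnion.1 (hcover ▸ mem_univ x)
    exact ⟨⟨i, x, hi⟩, rfl⟩

theorem IsArc.locallyPathConnectedSpace {A : Set X} (hA : IsArc A) :
    LocallyPathConnectedSpace A := by
  have := (convex_Icc (0 : ℝ) 1).locallyPathConnectedSpace
  exact hA.some.symm.isQuotientMap.locallyPathConnectedSpace

theorem eq_zero_and_eq_one_of_trans_path_eq {γ : Path p r} {γ' : Path r q} (hγ : Injective γ)
    (hγ' : Injective γ') (hmeet : ∀ s t, γ s = γ' t → s = 1 ∧ t = 0 ∨ s = 0 ∧ t = 1)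
    {s t : unitInterval} (hst : s < t) (h : (γ.trans γ') s = (γ.trans γ') t) :
    s = 0 ∧ t = 1 := by
  have hst : (s : ℝ) < t := hst
  rw [Path.trans_apply, Path.trans_apply] at h
  split_ifs at h with hs ht ht
  · have : (2 * s : ℝ) = 2 * t := congrArg Subtype.val (hγ h)
    linarith
  · simp only [Subtype.ext_iff, Icc.coe_zero, Icc.coe_one] at hmeet ⊢
    rcases hmeet _ _ h with ⟨h1, h0⟩ | ⟨h0, h1⟩ <;> constructor <;> dsimp at h0 h1 <;> linarith
  · linarith
  · have : (2 * s - 1 : ℝ) = 2 * t - 1 := congrArg Subtype.val (hγ' h)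
    linarith

theorem injective_trans_path {γ : Path p r} {γ' : Path r q} (hγ : Injective γ)
    (hγ' : Injective γ') (hpq : p ≠ q) (hmeet : range γ ∩ range γ' ⊆ {r}) :
    Injective (γ.trans γ') := by
  refine .of_lt_imp_ne fun s t hst h => ?_
  obtain ⟨rfl, rfl⟩ : s = 0 ∧ t = 1 := by
    refine eq_zero_and_eq_one_of_trans_path_eq hγ hγ' (fun s t h => .inl ?_) hst h
    have hr : γ s = r := hmeet ⟨mem_range_self s, h ▸ mem_range_self t⟩
    exact ⟨hγ (hr.trans γ.target.symm), hγ' (h.symm.trans (hr.trans γ'.source.symm))⟩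
  exact hpq (by simpa using h)

theorem exists_isSimpleClosedCurve_of_loop [T2Space X] {γ : Path p p}
    (hγ : ∀ s t, s < t → γ s = γ t → s = 0 ∧ t = 1) : ∃ S : Set X, IsSimpleClosedCurve S := by
  have : Fact ((0 : ℝ) < 1) := ⟨one_pos⟩
  let g : AddCircle (1 : ℝ) → X := AddCircle.liftIco 1 0 γ.extend
  have hg : Continuous g :=
    AddCircle.liftIco_zero_continuous (by simp) γ.continuous_extend.continuousOn
  have hinj : InjOn γ.extend (Ico 0 1) := by
    refine injOn_iff_injective.2 (.of_lt_imp_ne fun s t hst h => ?_)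
    rw [domRestrict_apply, domRestrict_apply, γ.extend_apply ⟨s.2.1, s.2.2.le⟩,
      γ.extend_apply ⟨t.2.1, t.2.2.le⟩] at h
    exact t.2.2.ne (congrArg Subtype.val (hγ _ _ hst h).2)
  have hginj : Injective g := by
    intro a b hab
    obtain ⟨s, hs, rfl⟩ := a.eq_coe_Ico
    obtain ⟨t, ht, rfl⟩ := b.eq_coe_Ico
    simp only [g, AddCircle.liftIco_zero_coe_apply hs, AddCircle.liftIco_zero_coe_apply ht] at hab
    rw [hinj hs ht hab]
  let circleHomeo : Circle ≃ₜ Metric.sphere (0 : ℂ) 1 := Homeomorph.refl _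
  exact ⟨range g, ⟨(hg.isClosedEmbedding hginj).isEmbedding.toHomeomorph.symm.trans
    ((AddCircle.homeomorphCircle one_ne_zero).trans circleHomeo)⟩⟩

theorem ordConnected_preimage_path [T2Space X] {γ : Path p q} (hγ : Injective γ) {C : Set X}
    (hC : IsPreconnected C) (hCγ : C ⊆ range γ) : OrdConnected (γ ⁻¹' C) :=
  (hC.preimage_of_isClosedMap hγ (γ.continuous.isClosedEmbedding hγ).isClosedMap hCγ).ordConnected

theorem IsArcEndpoint.eq_zero_or_eq_one [T2Space X] {γ : Path p q} (hγ : Injective γ)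
    {t : unitInterval} (ht : IsArcEndpoint (range γ) (γ t)) : t = 0 ∨ t = 1 := by
  have hord := ordConnected_preimage_path hγ ht.2.isPreconnected sdiff_subset
  by_contra! hne
  have hmem {s : unitInterval} (hs : s ≠ t) : s ∈ γ ⁻¹' (range γ \ {γ t}) :=
    ⟨mem_range_self s, hγ.ne hs⟩
  exact (hord.out (hmem hne.1.symm) (hmem hne.2.symm) ⟨unitInterval.nonneg t,
    unitInterval.le_one t⟩).2 rfl

theorem isHereditarilyUnicoherent_range_path [T2Space X] {γ : Path p q} (hγ : Injective γ) :
    IsHereditarilyUnicoherent (range γ) := by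
  intro C D hC hD _ _ hCc hDc
  have := ordConnected_preimage_path hγ hCc hC
  have := ordConnected_preimage_path hγ hDc hD
  rw [← image_preimage_eq_of_subset (inter_subset_left.trans hC : C ∩ D ⊆ range γ)]
  exact (OrdConnected.inter' : OrdConnected (γ ⁻¹' C ∩ γ ⁻¹' D)).isPreconnected.image _
    γ.continuous.continuousOn

end Arcs

section Dendroids

variable {X : Type*} [TopologicalSpace X]

/-- Any two distinct points of `T` are the endpoints of an arc contained in `T`. -/
def IsArcwiseConnected (T : Set X) : Prop :=
  ∀ ⦃p⦄, p ∈ T → ∀ ⦃q⦄, q ∈ T → p ≠ q → ∃ γ : Path p q, Injective γ ∧ range γ ⊆ T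

theorem isArcwiseConnected_range_path {p q : X} {γ : Path p q} (hγ : Injective γ) :
    IsArcwiseConnected (range γ) := by
  rintro _ ⟨s, rfl⟩ _ ⟨t, rfl⟩ hst
  refine ⟨γ.subpath s t, hγ.comp fun u v huv => ?_, ?_⟩
  · have hne : (t - s : ℝ) ≠ 0 := sub_ne_zero.2 fun h => hst (congrArg γ (Subtype.ext h.symm))
    have : (u : ℝ) * (t - s) = v * (t - s) := by
      have := congrArg Subtype.val huv
      simp only [Icc.coe_convexComb] at this
      linarith
    exact Subtype.ext (mul_right_cancel₀ hne this)
  · rw [Path.range_subpath]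
    exact image_subset_range _ _

variable {S T : Set X} {r : X}

theorem IsArcwiseConnected.union (hS : IsArcwiseConnected S) (hT : IsArcwiseConnected T)
    (hST : S ∩ T = {r}) : IsArcwiseConnected (S ∪ T) := by
  obtain ⟨hrS, hrT⟩ : r ∈ S ∩ T := hST ▸ rfl
  have hcross {p q : X} (hp : p ∈ S) (hq : q ∈ T) (hpq : p ≠ q) :
      ∃ γ : Path p q, Injective γ ∧ range γ ⊆ S ∪ T := by
    rcases eq_or_ne p r with rfl | hpr
    · exact (hT hrT hq hpq).imp fun _ h => ⟨h.1, h.2.trans subset_union_right⟩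
    rcases eq_or_ne r q with rfl | hrq
    · exact (hS hp hrS hpq).imp fun _ h => ⟨h.1, h.2.trans subset_union_left⟩
    obtain ⟨γ, hγ, hγS⟩ := hS hp hrS hpr
    obtain ⟨γ', hγ', hγT⟩ := hT hrT hq hrq
    refine ⟨γ.trans γ', injective_trans_path hγ hγ' hpq (hST ▸ inter_subset_inter hγS hγT), ?_⟩
    rw [Path.trans_range]
    exact union_subset_union hγS hγT
  rintro p (hp | hp) q (hq | hq) hpq
  · exact (hS hp hq hpq).imp fun _ h => ⟨h.1, h.2.trans subset_union_left⟩
  · exact hcross hp hq hpq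
  · obtain ⟨γ, hγ, hγT⟩ := hcross hq hp hpq.symm
    exact ⟨γ.symm, hγ.comp unitInterval.symm_bijective.injective, γ.symm_range ▸ hγT⟩
  · exact (hT hp hq hpq).imp fun _ h => ⟨h.1, h.2.trans subset_union_right⟩

theorem isPreconnected_left_of_union_of_inter {A B : Set X} (hA : IsClosed A) (hB : IsClosed B)
    (hunion : IsPreconnected (A ∪ B)) (hinter : IsPreconnected (A ∩ B)) : IsPreconnected A := by
  have hleft {U V : Set X} (hU : IsClosed U) (hV : IsClosed V) (hAUV : A ⊆ U ∪ V)
      (hUV : Disjoint U V) (hABU : A ∩ B ⊆ U) : A ⊆ U ∨ A ⊆ V := by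
    have hcover : A ∪ B ⊆ (B ∪ A ∩ U) ∪ A ∩ V := by grind
    have hdisj : Disjoint (B ∪ A ∩ U) (A ∩ V) := by
      rw [Set.disjoint_left] at hUV ⊢
      grind
    rcases (isPreconnected_iff_subset_of_fully_disjoint_closed (hA.union hB)).1 hunion _ _
      (hB.union (hA.inter hU)) (hA.inter hV) hcover hdisj with h | h
    · exact .inl fun x hx => (h (.inl hx)).elim (fun hB => hABU ⟨hx, hB⟩) And.right
    · exact .inr fun x hx => (h (.inl hx)).2
  rw [isPreconnected_iff_subset_of_fully_disjoint_closed hA]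
  intro U V hU hV hAUV hUV
  rcases (isPreconnected_iff_subset_of_fully_disjoint_closed (hA.inter hB)).1 hinter U V hU hV
    (inter_subset_left.trans hAUV) hUV with h | h
  · exact hleft hU hV hAUV hUV h
  · exact (hleft hV hU (union_comm U V ▸ hAUV) hUV.symm h).symm

theorem isPreconnected_inter_of_subset_union (hS : IsClosed S) (hT : IsClosed T)
    (hST : S ∩ T = {r}) {C : Set X} (hC : IsClosed C) (hCc : IsPreconnected C)
    (hCST : C ⊆ S ∪ T) : IsPreconnected (C ∩ S) := by
  refine isPreconnected_left_of_union_of_inter (hC.inter hS) (hC.inter hT) ?_ ?_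
  · rwa [← inter_union_distrib_left, inter_eq_left.2 hCST]
  · have hsub : C ∩ S ∩ (C ∩ T) ⊆ {r} :=
      hST ▸ inter_subset_inter inter_subset_right inter_subset_right
    exact (subsingleton_singleton.anti hsub).isPreconnected

theorem IsHereditarilyUnicoherent.union (hS : IsHereditarilyUnicoherent S)
    (hT : IsHereditarilyUnicoherent T) (hSc : IsClosed S) (hTc : IsClosed T)
    (hST : S ∩ T = {r}) : IsHereditarilyUnicoherent (S ∪ T) := by
  intro C D hC hD hCc hDc hCconn hDconn
  have hTS : T ∩ S = {r} := inter_comm S T ▸ hST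
  have hpieceS := hS inter_subset_right inter_subset_right (hCc.inter hSc) (hDc.inter hSc)
    (isPreconnected_inter_of_subset_union hSc hTc hST hCc hCconn hC)
    (isPreconnected_inter_of_subset_union hSc hTc hST hDc hDconn hD)
  have hpieceT := hT inter_subset_right inter_subset_right (hCc.inter hTc) (hDc.inter hTc)
    (isPreconnected_inter_of_subset_union hTc hSc hTS hCc hCconn (union_comm S T ▸ hC))
    (isPreconnected_inter_of_subset_union hTc hSc hTS hDc hDconn (union_comm S T ▸ hD))
  rw [← inter_inter_distrib_right] at hpieceS hpieceT
  have hmem {E : Set X} (hE : IsPreconnected E) (hEST : E ⊆ S ∪ T) (hES : (E ∩ S).Nonempty)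
      (hET : (E ∩ T).Nonempty) : r ∈ E := by
    obtain ⟨z, hzE, hz⟩ := isPreconnected_closed_iff.1 hE S T hSc hTc hEST hES hET
    exact (hST ▸ hz : z ∈ ({r} : Set X)) ▸ hzE
  rw [← inter_eq_left.2 (inter_subset_left.trans hC : C ∩ D ⊆ S ∪ T), inter_union_distrib_left]
  rcases (C ∩ D ∩ S).eq_empty_or_nonempty with hempty | hneS
  · rwa [hempty, empty_union]
  rcases (C ∩ D ∩ T).eq_empty_or_nonempty with hempty | hneT
  · rwa [hempty, union_empty]
  have hrC : r ∈ C := hmem hCconn hC (hneS.mono (by grind)) (hneT.mono (by grind))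
  have hrD : r ∈ D := hmem hDconn hD (hneS.mono (by grind)) (hneT.mono (by grind))
  obtain ⟨hrS, hrT⟩ : r ∈ S ∩ T := hST ▸ rfl
  exact hpieceS.union r ⟨⟨hrC, hrD⟩, hrS⟩ ⟨⟨hrC, hrD⟩, hrT⟩ hpieceT

/-- A *dendroid*: an arcwise connected and hereditarily unicoherent closed set. -/
structure IsDendroid (T : Set X) : Prop where
  isClosed : IsClosed T
  isArcwiseConnected : IsArcwiseConnected T
  isHereditarilyUnicoherent : IsHereditarilyUnicoherent T

theorem IsDendroid.union (hS : IsDendroid S) (hT : IsDendroid T) (hST : S ∩ T = {r}) :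
    IsDendroid (S ∪ T) where
  isClosed := hS.isClosed.union hT.isClosed
  isArcwiseConnected := hS.isArcwiseConnected.union hT.isArcwiseConnected hST
  isHereditarilyUnicoherent := hS.isHereditarilyUnicoherent.union hT.isHereditarilyUnicoherent
    hS.isClosed hT.isClosed hST

theorem isDendroid_range_path [T2Space X] {p q : X} {γ : Path p q} (hγ : Injective γ) :
    IsDendroid (range γ) where
  isClosed := (γ.continuous.isClosedEmbedding hγ).isClosed_range
  isArcwiseConnected := isArcwiseConnected_range_path hγ
  isHereditarilyUnicoherent := isHereditarilyUnicoherent_range_path hγ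

theorem IsArc.isDendroid [T2Space X] {A : Set X} (hA : IsArc A) : IsDendroid A := by
  obtain ⟨p, q, γ, hγ, rfl⟩ := hA.exists_path
  exact isDendroid_range_path hγ

/-- If `T` contained both endpoints of `A`, an arc of `T` joining them would close up `A`. -/
theorem IsArcwiseConnected.inter_arc_subsingleton [T2Space X] (hT : IsArcwiseConnected T)
    (hscc : ∀ S : Set X, ¬ IsSimpleClosedCurve S) {A : Set X} (hA : IsArc A)
    (hend : ∀ p ∈ T ∩ A, IsArcEndpoint A p) : (T ∩ A).Subsingleton := by
  obtain ⟨p, q, γ, hγ, rfl⟩ := hA.exists_path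
  have hendpoint {t : unitInterval} (ht : γ t ∈ T) : t = 0 ∨ t = 1 :=
    (hend _ ⟨ht, mem_range_self t⟩).eq_zero_or_eq_one hγ
  have hnot : ¬(γ 0 ∈ T ∧ γ 1 ∈ T) := by
    rw [γ.source, γ.target]
    rintro ⟨hp, hq⟩
    have hpq : p ≠ q := fun h => zero_ne_one (hγ (by rw [γ.source, γ.target, h]))
    obtain ⟨γ', hγ', hγ'T⟩ := hT hq hp hpq.symm
    obtain ⟨S, hS⟩ := exists_isSimpleClosedCurve_of_loop fun s t =>
      eq_zero_and_eq_one_of_trans_path_eq hγ hγ' (s := s) (t := t) fun s t hst => by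
        rcases hendpoint (hst ▸ hγ'T (mem_range_self t)) with rfl | rfl
        · exact .inr ⟨rfl, hγ' (by rw [← hst, γ.source, γ'.target])⟩
        · exact .inl ⟨rfl, hγ' (by rw [← hst, γ.target, γ'.source])⟩
    exact hscc S hS
  rintro _ ⟨hs, s, rfl⟩ _ ⟨ht, t, rfl⟩
  rcases hendpoint hs with rfl | rfl <;> rcases hendpoint ht with rfl | rfl
  exacts [rfl, (hnot ⟨hs, ht⟩).elim, (hnot ⟨ht, hs⟩).elim, rfl]

end Dendroids

section Trees

theorem finite_closed_cover_induction {X : Type*} [TopologicalSpace X] [ConnectedSpace X]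
    {𝒜 : Set (Set X)} (hfin : 𝒜.Finite) (hcl : ∀ A ∈ 𝒜, IsClosed A) (hcover : ⋃₀ 𝒜 = univ)
    {P : Set X → Prop} (single : ∀ A ∈ 𝒜, P A)
    (union : ∀ ℬ ⊆ 𝒜, ∀ A ∈ 𝒜, A ∉ ℬ → P (⋃₀ ℬ) → (⋃₀ ℬ ∩ A).Nonempty → P (⋃₀ ℬ ∪ A)) :
    P univ := by
  obtain ⟨x⟩ := (inferInstance : Nonempty X)
  obtain ⟨A, hA, hxA⟩ : x ∈ ⋃₀ 𝒜 := hcover ▸ mem_univ x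
  let 𝓕 : Set (Set (Set X)) := {ℬ | ℬ ⊆ 𝒜 ∧ x ∈ ⋃₀ ℬ ∧ P (⋃₀ ℬ)}
  have hA𝓕 : {A} ∈ 𝓕 := by simp [𝓕, hA, hxA, single A hA]
  obtain ⟨ℬ, ⟨hℬ𝒜, hxℬ, hPℬ⟩, hmax⟩ :=
    (hfin.finite_subsets.subset fun _ h => h.1 : 𝓕.Finite).exists_maximal ⟨_, hA𝓕⟩
  suffices ⋃₀ ℬ = univ from this ▸ hPℬ
  by_contra hne
  obtain ⟨y, hy⟩ := (ne_univ_iff_exists_notMem _).1 hne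
  have hcl' {𝒞 : Set (Set X)} (h : 𝒞 ⊆ 𝒜) : IsClosed (⋃₀ 𝒞) :=
    sUnion_eq_biUnion ▸ (hfin.subset h).isClosed_biUnion fun C hC => hcl C (h hC)
  have huniv : ⋃₀ ℬ ∪ ⋃₀ (𝒜 \ ℬ) = univ := by
    rw [← sUnion_union, union_sdiff_cancel hℬ𝒜, hcover]
  obtain ⟨z, -, hzℬ, B, ⟨hB𝒜, hBℬ⟩, hzB⟩ := isPreconnected_closed_iff.1 isPreconnected_univ
    _ _ (hcl' hℬ𝒜) (hcl' sdiff_subset) huniv.ge ⟨x, trivial, hxℬ⟩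
    ⟨y, trivial, (huniv.ge (mem_univ y)).resolve_left hy⟩
  refine hBℬ (hmax (y := insert B ℬ) ⟨insert_subset hB𝒜 hℬ𝒜, ?_, ?_⟩ (subset_insert B ℬ)
    (mem_insert B ℬ))
  · exact sUnion_subset_sUnion (subset_insert B ℬ) hxℬ
  · rw [sUnion_insert, union_comm]
    exact union ℬ hℬ𝒜 B hB𝒜 hBℬ hPℬ ⟨z, hzℬ, hzB⟩

variable {X : Type*} [MetricSpace X]

theorem IsTree.hereditarilyUnicoherentSpace (hX : IsTree X) : HereditarilyUnicoherentSpace X := by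
  obtain ⟨-, _, ⟨𝒜, harc, hcover, hend⟩, hscc⟩ := hX
  refine ⟨(finite_closed_cover_induction (P := IsDendroid) 𝒜.finite_toSet
    (fun A hA => (harc A hA).isDendroid.isClosed) hcover (fun A hA => (harc A hA).isDendroid)
    fun ℬ hℬ A hA hAℬ hT hne => ?_).isHereditarilyUnicoherent⟩
  obtain ⟨r, hr⟩ := hne
  have hsub : (⋃₀ ℬ ∩ A).Subsingleton := by
    refine hT.isArcwiseConnected.inter_arc_subsingleton hscc (harc A hA) ?_
    rintro p ⟨⟨B, hB, hpB⟩, hpA⟩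
    exact (hend A hA B (hℬ hB) (ne_of_mem_of_not_mem hB hAℬ).symm p ⟨hpA, hpB⟩).1
  exact hT.union (harc A hA).isDendroid (hsub.eq_singleton_of_mem hr)

theorem IsTree.locallyPathConnectedSpace (hX : IsTree X) : LocallyPathConnectedSpace X := by
  obtain ⟨-, -, ⟨𝒜, harc, hcover, -⟩, -⟩ := hX
  exact locallyPathConnectedSpace_of_finite_closed_cover (A := fun A : 𝒜 => (A : Set X))
    (fun A => (harc A A.2).isDendroid.isClosed) (fun A => (harc A A.2).locallyPathConnectedSpace)
    (by rw [← hcover, sUnion_eq_iUnion]; rfl)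

end Trees

section Width

variable {X : Type*} [TopologicalSpace X] [T2Space X] [CompactSpace X] [PreconnectedSpace X]
  [HereditarilyUnicoherentSpace X]

theorem path_mem_connHull_pair {p q : X} {γ : Path p q} (hγ : Injective γ) {s t u : unitInterval}
    (hst : s ≤ t) (htu : t ≤ u) : γ t ∈ connHull {γ s, γ u} := by
  have hconn : IsPreconnected (connHull {γ s, γ u} ∩ range γ) :=
    isPreconnected_inter_of_isClosed (isPreconnected_connHull _)
      (isPreconnected_range γ.continuous) (isClosed_connHull _)
      (γ.continuous.isClosedEmbedding hγ).isClosed_range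
  have hmem {v : unitInterval} (hv : γ v ∈ ({γ s, γ u} : Set X)) :
      v ∈ γ ⁻¹' (connHull {γ s, γ u} ∩ range γ) := ⟨subset_connHull _ hv, mem_range_self v⟩
  exact ((ordConnected_preimage_path hγ hconn inter_subset_right).out (hmem (.inl rfl))
    (hmem (.inr rfl)) ⟨hst, htu⟩).1

/-- The middle one of three points of an arc precedes one of the outer two in the order of the
tree rooted at `K`. -/
theorem exists_mem_connHull_insert_of_arc {K A : Set X} (hK : K.Nonempty) (hA : IsArc A)
    {s : Finset ℕ} (hs : 2 < s.card) {v : ℕ → X} (hv : ∀ i ∈ s, v i ∈ A) :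
    ∃ i ∈ s, ∃ j ∈ s, i ≠ j ∧ v j ∈ connHull (insert (v i) K) := by
  obtain ⟨p, q, γ, hγ, rfl⟩ := hA.exists_path
  choose! τ hτ using hv
  have hs' : s.Nonempty := Finset.card_pos.1 (by lia)
  obtain ⟨a, ha, hmin⟩ := s.exists_min_image τ hs'
  obtain ⟨b, hb, hmax⟩ := s.exists_max_image τ hs'
  obtain ⟨c, hc, hcab⟩ := Finset.exists_mem_notMem_of_card_lt_card
    ((Finset.card_le_two (a := a) (b := b)).trans_lt hs)
  simp only [Finset.mem_insert, Finset.mem_singleton, not_or] at hcab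
  have hmid := path_mem_connHull_pair hγ (hmin c hc) (hmax c hc)
  rw [hτ a ha, hτ b hb, hτ c hc] at hmid
  rcases connHull_pair_subset_union hK _ _ hmid with h | h
  · exact ⟨a, ha, c, hc, Ne.symm hcab.1, h⟩
  · exact ⟨b, hb, c, hc, Ne.symm hcab.2, h⟩

theorem connHullWidthLE_of_arc_cover {𝒜 : Finset (Set X)} (harc : ∀ A ∈ 𝒜, IsArc A)
    (hcover : ⋃₀ (𝒜 : Set (Set X)) = univ) {K : Set X} (hK : K.Nonempty) :
    ConnHullWidthLE K (2 * 𝒜.card) := by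
  classical
  intro v
  choose A hA hvA using fun i => (hcover.ge (mem_univ (v i)) : v i ∈ ⋃₀ (𝒜 : Set (Set X)))
  obtain ⟨B, hB, hcard⟩ := Finset.exists_lt_card_fiber_of_mul_lt_card_of_maps_to
    (s := Finset.range (2 * 𝒜.card + 1)) (n := 2) (fun i _ => hA i) (by simp [mul_comm])
  obtain ⟨i, hi, j, hj, hij, h⟩ := exists_mem_connHull_insert_of_arc hK (harc B hB) hcard
    (v := v) fun i hi => (Finset.mem_filter.1 hi).2 ▸ hvA i
  simp only [Finset.mem_filter, Finset.mem_range] at hi hj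
  rcases lt_or_gt_of_ne hij with hij | hij
  · exact ⟨i, j, hij, by lia, .inr h⟩
  · exact ⟨j, i, hij, by lia, .inl h⟩

end Width

section PeriodicContinua

/-- A *periodic continuum* of `f` of period `s`: the notion of periodic arc with an arbitrary
nonempty closed connected set in place of the arc. -/
structure IsPeriodicContinuum {X : Type*} [TopologicalSpace X] (f : X → X) (K : Set X) (s : ℕ) :
    Prop where
  isClosed : IsClosed K
  isConnected : IsConnected K
  pos : 0 < s
  mapsTo : MapsTo f^[s] K K
  disjoint : ∀ i j, i < j → j < s → Disjoint (f^[i] '' K) (f^[j] '' K)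

theorem IsArc.isConnected {X : Type*} [TopologicalSpace X] {A : Set X} (hA : IsArc A) :
    IsConnected A := by
  obtain ⟨p, q, γ, -, rfl⟩ := hA.exists_path
  exact isConnected_range γ.continuous

theorem IsPeriodicArc.isPeriodicContinuum {X : Type*} [TopologicalSpace X] [T2Space X] {f : X → X}
    {I : Set X} {s : ℕ} (hI : IsPeriodicArc f I s) : IsPeriodicContinuum f I s :=
  ⟨hI.1.isDendroid.isClosed, hI.1.isConnected, hI.2.1, hI.2.2.1, hI.2.2.2⟩

variable {X : Type*} [MetricSpace X] {f : X → X} {K : Set X} {s : ℕ} {x : X}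

theorem IsPeriodicContinuum.mapsTo_image_iterate (hK : IsPeriodicContinuum f K s) (i : ℕ) :
    MapsTo f^[s] (f^[i] '' K) (f^[i] '' K) :=
  Semiconj.mapsTo_image (Commute.iterate_iterate_self f i s) hK.mapsTo

variable [CompactSpace X]

theorem IsPeriodicContinuum.isClosed_image_iterate (hK : IsPeriodicContinuum f K s)
    (hf : Continuous f) (i : ℕ) : IsClosed (f^[i] '' K) :=
  (hK.isClosed.isCompact.image (hf.iterate i)).isClosed

theorem IsPeriodicContinuum.exists_tendsto_iterate_nhdsSet_image
    (hK : IsPeriodicContinuum f K s) (hf : Continuous f)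
    (hω : omegaLimitSet f x ⊆ arcOrbit f K s) :
    ∃ i < s, Tendsto (fun n => (f^[s])^[n] x) atTop (𝓝ˢ (f^[i] '' K)) := by
  have hdisj : (Finset.range s : Set ℕ).PairwiseDisjoint fun i => f^[i] '' K := by
    intro i hi j hj hij
    rcases lt_or_gt_of_ne hij with h | h
    · exact hK.disjoint i j h (Finset.mem_range.1 hj)
    · exact (hK.disjoint j i h (Finset.mem_range.1 hi)).symm
  have hlim : Tendsto (fun n => (f^[s])^[n] x) atTop (𝓝ˢ (arcOrbit f K s)) := by
    simp only [← iterate_mul]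
    exact ((tendsto_iterate_nhdsSet_omegaLimitSet f x).mono_right (nhdsSet_mono hω)).comp
      (tendsto_id.const_mul_atTop' hK.pos)
  obtain ⟨i, hi, hlimi⟩ := exists_tendsto_iterate_nhdsSet_of_biUnion (hf.iterate s)
    (fun i _ => hK.isClosed_image_iterate hf i) hdisj (fun i _ => hK.mapsTo_image_iterate i) hlim
  exact ⟨i, Finset.mem_range.1 hi, hlimi⟩

end PeriodicContinua

theorem chainRecurrent_mem_arcOrbit_general {X : Type*} [MetricSpace X] (hX : IsTree X)
    {f : X → X} (hf : Continuous f) (h0 : topEntropy f = 0) {x : X}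
    (hx : x ∈ chainRecurrentSet f) {K : Set X} {s : ℕ} (hK : IsPeriodicContinuum f K s)
    (hω : omegaLimitSet f x ⊆ arcOrbit f K s) : x ∈ arcOrbit f K s := by
  have := hX.hereditarilyUnicoherentSpace
  have := hX.locallyPathConnectedSpace
  obtain ⟨_, _, ⟨𝒜, harc, hcover, -⟩, -⟩ := hX
  obtain ⟨i, hi, hlim⟩ := hK.exists_tendsto_iterate_nhdsSet_image hf hω
  have hconn : IsConnected (f^[i] '' K) :=
    hK.isConnected.image _ (hf.iterate i).continuousOn
  refine mem_biUnion (Finset.mem_range.2 hi) ?_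
  exact mem_of_topEntropy_eq_zero_of_epsChain (hf.iterate s)
    (topEntropy_iterate_eq_zero h0 hK.pos) (hK.isClosed_image_iterate hf i) hconn
    (hK.mapsTo_image_iterate i) (connHullWidthLE_of_arc_cover harc hcover hconn.nonempty)
    (fun ε hε => exists_epsChain_of_tendsto_nhdsSet (hf.iterate s)
      (mem_chainRecurrentSet_iterate hf hx s) hlim hε) hlim

/-- For a zero entropy tree map, a non-periodic chain recurrent point `x`
whose ω-limit set is contained in the orbit of a periodic arc `I` belongs to that orbit. -/
theorem chainRecurrent_mem_arcOrbit {X : Type*} [MetricSpace X] (hX : IsTree X)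
    (f : X → X) (hf : Continuous f) (h0 : topEntropy f = 0)
    {x : X} (hx : x ∈ chainRecurrentSet f) (hxp : x ∉ Function.periodicPts f)
    {I : Set X} {s : ℕ} (hI : IsPeriodicArc f I s)
    (hω : omegaLimitSet f x ⊆ arcOrbit f I s) :
    x ∈ arcOrbit f I s :=
  chainRecurrent_mem_arcOrbit_general hX hf h0 hx hI.isPeriodicContinuum hω
end
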